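/- arXiv:1103.5997 — 6 statements merged into one kernel-verified Lean document; each statement's English description precedes it below -/
import Mathlib

section
/- Let d ≥ 1, 1 ≤ p ≤ ∞, κ > 0, l > d, and C₁, C₂, M > 0. Then there is a constant C′ depending only on d, p, κ, l, C₂ and M with the following property. Let Φ ∈ L¹_loc(ℝ^d), let X ⊆ ℝ^d be countable, and let 0 < h ≤ 1. Assume: (a) for every t ∈ ℝ^d there exist a finite set X(t) ⊆ X ∩ B̄(t, C₁h) and real coefficients A(t,ξ) (ξ ∈ X(t)) such that for each fixed ξ ∈ X the function t ↦ A(t,ξ) (set equal to 0 when ξ ∉ X(t)) is measurable and integrable on ℝ^d, and the error kernel E(x,t) = Φ(x−t) − Σ_{ξ∈X(t)} A(t,ξ) Φ(x−ξ) satisfies |E(x,t)| ≤ C₂ h^{κ−d} (1 + ‖x−t‖₂/h)^{−l} for all x, t ∈ ℝ^d; (b) there exist G ∈ L¹_loc(ℝ^d), a sequence (μ_n) of compactly supported finite signed Borel measures on ℝ^d with total variation norms ‖μ_n‖ ≤ M, and functions ν_n ∈ L¹(ℝ^d) with ‖ν_n‖_{L¹} → 0, such that G = Φ*μ_n + ν_n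 almost everywhere for every n. Then for every continuous compactly supported g : ℝ^d → ℝ, the function f = G*g satisfies E(f, S_X(Φ))_p ≤ C′ h^κ ‖g‖_{L^p(ℝ^d)}. -/
/-!
By Fubini, `f = G * g = Φ * (μ_n * g) + ν_n * g`, where `w = μ_n * g` is bounded with compact support
and `‖w‖_p ≤ M ‖g‖_p`. Replacing each `Φ(· - t)` in `Φ * w` by its local approximation gives an error
dominated by `k * |w|`, where `k(x) = C₂ h^(κ-d) (1 + ‖x‖/h)^(-l)` has mass `C₂ I h^κ` with
`I = ∫ (1 + ‖x‖)^(-l)`. For `n` large, `‖ν_n‖₁ < h^κ`, so Young's inequality (`young_measure`) gives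
the bound with `C' = C₂ I M + 1`.

The difficulty is that `X` is only countable, so `∑ ξ, (∫ A(t,ξ) w(t) dt) Φ(· - ξ)` may have
infinitely many nonzero terms, while `S_X(Φ)` contains finite sums only, and `Φ` need not be globally
integrable, so the tail of the series need not be small in `L^p`. To repair this, `ℝ^d` is exhausted,
up to a null set, by measurable sets `P N` on which only finitely many nodes occur and the
coefficients are bounded (`exists_exhaustion`). On `P N` the given coefficients are used. On the
remaining part of the support of `w`, which has small measure, a cruder approximation suffices, as
long as it is available for every `t` with a single finite set of nodes and a uniform error
`L (1 + ‖x‖)^(-l)`. It comes from `exists_uniform_approx`: every `t` in a ball is `a + b` with `a` and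
the shifts of `b` by the nodes for `a` all good, and hypothesis (a) is applied twice. The resulting
contribution `ε (1 + ‖x‖)^(-l)` lies in `L^p` because `l > d`, and `ε` is arbitrary.
-/

open MeasureTheory Metric Set Filter ENNReal
open scoped RealInnerProductSpace

noncomputable section

open Classical

/-- The RBF approximation space `S_X(Φ)`: all finite linear combinations of translates
`Φ(· - ξ)` with translation nodes taken from the set `X`. -/
def SX {E : Type*} [NormedAddCommGroup E] (Φ : E → ℝ) (X : Set E) : Set (E → ℝ) :=
  {S | ∃ (Y : Finset E) (a : E → ℝ), (Y : Set E) ⊆ X ∧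
    S = fun x => ∑ ξ ∈ Y, a ξ * Φ (x - ξ)}

/-- The `L^p` distance from `f` to a set `A` of functions:
`E(f, A)_p = inf_{S ∈ A} ‖f - S‖_{L^p}`. -/
def approxErr {E : Type*} [MeasurableSpace E] (μ : Measure E)
    (f : E → ℝ) (A : Set (E → ℝ)) (p : ℝ≥0∞) : ℝ≥0∞ :=
  ⨅ S ∈ A, eLpNorm (f - S) p μ

section Helpers

set_option linter.unusedSectionVars false

variable {E : Type*} [NormedAddCommGroup E] [NormedSpace ℝ E] [FiniteDimensional ℝ E]
  [MeasureSpace E] [BorelSpace E] [(volume : Measure E).IsAddHaarMeasure]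

/-! ### Young's inequality for finite measures -/

/-- Young's inequality `‖u * m‖_p ≤ m(E) ‖u‖_p` for a finite positive measure `m`, in the form
needed for any `F` dominated pointwise by the convolution. -/
theorem young_measure {p : ℝ≥0∞} (hp : 1 ≤ p) (m : Measure E) [IsFiniteMeasure m]
    {u : E → ℝ≥0∞} (hu : Measurable u) {ε : Type*} [ENorm ε] {F : E → ε}
    (hF : ∀ᵐ x, ‖F x‖ₑ ≤ ∫⁻ s, u (x - s) ∂m) :
    eLpNorm F p volume ≤ m univ * eLpNorm u p volume := by
  rcases eq_or_ne p ∞ with rfl | hptop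
  · rw [eLpNorm_exponent_top, eLpNorm_exponent_top]
    have h1 : ∀ᵐ y : E, u y ≤ eLpNormEssSup u volume := by
      simpa using enorm_ae_le_eLpNormEssSup u (volume : Measure E)
    have h2 : ∀ᵐ z : E × E ∂((volume : Measure E).prod m),
        u (z.1 - z.2) ≤ eLpNormEssSup u volume :=
      (quasiMeasurePreserving_sub_of_right_invariant volume m).ae h1
    refine essSup_le_of_ae_le _ ?_
    filter_upwards [hF, Measure.ae_ae_of_ae_prod h2] with x hx hx2
    calc ‖F x‖ₑ ≤ ∫⁻ s, u (x - s) ∂m := hx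
      _ ≤ ∫⁻ _, eLpNormEssSup u volume ∂m := lintegral_mono_ae hx2
      _ = _ := by rw [lintegral_const, mul_comm]
  · have hp0 : p ≠ 0 := (zero_lt_one.trans_le hp).ne'
    have hq : 1 ≤ p.toReal := by
      simpa using (ENNReal.toReal_le_toReal (by simp) hptop).2 hp
    set q := p.toReal with hqdef
    have hq0 : 0 < q := by linarith
    rw [eLpNorm_eq_lintegral_rpow_enorm_toReal hp0 hptop,
      eLpNorm_eq_lintegral_rpow_enorm_toReal hp0 hptop, ← hqdef]
    have hm : ∀ x, Measurable fun s => u (x - s) := fun x => hu.comp (by fun_prop)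
    -- Hölder against the constant `1` for the finite measure `m`
    have key : ∀ᵐ x, ‖F x‖ₑ ^ q ≤ (∫⁻ s, u (x - s) ^ q ∂m) * m univ ^ (q - 1) := by
      filter_upwards [hF] with x hx
      have h1 := eLpNorm'_le_eLpNorm'_mul_rpow_measure_univ (μ := m) zero_lt_one hq
        (hm x).aestronglyMeasurable
      simp only [eLpNorm', enorm_eq_self, rpow_one, div_one] at h1
      calc ‖F x‖ₑ ^ q ≤ ((∫⁻ s, u (x - s) ^ q ∂m) ^ (1 / q) * m univ ^ (1 - 1 / q)) ^ q :=
            ENNReal.rpow_le_rpow (hx.trans h1) hq0.le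
        _ = _ := by
          rw [ENNReal.mul_rpow_of_nonneg _ _ hq0.le, ← ENNReal.rpow_mul, ← ENNReal.rpow_mul,
            one_div_mul_cancel hq0.ne', ENNReal.rpow_one]
          congr 2
          field_simp
    have hsw : ∫⁻ x, ∫⁻ s, u (x - s) ^ q ∂m = m univ * ∫⁻ y, u y ^ q := by
      rw [lintegral_lintegral_swap]
      · simp_rw [fun s => lintegral_sub_right_eq_self (μ := (volume : Measure E))
          (fun y => u y ^ q) s]
        rw [lintegral_const, mul_comm]
      · exact ((hu.comp (measurable_fst.sub measurable_snd)).pow_const q).aemeasurable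
    have hfin : m univ ≠ ∞ := measure_ne_top _ _
    have hmm : m univ * m univ ^ (q - 1) = m univ ^ q := by
      conv_lhs => rw [← ENNReal.rpow_one (m univ)]
      rw [← ENNReal.rpow_mul, one_mul]
      rw [← ENNReal.rpow_add_of_nonneg _ _ zero_le_one (by linarith)]
      ring_nf
    have hle : ∫⁻ x, ‖F x‖ₑ ^ q ≤ m univ ^ q * ∫⁻ y, u y ^ q := by
      calc ∫⁻ x, ‖F x‖ₑ ^ q ≤ ∫⁻ x, (∫⁻ s, u (x - s) ^ q ∂m) * m univ ^ (q - 1) :=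
            lintegral_mono_ae key
        _ = m univ * (∫⁻ y, u y ^ q) * m univ ^ (q - 1) := by
          rw [lintegral_mul_const' _ _ (ENNReal.rpow_ne_top_of_nonneg (by linarith) hfin), hsw]
        _ = _ := by rw [← hmm]; ring
    simp only [enorm_eq_self]
    calc (∫⁻ x, ‖F x‖ₑ ^ q) ^ (1 / q) ≤ (m univ ^ q * ∫⁻ y, u y ^ q) ^ (1 / q) :=
          ENNReal.rpow_le_rpow hle (by positivity)
      _ = _ := by
        rw [ENNReal.mul_rpow_of_nonneg _ _ (by positivity), ← ENNReal.rpow_mul,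
          mul_one_div_cancel hq0.ne', ENNReal.rpow_one]

/-! ### Exhaustion by sets with finitely many nodes -/

/-- Measurable approximation data for `Φ` by translates from `X` with error kernel `k`: off a null
set, `E` is the increasing union of measurable sets `P N` such that for `t ∈ P N` the translate
`Φ(· - t)` is approximated within `k(· - t)` using only the nodes of the finite set `F N ⊆ X`, with
coefficients `c ξ t` bounded by `N`. The coefficient functions do not depend on `N`. -/
structure Exhaustion (Φ : E → ℝ) (X : Set E) (k : E → ℝ) where
  F : ℕ → Finset E
  c : E → E → ℝ
  P : ℕ → Set E
  subset : ∀ N, (F N : Set E) ⊆ X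
  meas_c : ∀ ξ, Measurable (c ξ)
  meas_P : ∀ N, MeasurableSet (P N)
  mono : Monotone P
  conull : ∀ᵐ t : E, ∃ N, t ∈ P N
  bound : ∀ N, ∀ t ∈ P N, ∀ ξ ∈ X, |c ξ t| ≤ N
  approx : ∀ N, ∀ t ∈ P N, ∀ x, |Φ (x - t) - ∑ ξ ∈ F N, c ξ t * Φ (x - ξ)| ≤ k (x - t)

/-- Hypothesis (a) yields an `Exhaustion`. With `X` enumerated, `P N` consists of the `t` whose
active nodes are among the first `N` and whose coefficients are at most `N`. Since `X(t)` is finite,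
almost every `t` lies in some `P N`. The coefficients are only a.e. measurable and are replaced by
measurable representatives; countability of `X` keeps the exceptional set null. -/
theorem exists_exhaustion {Φ : E → ℝ} {X : Set E} (hX : X.Countable) {k : E → ℝ}
    (Xt : E → Finset E) (A : E → E → ℝ) (hXt : ∀ t, (Xt t : Set E) ⊆ X)
    (hA : ∀ ξ, Integrable (fun t => if ξ ∈ Xt t then A t ξ else 0) (volume : Measure E))
    (hE : ∀ x t, |Φ (x - t) - ∑ ξ ∈ Xt t, A t ξ * Φ (x - ξ)| ≤ k (x - t)) :
    Nonempty (Exhaustion Φ X k) := by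
  obtain ⟨f, hf⟩ := countable_iff_exists_subset_range.1 hX
  set c : E → E → ℝ := fun ξ => (hA ξ).aestronglyMeasurable.mk _ with hc
  have hcm : ∀ ξ, Measurable (c ξ) := fun ξ =>
    (hA ξ).aestronglyMeasurable.stronglyMeasurable_mk.measurable
  set F : ℕ → Finset E := fun N => ((Finset.range N).image f).filter (· ∈ X) with hF
  have hFX : ∀ N, (F N : Set E) ⊆ X := fun N ξ hξ => by
    simp only [hF, Finset.coe_filter, mem_ofPred_eq] at hξ
    exact hξ.2
  have hFmono : Monotone F := fun a b hab => by
    refine Finset.filter_subset_filter _ (Finset.image_subset_image ?_)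
    simpa using hab
  have hae : ∀ᵐ t : E, ∀ ξ ∈ X, (if ξ ∈ Xt t then A t ξ else 0) = c ξ t :=
    (ae_ball_iff hX).2 fun ξ _ => (hA ξ).aestronglyMeasurable.ae_eq_mk
  obtain ⟨Z, hZsub, hZm, hZ⟩ : ∃ Z : Set E,
      (∀ t ∈ Z, ∀ ξ ∈ X, (if ξ ∈ Xt t then A t ξ else 0) = c ξ t) ∧ MeasurableSet Z ∧
      ∀ᵐ t : E, t ∈ Z := by
    obtain ⟨Z', h1, h2, h3⟩ := exists_measurable_superset_of_null (ae_iff.1 hae)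
    refine ⟨Z'ᶜ, fun t ht => ?_, h2.compl, ?_⟩
    · by_contra hcon
      exact ht (h1 hcon)
    · exact compl_mem_ae_iff.2 h3
  refine ⟨⟨F, c, fun N => Z ∩ ⋂ ξ ∈ X, {t | |c ξ t| ≤ N ∧ (ξ ∉ F N → c ξ t = 0)},
    hFX, hcm, ?_, ?_, ?_, ?_, ?_⟩⟩
  · intro N
    refine hZm.inter (MeasurableSet.biInter hX fun ξ _ => ?_)
    have h2 : MeasurableSet {t | ξ ∉ F N → c ξ t = 0} := by
      by_cases h : ξ ∈ F N
      · have e : {t | ξ ∉ F N → c ξ t = 0} = univ := by ext t; simp [h]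
        rw [e]
        exact MeasurableSet.univ
      · have e : {t | ξ ∉ F N → c ξ t = 0} = {t | c ξ t = 0} := by ext t; simp [h]
        rw [e]
        exact measurableSet_eq_fun (hcm ξ) measurable_const
    exact (measurableSet_le (hcm ξ).abs measurable_const).inter h2
  · intro a b hab t ht
    simp only [mem_inter_iff, mem_iInter, mem_ofPred_eq] at ht ⊢
    refine ⟨ht.1, fun ξ hξ => ⟨(ht.2 ξ hξ).1.trans (by exact_mod_cast hab), fun h => ?_⟩⟩
    exact (ht.2 ξ hξ).2 fun h' => h (hFmono hab h')
  · filter_upwards [hZ] with t ht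
    have h1 : ∀ ξ ∈ Xt t, ∃ n, f n = ξ := fun ξ hξ => hf (hXt t hξ)
    choose! n hn using h1
    set N0 := (Xt t).sup fun ξ => n ξ + 1
    obtain ⟨N1, hN1⟩ := exists_nat_ge (∑ ξ ∈ Xt t, |A t ξ|)
    refine ⟨max N0 N1, ht, ?_⟩
    simp only [mem_iInter, mem_ofPred_eq]
    intro ξ hξ
    rw [← hZsub t ht ξ hξ]
    split_ifs with h
    · constructor
      · calc |A t ξ| ≤ ∑ ξ ∈ Xt t, |A t ξ| :=
              Finset.single_le_sum (f := fun ξ => |A t ξ|) (fun _ _ => abs_nonneg _) h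
          _ ≤ N1 := hN1
          _ ≤ _ := by exact_mod_cast le_max_right _ _
      · intro hh
        exfalso
        apply hh
        simp only [hF, Finset.mem_filter, Finset.mem_image, Finset.mem_range]
        refine ⟨⟨n ξ, ?_, hn ξ h⟩, hξ⟩
        have : n ξ + 1 ≤ N0 := Finset.le_sup (f := fun ξ => n ξ + 1) h
        exact lt_of_lt_of_le this (le_max_left _ _)
    · simp
  · intro N t ht ξ hξ
    simp only [mem_inter_iff, mem_iInter, mem_ofPred_eq] at ht
    exact (ht.2 ξ hξ).1
  · intro N t ht x
    simp only [mem_inter_iff, mem_iInter, mem_ofPred_eq] at ht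
    have hs : ∑ ξ ∈ F N, c ξ t * Φ (x - ξ) = ∑ ξ ∈ Xt t, A t ξ * Φ (x - ξ) := by
      have e1 : ∑ ξ ∈ F N, c ξ t * Φ (x - ξ) = ∑ ξ ∈ F N ∪ Xt t, c ξ t * Φ (x - ξ) := by
        refine Finset.sum_subset Finset.subset_union_left fun ξ hξ hξ' => ?_
        have : ξ ∈ X := by
          rcases Finset.mem_union.1 hξ with h | h
          · exact hFX N h
          · exact hXt t h
        rw [(ht.2 ξ this).2 hξ', zero_mul]
      have e2 : ∑ ξ ∈ Xt t, A t ξ * Φ (x - ξ) = ∑ ξ ∈ Xt t, c ξ t * Φ (x - ξ) :=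
        Finset.sum_congr rfl fun ξ hξ => by
          rw [← hZsub t ht.1 ξ (hXt t hξ), if_pos hξ]
      have e3 : ∑ ξ ∈ Xt t, c ξ t * Φ (x - ξ) = ∑ ξ ∈ F N ∪ Xt t, c ξ t * Φ (x - ξ) := by
        refine Finset.sum_subset Finset.subset_union_right fun ξ hξ hξ' => ?_
        have : ξ ∈ X := by
          rcases Finset.mem_union.1 hξ with h | h
          · exact hFX N h
          · exact hXt t h
        rw [← hZsub t ht.1 ξ this, if_neg hξ', zero_mul]
      rw [e1, e2, e3]
    rw [hs]
    exact hE x t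

/-! ### Uniform approximation on balls -/

/-- The part of a set of finite measure that is missed by an almost exhausting sequence `P` is
eventually small. -/
theorem exists_measure_diff_lt {P : ℕ → Set E} (hP : ∀ N, MeasurableSet (P N))
    (hmono : Monotone P) (hcon : ∀ᵐ t : E, ∃ N, t ∈ P N) {B : Set E} (hB : MeasurableSet B)
    (hBfin : volume B ≠ ∞) {ε : ℝ≥0∞} (hε : 0 < ε) : ∃ N, volume (B \ P N) < ε := by
  have h1 : Tendsto (fun N => volume (B \ P N)) atTop (nhds (volume (⋂ N, B \ P N))) := by
    refine tendsto_measure_iInter_atTop (fun N => (hB.diff (hP N)).nullMeasurableSet) ?_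
      ⟨0, ne_top_of_le_ne_top hBfin (measure_mono sdiff_subset)⟩
    exact fun a b hab => sdiff_subset_sdiff_right (hmono hab)
  have h2 : volume (⋂ N, B \ P N) = 0 := by
    refine measure_mono_null ?_ (ae_iff.1 hcon)
    intro t ht
    simp only [mem_iInter, Set.mem_sdiff] at ht
    simpa using fun N => (ht N).2
  rw [h2] at h1
  exact (h1.eventually (gt_mem_nhds hε)).exists

/-- On every ball, *all* translates `Φ(· - t)` can be approximated from one finite set of nodes with
bounded measurable coefficients, at the price of an uncontrolled constant `L` in the error.

No point of the ball need be good, but sums of two good points fill it: since the good sets have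
nearly full measure, `t = a + b` with `a ∈ P N` and `b + η ∈ P N'` for each `η ∈ F N`. Then
`Φ(· - t) ≈ ∑ η, c η a Φ(· - (b + η)) ≈ ∑ ξ, ∑ η, c η a * c ξ (b + η) Φ(· - ξ)`.
Averaging the coefficients over all admissible `a` makes them measurable in `t` without a measurable
selection. -/
theorem exists_uniform_approx {Φ : E → ℝ} {X : Set E} {k H : E → ℝ}
    (hk : ∀ ρ : ℝ, ∃ L : ℝ, 0 ≤ L ∧ ∀ t x, ‖t‖ ≤ ρ → k (x - t) ≤ L * H x)
    (D : Exhaustion Φ X k) (R : ℝ) :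
    ∃ (Y : Finset E) (B : E → E → ℝ) (K L : ℝ), (Y : Set E) ⊆ X ∧ (∀ ξ, Measurable (B ξ)) ∧
      0 ≤ L ∧ ∀ t ∈ closedBall (0 : E) R, (∀ ξ ∈ Y, |B ξ t| ≤ K) ∧
        ∀ x, |Φ (x - t) - ∑ ξ ∈ Y, B ξ t * Φ (x - ξ)| ≤ L * H x := by
  -- `a` is drawn from the unit ball `U`, so that `t - a` stays in `U'`
  set U : Set E := closedBall 0 1 with hU
  set U' : Set E := closedBall 0 (R + 1) with hU'
  have hUm : MeasurableSet U := measurableSet_closedBall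
  have hUfin : volume U ≠ ∞ := measure_closedBall_lt_top.ne
  have hUpos : 0 < volume U := measure_closedBall_pos _ _ one_pos
  set ε : ℝ≥0∞ := volume U / 2 with hε
  have hεpos : 0 < ε := ENNReal.half_pos hUpos.ne'
  obtain ⟨N, hN⟩ := exists_measure_diff_lt D.meas_P D.mono D.conull hUm hUfin hεpos
  -- points `b` all of whose shifts by nodes of `F N` are good
  set Q : ℕ → Set E := fun n => ⋂ η ∈ D.F N, (fun b => b + η) ⁻¹' D.P n with hQ
  have hQm : ∀ n, MeasurableSet (Q n) := fun n =>
    Finset.measurableSet_biInter _ fun η _ => (D.meas_P n).preimage (measurable_add_const η)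
  have hQmono : Monotone Q := fun a b hab =>
    iInter₂_mono fun η _ => preimage_mono (D.mono hab)
  have hQcon : ∀ᵐ t : E, ∃ n, t ∈ Q n := by
    have h1 : ∀ᵐ t : E, ∀ η ∈ D.F N, ∃ n, t + η ∈ D.P n :=
      (ae_ball_iff (D.F N).countable_toSet).2 fun η _ =>
        (measurePreserving_add_right volume η).quasiMeasurePreserving.ae D.conull
    filter_upwards [h1] with t ht
    choose! n hn using ht
    refine ⟨(D.F N).sup n, ?_⟩
    simp only [hQ, mem_iInter, mem_preimage]
    exact fun η hη => D.mono (Finset.le_sup hη) (hn η hη)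
  obtain ⟨N', hN'⟩ := exists_measure_diff_lt hQm hQmono hQcon
    (measurableSet_closedBall : MeasurableSet U') measure_closedBall_lt_top.ne hεpos
  -- pairs `(t, a)` for which both `a` and `t - a` are good
  set W : Set (E × E) := {z | z.2 ∈ U ∩ D.P N ∧ z.1 - z.2 ∈ Q N'} with hW
  have hWm : MeasurableSet W :=
    ((hUm.inter (D.meas_P N)).preimage measurable_snd).inter
      ((hQm N').preimage (measurable_fst.sub measurable_snd))
  set V : E → Set E := fun t => Prod.mk t ⁻¹' W with hV
  have hVm : ∀ t, MeasurableSet (V t) := fun t => hWm.preimage measurable_prodMk_left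
  have hVU : ∀ t, V t ⊆ U := fun t a ha => ha.1.1
  have hVfin : ∀ t, volume (V t) ≠ ∞ := fun t => ne_top_of_le_ne_top hUfin (measure_mono (hVU t))
  -- fewer than half of the `a ∈ U` are bad, and for fewer than half of them `t - a` is bad
  have hVpos : ∀ t ∈ closedBall (0 : E) R, volume (V t) ≠ 0 := by
    intro t ht h0
    have hsub : U ⊆ V t ∪ (U \ D.P N) ∪ (fun a => t - a) ⁻¹' (U' \ Q N') := by
      intro a ha
      by_cases h1 : a ∈ D.P N
      · by_cases h2 : t - a ∈ Q N'
        · exact Or.inl (Or.inl ⟨⟨ha, h1⟩, h2⟩)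
        · refine Or.inr ⟨?_, h2⟩
          simp only [hU, hU', mem_closedBall_zero_iff] at ha ht ⊢
          exact (norm_sub_le _ _).trans (add_le_add ht ha)
      · exact Or.inl (Or.inr ⟨ha, h1⟩)
    have h3 : volume ((fun a => t - a) ⁻¹' (U' \ Q N')) = volume (U' \ Q N') :=
      (Measure.measurePreserving_sub_left volume t).measure_preimage
        (measurableSet_closedBall.diff (hQm N')).nullMeasurableSet
    have : volume U < volume U := by
      calc volume U ≤ volume (V t) + volume (U \ D.P N)
            + volume ((fun a => t - a) ⁻¹' (U' \ Q N')) :=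
            (measure_mono hsub).trans ((measure_union_le _ _).trans
              (add_le_add_left (measure_union_le _ _) _))
        _ = volume (U \ D.P N) + volume (U' \ Q N') := by rw [h0, h3, zero_add]
        _ < ε + ε := ENNReal.add_lt_add hN hN'
        _ = volume U := ENNReal.add_halves _
    exact lt_irrefl _ this
  -- coefficients of the two-step approximation through `a`
  set b : E → E → E → ℝ := fun ξ t a => ∑ η ∈ D.F N, D.c η a * D.c ξ (t - a + η) with hb
  have hbm : ∀ ξ, Measurable fun z : E × E => b ξ z.1 z.2 := fun ξ => by
    refine Finset.measurable_sum _ fun η _ => ?_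
    exact ((D.meas_c η).comp measurable_snd).mul
      ((D.meas_c ξ).comp ((measurable_fst.sub measurable_snd).add_const η))
  set B : E → E → ℝ := fun ξ t =>
    (volume (V t)).toReal⁻¹ * ∫ a, W.indicator (fun z => b ξ z.1 z.2) (t, a) with hB
  have hBm : ∀ ξ, Measurable (B ξ) := fun ξ => by
    refine (measurable_measure_prodMk_left hWm).ennreal_toReal.inv.mul ?_
    exact (StronglyMeasurable.integral_prod_right'
      ((hbm ξ).indicator hWm).stronglyMeasurable).measurable
  have hBavg : ∀ ξ t, B ξ t = ⨍ a in V t, b ξ t a := fun ξ t => by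
    rw [setAverage_eq, smul_eq_mul, ← integral_indicator (hVm t)]
    rfl
  set K : ℝ := (D.F N).card * (N * N') with hK
  have hbK : ∀ ξ ∈ X, ∀ t, ∀ a ∈ V t, |b ξ t a| ≤ K := by
    intro ξ hξ t a ha
    refine (Finset.abs_sum_le_sum_abs _ _).trans ?_
    rw [hK, ← nsmul_eq_mul]
    refine Finset.sum_le_card_nsmul _ _ _ fun η hη => ?_
    rw [abs_mul]
    have h2 : t - a + η ∈ D.P N' := by
      have := ha.2
      simp only [hQ, mem_iInter, mem_preimage] at this
      exact this η hη
    exact mul_le_mul (D.bound N a ha.1.2 η (D.subset N hη)) (D.bound N' _ h2 ξ hξ)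
      (abs_nonneg _) (Nat.cast_nonneg _)
  have hbi : ∀ ξ ∈ X, ∀ t, IntegrableOn (b ξ t) (V t) := fun ξ hξ t =>
    Measure.integrableOn_of_bounded (hVfin t)
      ((hbm ξ).comp measurable_prodMk_left).aestronglyMeasurable
      (ae_restrict_of_forall_mem (hVm t) fun a ha => hbK ξ hξ t a ha)
  -- the second-step nodes stay in a fixed ball
  set ρ : ℝ := R + 1 + ∑ η ∈ D.F N, ‖η‖ with hρ
  obtain ⟨L₁, hL₁, hkL₁⟩ := hk R
  obtain ⟨L₂, hL₂, hkL₂⟩ := hk ρ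
  set L : ℝ := L₁ + (D.F N).card * (N * L₂) with hL
  have hstep : ∀ t ∈ closedBall (0 : E) R, ∀ a ∈ V t, ∀ x,
      |Φ (x - t) - ∑ ξ ∈ D.F N', b ξ t a * Φ (x - ξ)| ≤ L * H x := by
    intro t ht a ha x
    rw [mem_closedBall_zero_iff] at ht
    have ha1 : ‖a‖ ≤ 1 := by simpa [hU] using ha.1.1
    have e1 := D.approx N a ha.1.2 (x - (t - a))
    have e2 : ∀ η ∈ D.F N, |D.c η a * (Φ (x - (t - a + η)) -
        ∑ ξ ∈ D.F N', D.c ξ (t - a + η) * Φ (x - ξ))| ≤ N * L₂ * H x := by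
      intro η hη
      have h2 : t - a + η ∈ D.P N' := by
        have := ha.2
        simp only [hQ, mem_iInter, mem_preimage] at this
        exact this η hη
      have hn : ‖t - a + η‖ ≤ ρ := by
        have h3 : ‖η‖ ≤ ∑ η ∈ D.F N, ‖η‖ :=
          Finset.single_le_sum (f := fun η : E => ‖η‖) (fun _ _ => norm_nonneg _) hη
        have h4 := norm_add_le (t - a) η
        have h5 := norm_sub_le t a
        linarith
      rw [abs_mul, mul_assoc]
      exact mul_le_mul (D.bound N a ha.1.2 η (D.subset N hη))
        ((D.approx N' _ h2 x).trans (hkL₂ _ _ hn)) (abs_nonneg _) (Nat.cast_nonneg _)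
    have hsplit : Φ (x - t) - ∑ ξ ∈ D.F N', b ξ t a * Φ (x - ξ) =
        (Φ (x - (t - a) - a) - ∑ η ∈ D.F N, D.c η a * Φ (x - (t - a) - η)) +
        ∑ η ∈ D.F N, D.c η a * (Φ (x - (t - a + η)) -
          ∑ ξ ∈ D.F N', D.c ξ (t - a + η) * Φ (x - ξ)) := by
      have h1 : ∑ ξ ∈ D.F N', b ξ t a * Φ (x - ξ) = ∑ η ∈ D.F N, D.c η a *
          ∑ ξ ∈ D.F N', D.c ξ (t - a + η) * Φ (x - ξ) := by
        simp_rw [hb, Finset.sum_mul, Finset.mul_sum]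
        rw [Finset.sum_comm]
        simp_rw [mul_assoc]
      have h2 : x - (t - a) - a = x - t := by abel
      have h3 : ∀ η, x - (t - a) - η = x - (t - a + η) := fun η => by abel
      simp_rw [h1, h2, h3, mul_sub, Finset.sum_sub_distrib]
      ring
    have h6 : x - (t - a) - a = x - t := by abel
    rw [hsplit]
    refine (abs_add_le _ _).trans ?_
    have e3 : |∑ η ∈ D.F N, D.c η a * (Φ (x - (t - a + η)) -
          ∑ ξ ∈ D.F N', D.c ξ (t - a + η) * Φ (x - ξ))| ≤ (D.F N).card * (N * L₂ * H x) := by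
      refine (Finset.abs_sum_le_sum_abs _ _).trans ?_
      rw [← nsmul_eq_mul]
      exact Finset.sum_le_card_nsmul _ _ _ e2
    have e4 : k (x - (t - a) - a) ≤ L₁ * H x := by rw [h6]; exact hkL₁ t x ht
    calc _ ≤ L₁ * H x + (D.F N).card * (N * L₂ * H x) := add_le_add (e1.trans e4) e3
      _ = L * H x := by rw [hL]; ring
  refine ⟨D.F N', B, K, L, D.subset N', hBm, by positivity, fun t ht => ⟨fun ξ hξ => ?_,
    fun x => ?_⟩⟩
  · rw [hBavg]
    have := (convex_closedBall (0 : ℝ) K).set_average_mem isClosed_closedBall (hVpos t ht)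
      (hVfin t) (ae_restrict_of_forall_mem (hVm t) fun a ha => by
        simpa using hbK ξ (D.subset N' hξ) t a ha) (hbi ξ (D.subset N' hξ) t)
    simpa using this
  · have h_int : IntegrableOn (fun a => Φ (x - t) - ∑ ξ ∈ D.F N', b ξ t a * Φ (x - ξ)) (V t) := by
      refine Integrable.sub (integrableOn_const (hVfin t)) ?_
      exact integrable_finsetSum _ fun ξ hξ => (hbi ξ (D.subset N' hξ) t).mul_const _
    have hmem := (convex_closedBall (0 : ℝ) (L * H x)).set_average_mem isClosed_closedBall
      (hVpos t ht) (hVfin t) (ae_restrict_of_forall_mem (hVm t) fun a ha => by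
        simpa using hstep t ht a ha x) h_int
    have hv : (volume (V t)).toReal ≠ 0 := ENNReal.toReal_ne_zero.2 ⟨hVpos t ht, hVfin t⟩
    have havg : ⨍ a in V t, (Φ (x - t) - ∑ ξ ∈ D.F N', b ξ t a * Φ (x - ξ)) =
        Φ (x - t) - ∑ ξ ∈ D.F N', B ξ t * Φ (x - ξ) := by
      simp_rw [hBavg, setAverage_eq, smul_eq_mul]
      have hci : Integrable (fun _ => Φ (x - t)) (volume.restrict (V t)) :=
        integrableOn_const (hVfin t)
      rw [integral_sub hci
        (integrable_finsetSum _ fun ξ hξ => (hbi ξ (D.subset N' hξ) t).mul_const _),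
        integral_finsetSum _ fun ξ hξ => (hbi ξ (D.subset N' hξ) t).mul_const _]
      simp_rw [integral_mul_const, setIntegral_const, mul_sub, Finset.mul_sum, mul_assoc]
      simp only [Measure.real, smul_eq_mul]
      rw [← mul_assoc, inv_mul_cancel₀ hv, one_mul]
    rw [havg] at hmem
    simpa using hmem

/-! ### Discretization of a convolution -/

theorem integrable_translate_mul {Φ : E → ℝ} (hΦ : LocallyIntegrable Φ) {w : E → ℝ}
    (hw : Measurable w) {C R : ℝ} (hwC : ∀ t, |w t| ≤ C)
    (hwR : ∀ t, t ∉ closedBall (0 : E) R → w t = 0) (x : E) :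
    Integrable (fun t => Φ (x - t) * w t) := by
  have h1 : IntegrableOn (fun t => Φ (x - t)) (closedBall 0 R) := by
    have := ((Measure.measurePreserving_sub_left volume x).integrableOn_comp_preimage
      (Homeomorph.subLeft x).measurableEmbedding (f := Φ) (s := closedBall x R)).2
      (hΦ.integrableOn_isCompact (isCompact_closedBall x R))
    have hpre : (fun t => x - t) ⁻¹' closedBall x R = closedBall 0 R := by
      ext t
      simp [dist_eq_norm]
    rwa [hpre] at this
  have h2 : IntegrableOn (fun t => Φ (x - t) * w t) (closedBall 0 R) :=
    h1.mul_bdd hw.aestronglyMeasurable (ae_of_all _ hwC)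
  refine h2.integrable_of_forall_notMem_eq_zero fun t ht => ?_
  rw [hwR t ht, mul_zero]

/-- Associativity `(Φ * m) * g = Φ * (m * g)`, at every point `x`. -/
theorem fubini_conv {Φ : E → ℝ} (hΦ : LocallyIntegrable Φ) {g : E → ℝ} (hg : Measurable g)
    {C r ρ : ℝ} (hgC : ∀ t, |g t| ≤ C) (hgr : ∀ t, t ∉ closedBall (0 : E) r → g t = 0)
    (m : Measure E) [IsFiniteMeasure m] (hm : m (closedBall 0 ρ)ᶜ = 0) (x : E) :
    Integrable (fun t => (∫ s, Φ (x - t - s) ∂m) * g t) ∧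
    ∫ t, (∫ s, Φ (x - t - s) ∂m) * g t = ∫ u, Φ (x - u) * ∫ s, g (u - s) ∂m := by
  set J : E × E → ℝ := fun z => Φ (x - z.1) * g (z.1 - z.2) with hJ
  have hmae : ∀ᵐ s ∂m, s ∈ closedBall (0 : E) ρ := by
    rw [ae_iff]
    exact hm
  have hC : 0 ≤ C := (abs_nonneg _).trans (hgC 0)
  set χ : E → ℝ := (closedBall (0 : E) (r + ρ)).indicator fun _ => C with hχ
  have hχm : Measurable χ := measurable_const.indicator measurableSet_closedBall
  have hdom : Integrable (fun t => Φ (x - t) * χ t) := by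
    refine integrable_translate_mul hΦ hχm (C := C) (R := r + ρ) (fun t => ?_) (fun t ht => ?_) x
    · by_cases h : t ∈ closedBall (0 : E) (r + ρ)
      · simp only [hχ, indicator_of_mem h, abs_of_nonneg hC, le_refl]
      · simp only [hχ, indicator_of_notMem h, abs_zero, hC]
    · simp only [hχ, indicator_of_notMem ht]
  have hΦx : AEStronglyMeasurable (fun t => Φ (x - t)) volume :=
    hΦ.aestronglyMeasurable.comp_measurePreserving (Measure.measurePreserving_sub_left volume x)
  have hJi : Integrable J ((volume : Measure E).prod m) := by
    refine (hdom.comp_fst m).mono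
      (hΦx.comp_fst.mul (hg.comp (measurable_fst.sub measurable_snd)).aestronglyMeasurable) ?_
    have h1 : ∀ᵐ z : E × E ∂((volume : Measure E).prod m), z.2 ∈ closedBall (0 : E) ρ :=
      Measure.quasiMeasurePreserving_snd.ae hmae
    filter_upwards [h1] with z hz
    rw [hJ, norm_mul, norm_mul]
    refine mul_le_mul_of_nonneg_left ?_ (norm_nonneg _)
    by_cases h : z.1 ∈ closedBall (0 : E) (r + ρ)
    · simp only [hχ, indicator_of_mem h, Real.norm_eq_abs, abs_of_nonneg hC]
      exact hgC _
    · rw [hgr (z.1 - z.2), norm_zero]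
      · exact norm_nonneg _
      · intro h'
        apply h
        rw [mem_closedBall_zero_iff] at h' hz ⊢
        calc ‖z.1‖ = ‖(z.1 - z.2) + z.2‖ := by rw [sub_add_cancel]
          _ ≤ _ := (norm_add_le _ _).trans (add_le_add h' hz)
  have hmp := measurePreserving_add_prod (volume : Measure E) m
  have hJ' : (J ∘ fun z : E × E => (z.1 + z.2, z.2)) = fun z => Φ (x - z.1 - z.2) * g z.1 := by
    ext z
    simp only [hJ, Function.comp, add_sub_cancel_right, sub_add_eq_sub_sub]
  have hKi : Integrable (fun z : E × E => Φ (x - z.1 - z.2) * g z.1)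
      ((volume : Measure E).prod m) := by
    rw [← hJ']
    exact (hmp.integrable_comp hJi.aestronglyMeasurable).2 hJi
  constructor
  · have := hKi.integral_prod_left
    simpa only [integral_mul_const] using this
  · calc ∫ t, (∫ s, Φ (x - t - s) ∂m) * g t
        = ∫ z, Φ (x - z.1 - z.2) * g z.1 ∂((volume : Measure E).prod m) := by
          rw [integral_prod _ hKi]
          simp only [integral_mul_const]
      _ = ∫ z, J z ∂((volume : Measure E).prod m) := by
          have hmap := integral_map hmp.measurable.aemeasurable (f := J)
            (by rw [hmp.map_eq]; exact hJi.aestronglyMeasurable)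
          rw [hmp.map_eq] at hmap
          rw [← hJ', hmap]
          rfl
      _ = _ := by
          rw [integral_prod _ hJi]
          simp only [hJ, integral_const_mul]

/-- Discretization of `Φ * w` for a bounded compactly supported density `w`, with pointwise error
`k * |w| + ε H`. The coefficients `c` are used on a good set `P N` that covers the support of `w` up
to a set of measure `δ`, and those of `exists_uniform_approx` on the rest, where their error is at
most `L C δ H(x) ≤ ε H(x)`. -/
theorem exists_SX_approx {Φ : E → ℝ} (hΦ : LocallyIntegrable Φ) {X : Set E} {k H : E → ℝ}
    (hk : ∀ ρ : ℝ, ∃ L : ℝ, 0 ≤ L ∧ ∀ t x, ‖t‖ ≤ ρ → k (x - t) ≤ L * H x)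
    (hH : ∀ x, 0 ≤ H x) (D : Exhaustion Φ X k) {w : E → ℝ} (hw : Measurable w) {C R : ℝ}
    (hwC : ∀ t, |w t| ≤ C) (hwR : ∀ t, t ∉ closedBall (0 : E) R → w t = 0)
    {ε : ℝ} (hε : 0 < ε) :
    ∃ S ∈ SX Φ X, ∀ x, ‖(∫ t, Φ (x - t) * w t) - S x‖ₑ ≤
      (∫⁻ t, ENNReal.ofReal (k (x - t)) * ‖w t‖ₑ) + ENNReal.ofReal (ε * H x) := by
  obtain ⟨Y, B, K, L, hYX, hBm, hL, hB⟩ := exists_uniform_approx hk D R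
  have hC : 0 ≤ C := (abs_nonneg _).trans (hwC 0)
  set δ : ℝ := ε / (L * C + 1) with hδ
  have hLC : 0 < L * C + 1 := by positivity
  have hδ0 : 0 < δ := by positivity
  obtain ⟨N, hN⟩ := exists_measure_diff_lt D.meas_P D.mono D.conull
    (measurableSet_closedBall : MeasurableSet (closedBall (0 : E) R))
    measure_closedBall_lt_top.ne (ENNReal.ofReal_pos.2 hδ0)
  set q : E → E → ℝ := fun ξ t => if t ∈ D.P N then (if ξ ∈ D.F N then D.c ξ t else 0)
    else (if ξ ∈ Y then B ξ t else 0) with hq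
  have hqm : ∀ ξ, Measurable (q ξ) := fun ξ => by
    refine Measurable.ite (D.meas_P N) ?_ ?_
    · by_cases h : ξ ∈ D.F N
      · simpa [h] using D.meas_c ξ
      · simp [h]
    · by_cases h : ξ ∈ Y
      · simpa [h] using hBm ξ
      · simp [h]
  have hwi : Integrable w := by
    have : IntegrableOn w (closedBall 0 R) :=
      Measure.integrableOn_of_bounded measure_closedBall_lt_top.ne hw.aestronglyMeasurable
        (ae_of_all _ hwC)
    exact this.integrable_of_forall_notMem_eq_zero hwR
  have hqi : ∀ ξ, Integrable fun t => q ξ t * w t := fun ξ => by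
    refine (hwi.const_mul (N + |K|)).mono ((hqm ξ).mul hw).aestronglyMeasurable
      (ae_of_all _ fun t => ?_)
    by_cases ht : t ∈ closedBall (0 : E) R
    · rw [norm_mul, norm_mul]
      refine mul_le_mul_of_nonneg_right ?_ (norm_nonneg _)
      rw [Real.norm_eq_abs, Real.norm_of_nonneg (by positivity)]
      have hN0 : (0 : ℝ) ≤ N := Nat.cast_nonneg N
      have hK0 := abs_nonneg K
      simp only [hq]
      split_ifs with h1 h2 h2
      · linarith [D.bound N t h1 ξ (D.subset N h2)]
      · rw [abs_zero]; positivity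
      · linarith [(hB t ht).1 ξ h2, le_abs_self K]
      · rw [abs_zero]; positivity
    · simp [hwR t ht]
  refine ⟨fun x => ∑ ξ ∈ D.F N ∪ Y, (∫ t, q ξ t * w t) * Φ (x - ξ),
    ⟨D.F N ∪ Y, fun ξ => ∫ t, q ξ t * w t, ?_, rfl⟩, fun x => ?_⟩
  · rw [Finset.coe_union]
    exact union_subset (D.subset N) hYX
  have hq1 : ∀ t ∈ D.P N, ∑ ξ ∈ D.F N ∪ Y, q ξ t * Φ (x - ξ) =
      ∑ ξ ∈ D.F N, D.c ξ t * Φ (x - ξ) := fun t ht => by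
    simp only [hq, if_pos ht, ite_mul, zero_mul]
    rw [← Finset.sum_filter, Finset.filter_mem_eq_inter,
      Finset.inter_eq_right.2 Finset.subset_union_left]
  have hq2 : ∀ t, t ∉ D.P N → ∑ ξ ∈ D.F N ∪ Y, q ξ t * Φ (x - ξ) =
      ∑ ξ ∈ Y, B ξ t * Φ (x - ξ) := fun t ht => by
    simp only [hq, if_neg ht, ite_mul, zero_mul]
    rw [← Finset.sum_filter, Finset.filter_mem_eq_inter,
      Finset.inter_eq_right.2 Finset.subset_union_right]
  have hrew : (∫ t, Φ (x - t) * w t) - ∑ ξ ∈ D.F N ∪ Y, (∫ t, q ξ t * w t) * Φ (x - ξ) =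
      ∫ t, (Φ (x - t) - ∑ ξ ∈ D.F N ∪ Y, q ξ t * Φ (x - ξ)) * w t := by
    simp_rw [← integral_mul_const]
    rw [← integral_finsetSum _ fun ξ _ => (hqi ξ).mul_const _,
      ← integral_sub (integrable_translate_mul hΦ hw hwC hwR x)
        (integrable_finsetSum _ fun ξ _ => (hqi ξ).mul_const _)]
    congr 1
    ext t
    rw [sub_mul, Finset.sum_mul]
    congr 1
    exact Finset.sum_congr rfl fun ξ _ => by ring
  set bad : Set E := closedBall 0 R \ D.P N with hbad
  have hbadm : MeasurableSet bad := measurableSet_closedBall.diff (D.meas_P N)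
  have hpt : ∀ t, ‖(Φ (x - t) - ∑ ξ ∈ D.F N ∪ Y, q ξ t * Φ (x - ξ)) * w t‖ₑ ≤
      ENNReal.ofReal (k (x - t)) * ‖w t‖ₑ +
        bad.indicator (fun _ => ENNReal.ofReal (L * H x * C)) t := by
    intro t
    by_cases ht : t ∈ closedBall (0 : E) R
    · by_cases hP : t ∈ D.P N
      · rw [hq1 t hP, enorm_mul]
        refine le_add_right (mul_le_mul_left ?_ _)
        rw [Real.enorm_eq_ofReal_abs]
        exact ENNReal.ofReal_le_ofReal (D.approx N t hP x)
      · rw [hq2 t hP, indicator_of_mem (show t ∈ bad from ⟨ht, hP⟩)]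
        refine le_add_left ?_
        rw [Real.enorm_eq_ofReal_abs, abs_mul]
        exact ENNReal.ofReal_le_ofReal (mul_le_mul ((hB t ht).2 x) (hwC t) (abs_nonneg _)
          (mul_nonneg hL (hH x)))
    · simp [hwR t ht]
  show ‖(∫ t, Φ (x - t) * w t) - ∑ ξ ∈ D.F N ∪ Y, (∫ t, q ξ t * w t) * Φ (x - ξ)‖ₑ ≤ _
  rw [hrew]
  calc _ ≤ ∫⁻ t, ‖(Φ (x - t) - ∑ ξ ∈ D.F N ∪ Y, q ξ t * Φ (x - ξ)) * w t‖ₑ :=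
        enorm_integral_le_lintegral_enorm _
    _ ≤ ∫⁻ t, (ENNReal.ofReal (k (x - t)) * ‖w t‖ₑ +
        bad.indicator (fun _ => ENNReal.ofReal (L * H x * C)) t) := lintegral_mono hpt
    _ = (∫⁻ t, ENNReal.ofReal (k (x - t)) * ‖w t‖ₑ) +
        ENNReal.ofReal (L * H x * C) * volume bad := by
      rw [lintegral_add_right _ (measurable_const.indicator hbadm),
        lintegral_indicator_const hbadm]
    _ ≤ _ := by
      gcongr
      calc ENNReal.ofReal (L * H x * C) * volume bad
          ≤ ENNReal.ofReal (L * H x * C) * ENNReal.ofReal δ := by gcongr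
        _ = ENNReal.ofReal (L * H x * C * δ) :=
            (ENNReal.ofReal_mul (mul_nonneg (mul_nonneg hL (hH x)) hC)).symm
        _ ≤ ENNReal.ofReal (ε * H x) := by
          apply ENNReal.ofReal_le_ofReal
          have : L * C * δ ≤ ε := by
            rw [hδ, ← mul_div_assoc, div_le_iff₀ hLC]
            nlinarith
          nlinarith [hH x, mul_le_mul_of_nonneg_right this (hH x)]

/-! ### The error kernel and the estimate for one decomposition -/

theorem memLp_one_add_norm {l : ℝ} (hl : (Module.finrank ℝ E : ℝ) < l) {p : ℝ≥0∞} (hp : 1 ≤ p) :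
    MemLp (fun x : E => (1 + ‖x‖) ^ (-l)) p volume := by
  have hl0 : 0 < l := lt_of_le_of_lt (Nat.cast_nonneg _) hl
  have hm : AEStronglyMeasurable (fun x : E => (1 + ‖x‖) ^ (-l)) volume :=
    (by fun_prop : Measurable fun x : E => (1 + ‖x‖) ^ (-l)).aestronglyMeasurable
  rcases eq_or_ne p ∞ with rfl | hpt
  · refine memLp_top_of_bound hm 1 (ae_of_all _ fun x => ?_)
    rw [Real.norm_of_nonneg (by positivity)]
    exact Real.rpow_le_one_of_one_le_of_nonpos (by linarith [norm_nonneg x]) (by linarith)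
  · have hq : 1 ≤ p.toReal := by
      simpa using (ENNReal.toReal_le_toReal (by simp) hpt).2 hp
    refine (integrable_norm_rpow_iff hm (zero_lt_one.trans_le hp).ne' hpt).1 ?_
    have := integrable_one_add_norm (E := E) (μ := volume) (r := l * p.toReal) (by nlinarith)
    refine this.congr (ae_of_all _ fun x => ?_)
    simp only
    rw [Real.norm_of_nonneg (by positivity), ← Real.rpow_mul (by positivity), neg_mul]

/-- For translates by a bounded amount, the scaled decay profile is dominated by the standard one.
The assumption `h ≤ 1` makes scaling only improve the decay. -/
theorem kernel_le {l c h : ℝ} (hl : 0 ≤ l) (hc : 0 ≤ c) (h0 : 0 < h) (h1 : h ≤ 1) (ρ : ℝ) :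
    ∃ L : ℝ, 0 ≤ L ∧ ∀ t x : E, ‖t‖ ≤ ρ →
      c * (1 + ‖x - t‖ / h) ^ (-l) ≤ L * (1 + ‖x‖) ^ (-l) := by
  refine ⟨c * (1 + |ρ|) ^ l, by positivity, fun t x ht => ?_⟩
  rw [mul_assoc]
  refine mul_le_mul_of_nonneg_left ?_ hc
  have hb : (1 + ‖x‖) / (1 + |ρ|) ≤ 1 + ‖x - t‖ / h := by
    have e1 : ‖x - t‖ ≤ ‖x - t‖ / h := by
      rw [le_div_iff₀ h0]
      nlinarith [norm_nonneg (x - t)]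
    have e2 : ‖x‖ ≤ ‖x - t‖ + ‖t‖ := by
      simpa using norm_add_le (x - t) t
    rw [div_le_iff₀ (by positivity)]
    nlinarith [norm_nonneg (x - t), le_abs_self ρ, abs_nonneg ρ,
      mul_nonneg (norm_nonneg (x - t)) (abs_nonneg ρ), mul_le_mul_of_nonneg_right e1 (abs_nonneg ρ)]
  calc (1 + ‖x - t‖ / h) ^ (-l) ≤ ((1 + ‖x‖) / (1 + |ρ|)) ^ (-l) :=
        Real.rpow_le_rpow_of_nonpos (by positivity) hb (by linarith)
    _ = _ := by
      rw [Real.div_rpow (by positivity) (by positivity), Real.rpow_neg (by positivity) (x := 1 + |ρ|),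
        div_inv_eq_mul, mul_comm]

/-- The total mass of the error kernel, by the change of variables `x ↦ x / h`. -/
theorem kernel_mass {l c h : ℝ} (hl : (Module.finrank ℝ E : ℝ) < l) (hc : 0 ≤ c) (h0 : 0 < h) :
    ∫⁻ x : E, ENNReal.ofReal (c * (1 + ‖x‖ / h) ^ (-l)) =
      ENNReal.ofReal (c * h ^ (Module.finrank ℝ E) * ∫ x : E, (1 + ‖x‖) ^ (-l)) := by
  have hi : Integrable (fun x : E => (1 + ‖x‖) ^ (-l)) := integrable_one_add_norm hl
  have he : (fun x : E => (1 + ‖x‖ / h) ^ (-l)) = fun x => (1 + ‖h⁻¹ • x‖) ^ (-l) := by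
    ext x
    rw [norm_smul, norm_inv, Real.norm_of_nonneg h0.le, div_eq_inv_mul]
  have hi2 : Integrable (fun x : E => (1 + ‖x‖ / h) ^ (-l)) := by
    rw [he]
    exact hi.comp_smul (inv_ne_zero h0.ne')
  rw [← ofReal_integral_eq_lintegral_ofReal (hi2.const_mul c)
    (ae_of_all _ fun x => by positivity), integral_const_mul, he,
    Measure.integral_comp_inv_smul_of_nonneg volume (fun x : E => (1 + ‖x‖) ^ (-l)) h0.le,
    smul_eq_mul, mul_assoc]

/-- The error estimate for one decomposition `G = Φ * μ + ν` with `μ = μp - μm`: since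
`G * g = Φ * (μ * g) + ν * g`, discretizing the first term costs `‖k‖₁ ‖μ‖ ‖g‖_p` plus an
arbitrarily small multiple of `‖H‖_p`, and dropping the second costs `‖ν‖₁ ‖g‖_p`. -/
theorem approx_of_green {p : ℝ≥0∞} (hp : 1 ≤ p) {Φ G : E → ℝ} (hΦ : LocallyIntegrable Φ)
    {X : Set E} {k H : E → ℝ} (hkm : Measurable k)
    (hki : ∫⁻ x, ENNReal.ofReal (k x) ≠ ∞)
    (hk : ∀ ρ : ℝ, ∃ L : ℝ, 0 ≤ L ∧ ∀ t x, ‖t‖ ≤ ρ → k (x - t) ≤ L * H x)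
    (hH : ∀ x, 0 ≤ H x) (hHm : Measurable H) (D : Exhaustion Φ X k)
    (μp μm : Measure E) [IsFiniteMeasure μp] [IsFiniteMeasure μm] {ρ : ℝ}
    (hμp : μp (closedBall 0 ρ)ᶜ = 0) (hμm : μm (closedBall 0 ρ)ᶜ = 0)
    {ν : E → ℝ} (hν : Integrable ν)
    (hG : ∀ᵐ x, G x = (∫ t, Φ (x - t) ∂μp) - (∫ t, Φ (x - t) ∂μm) + ν x)
    {g : E → ℝ} (hg : Continuous g) (hgc : HasCompactSupport g) {ε : ℝ} (hε : 0 < ε) :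
    ∃ S ∈ SX Φ X, eLpNorm ((fun x => ∫ t, G (x - t) * g t) - S) p volume ≤
      (∫⁻ x, ENNReal.ofReal (k x)) * ((μp univ + μm univ) * eLpNorm g p volume) +
        ENNReal.ofReal ε * eLpNorm H p volume +
        (∫⁻ x, ‖ν x‖ₑ) * eLpNorm g p volume := by
  obtain ⟨C, hC⟩ := hgc.exists_bound_of_continuous hg
  obtain ⟨r, hr⟩ := hgc.isCompact.isBounded.subset_closedBall (0 : E)
  have hgr : ∀ t, t ∉ closedBall (0 : E) r → g t = 0 := fun t ht =>
    image_eq_zero_of_notMem_tsupport fun h => ht (hr h)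
  have hgm : Measurable g := hg.measurable
  have hC0 : 0 ≤ C := (norm_nonneg _).trans (hC 0)
  -- the smoothed density `μ * g`, for each of the two parts
  set s : Measure E → E → ℝ := fun m u => ∫ y, g (u - y) ∂m with hs
  have hsm : ∀ (m : Measure E) [IsFiniteMeasure m], Measurable (s m) := fun m _ =>
    (StronglyMeasurable.integral_prod_right'
      (hgm.comp (measurable_fst.sub measurable_snd)).stronglyMeasurable).measurable
  have hsC : ∀ (m : Measure E) [IsFiniteMeasure m], ∀ u, |s m u| ≤ C * m.real univ := fun m _ u =>
    norm_integral_le_of_norm_le_const (ae_of_all _ fun y => hC (u - y))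
  have hsR : ∀ (m : Measure E), m (closedBall 0 ρ)ᶜ = 0 →
      ∀ u, u ∉ closedBall (0 : E) (r + ρ) → s m u = 0 := fun m hm u hu => by
    refine integral_eq_zero_of_ae ?_
    have hmae : ∀ᵐ y ∂m, y ∈ closedBall (0 : E) ρ := by
      rw [ae_iff]
      exact hm
    filter_upwards [hmae] with y hy
    refine hgr _ fun h' => hu ?_
    rw [mem_closedBall_zero_iff] at h' hy ⊢
    calc ‖u‖ = ‖(u - y) + y‖ := by rw [sub_add_cancel]
      _ ≤ _ := (norm_add_le _ _).trans (add_le_add h' hy)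
  -- the density `μ * g` to be discretized
  set w : E → ℝ := fun u => s μp u - s μm u with hw
  have hwm : Measurable w := (hsm μp).sub (hsm μm)
  have hwC : ∀ u, |w u| ≤ C * μp.real univ + C * μm.real univ := fun u =>
    (abs_sub _ _).trans (add_le_add (hsC μp u) (hsC μm u))
  have hwR : ∀ u, u ∉ closedBall (0 : E) (r + ρ) → w u = 0 := fun u hu => by
    simp only [hw, hsR μp hμp u hu, hsR μm hμm u hu, sub_zero]
  obtain ⟨S, hS, hSb⟩ := exists_SX_approx hΦ hk hH D hwm hwC hwR hε
  refine ⟨S, hS, ?_⟩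
  have hf : ∀ x, ∫ t, G (x - t) * g t = (∫ u, Φ (x - u) * w u) + ∫ t, ν (x - t) * g t := by
    intro x
    obtain ⟨ip, ep⟩ := fubini_conv hΦ hgm hC hgr μp hμp x
    obtain ⟨im, em⟩ := fubini_conv hΦ hgm hC hgr μm hμm x
    have iν : Integrable fun t => ν (x - t) * g t :=
      (hν.comp_sub_left x).mul_bdd hgm.aestronglyMeasurable (ae_of_all _ hC)
    have h1 : ∀ᵐ t, G (x - t) * g t = (∫ s, Φ (x - t - s) ∂μp) * g t -
        (∫ s, Φ (x - t - s) ∂μm) * g t + ν (x - t) * g t := by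
      filter_upwards [(Measure.measurePreserving_sub_left volume x).quasiMeasurePreserving.ae hG]
        with t ht
      rw [ht]
      ring
    have isub : Integrable (fun t => (∫ s, Φ (x - t - s) ∂μp) * g t -
        (∫ s, Φ (x - t - s) ∂μm) * g t) := ip.sub im
    rw [integral_congr_ae h1, integral_add isub iν, integral_sub ip im, ep, em,
      ← integral_sub (integrable_translate_mul hΦ (hsm μp) (hsC μp) (hsR μp hμp) x)
        (integrable_translate_mul hΦ (hsm μm) (hsC μm) (hsR μm hμm) x)]
    simp only [hw, mul_sub]
  have hge : Measurable fun x => ‖g x‖ₑ := hgm.enorm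
  have hwe : Measurable fun x => ‖w x‖ₑ := hwm.enorm
  -- Young's inequality for the convolutions with `μ`, with `k`, and with `ν`
  have hwp : eLpNorm w p volume ≤ (μp univ + μm univ) * eLpNorm g p volume := by
    have := young_measure hp (μp + μm) hge (F := w) (ae_of_all _ fun u => by
      rw [lintegral_add_measure]
      exact enorm_sub_le.trans (add_le_add (enorm_integral_le_lintegral_enorm _)
        (enorm_integral_le_lintegral_enorm _)))
    simpa only [eLpNorm_enorm, Measure.add_apply] using this
  set mk : Measure E := volume.withDensity fun y => ENNReal.ofReal (k y) with hmk
  have hmku : mk univ = ∫⁻ x, ENNReal.ofReal (k x) := by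
    rw [hmk, withDensity_apply _ MeasurableSet.univ, Measure.restrict_univ]
  have : IsFiniteMeasure mk := ⟨by rw [hmku]; exact hki.lt_top⟩
  set mν : Measure E := volume.withDensity fun y => ‖ν y‖ₑ with hmν
  have hmνu : mν univ = ∫⁻ x, ‖ν x‖ₑ := by
    rw [hmν, withDensity_apply _ MeasurableSet.univ, Measure.restrict_univ]
  have : IsFiniteMeasure mν := ⟨by rw [hmνu]; exact hν.hasFiniteIntegral⟩
  set T₁ : E → ℝ≥0∞ := fun x => ∫⁻ y, ‖w (x - y)‖ₑ ∂mk with hT₁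
  set T₂ : E → ℝ≥0∞ := fun x => ‖(ε • H) x‖ₑ with hT₂
  set T₃ : E → ℝ≥0∞ := fun x => ∫⁻ y, ‖g (x - y)‖ₑ ∂mν with hT₃
  have hT₁m : Measurable T₁ :=
    Measurable.lintegral_prod_right' (hwe.comp (measurable_fst.sub measurable_snd))
  have hT₂m : Measurable T₂ := (hHm.const_smul ε).enorm
  have hT₃m : Measurable T₃ :=
    Measurable.lintegral_prod_right' (hge.comp (measurable_fst.sub measurable_snd))
  have b1 : eLpNorm T₁ p volume ≤ (∫⁻ x, ENNReal.ofReal (k x)) * eLpNorm w p volume := by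
    have := young_measure hp mk hwe (F := T₁) (ae_of_all _ fun x => le_rfl)
    rwa [eLpNorm_enorm, hmku] at this
  have b2 : eLpNorm T₂ p volume = ENNReal.ofReal ε * eLpNorm H p volume := by
    rw [hT₂, eLpNorm_enorm, eLpNorm_const_smul, Real.enorm_of_nonneg hε.le]
  have b3 : eLpNorm T₃ p volume ≤ (∫⁻ x, ‖ν x‖ₑ) * eLpNorm g p volume := by
    have := young_measure hp mν hge (F := T₃) (ae_of_all _ fun x => le_rfl)
    rwa [eLpNorm_enorm, hmνu] at this
  have hpt : ∀ x, ‖((fun x => ∫ t, G (x - t) * g t) - S) x‖ₑ ≤ ‖(T₁ + T₂ + T₃) x‖ₑ := by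
    intro x
    have c1 : (∫⁻ t, ENNReal.ofReal (k (x - t)) * ‖w t‖ₑ) = T₁ x := by
      have hm' : Measurable fun y => ‖w (x - y)‖ₑ := hwe.comp (measurable_const.sub measurable_id)
      simp only [hT₁, hmk]
      rw [lintegral_withDensity_eq_lintegral_mul _ hkm.ennreal_ofReal hm',
        ← lintegral_sub_left_eq_self _ x]
      simp only [Pi.mul_apply, _root_.sub_sub_cancel]
    have c3 : ‖∫ t, ν (x - t) * g t‖ₑ ≤ T₃ x := by
      refine (enorm_integral_le_lintegral_enorm _).trans (le_of_eq ?_)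
      have hm' : Measurable fun y => ‖g (x - y)‖ₑ := hge.comp (measurable_const.sub measurable_id)
      simp only [hT₃, hmν]
      rw [lintegral_withDensity_eq_lintegral_mul₀ hν.aestronglyMeasurable.enorm hm'.aemeasurable,
        ← lintegral_sub_left_eq_self _ x]
      simp only [Pi.mul_apply, _root_.sub_sub_cancel, enorm_mul]
    have c2 : ENNReal.ofReal (ε * H x) = T₂ x := by
      simp only [hT₂, Pi.smul_apply, smul_eq_mul]
      rw [Real.enorm_of_nonneg (mul_nonneg hε.le (hH x))]
    have : ((fun x => ∫ t, G (x - t) * g t) - S) x =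
        ((∫ u, Φ (x - u) * w u) - S x) + ∫ t, ν (x - t) * g t := by
      rw [Pi.sub_apply, hf x]
      ring
    rw [this, enorm_eq_self]
    refine (enorm_add_le _ _).trans (add_le_add ?_ c3)
    refine (hSb x).trans (le_of_eq ?_)
    rw [c1, c2, Pi.add_apply]
  calc _ ≤ eLpNorm (T₁ + T₂ + T₃) p volume := eLpNorm_mono_enorm hpt
    _ ≤ eLpNorm T₁ p volume + eLpNorm T₂ p volume + eLpNorm T₃ p volume :=
      (eLpNorm_add_le (hT₁m.add hT₂m).aestronglyMeasurable hT₃m.aestronglyMeasurable hp).trans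
        (add_le_add (eLpNorm_add_le hT₁m.aestronglyMeasurable hT₂m.aestronglyMeasurable hp) le_rfl)
    _ ≤ _ := by
      rw [b2]
      exact add_le_add (add_le_add (b1.trans (mul_le_mul_right hwp _)) le_rfl) b3

end Helpers

/-- general error estimate for perturbed Green's functions.
Under the kernel-approximation hypothesis (a) and the perturbed Green's function
hypothesis (b), approximation from `S_X(Φ)` of `f = G * g` (with `g` continuous and
compactly supported) achieves rate `h^κ` in `L^p`, with a constant depending only on
`d, p, κ, l, C₂, M`. Finite signed Borel measures `μ_n` are encoded by (Jordan-type)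
decompositions `μp n - μm n` into finite positive parts, with total variation norm
`‖μ_n‖ ≤ M` encoded by `μp n univ + μm n univ ≤ M`. -/

theorem stmt0 (d : ℕ) (hd : 1 ≤ d) (p : ℝ≥0∞) (hp : 1 ≤ p)
    (κ l C₂ M : ℝ) (hκ : 0 < κ) (hl : (d : ℝ) < l) (hC₂ : 0 < C₂) (hM : 0 < M) :
    ∃ C' : ℝ, 0 < C' ∧
      ∀ (C₁ : ℝ), 0 < C₁ →
      ∀ (Φ G : EuclideanSpace ℝ (Fin d) → ℝ) (X : Set (EuclideanSpace ℝ (Fin d))) (h : ℝ),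
        0 < h → h ≤ 1 → X.Countable →
        LocallyIntegrable Φ volume → LocallyIntegrable G volume →
        -- hypothesis (a): local kernel approximation of `Φ` by translates from `X`
        (∃ (Xt : EuclideanSpace ℝ (Fin d) → Finset (EuclideanSpace ℝ (Fin d)))
            (A : EuclideanSpace ℝ (Fin d) → EuclideanSpace ℝ (Fin d) → ℝ),
          (∀ t, (Xt t : Set (EuclideanSpace ℝ (Fin d))) ⊆ X ∩ closedBall t (C₁ * h)) ∧
          (∀ ξ, Integrable (fun t => if ξ ∈ Xt t then A t ξ else 0) volume) ∧
          (∀ x t, |Φ (x - t) - ∑ ξ ∈ Xt t, A t ξ * Φ (x - ξ)| ≤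
            C₂ * h ^ (κ - d) * (1 + ‖x - t‖ / h) ^ (-l))) →
        -- hypothesis (b): `G = Φ * μ_n + ν_n` with `μ_n` compactly supported,
        -- `‖μ_n‖ ≤ M`, and `‖ν_n‖_{L¹} → 0`
        (∃ (μp μm : ℕ → Measure (EuclideanSpace ℝ (Fin d)))
            (ν : ℕ → EuclideanSpace ℝ (Fin d) → ℝ),
          (∀ n, IsFiniteMeasure (μp n)) ∧ (∀ n, IsFiniteMeasure (μm n)) ∧
          (∀ n, ∃ R : ℝ, (μp n) (closedBall 0 R)ᶜ = 0 ∧ (μm n) (closedBall 0 R)ᶜ = 0) ∧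
          (∀ n, (μp n) univ + (μm n) univ ≤ ENNReal.ofReal M) ∧
          (∀ n, Integrable (ν n) volume) ∧
          Tendsto (fun n => ∫ x, |ν n x|) atTop (nhds 0) ∧
          (∀ n, ∀ᵐ x, G x =
            (∫ t, Φ (x - t) ∂(μp n)) - (∫ t, Φ (x - t) ∂(μm n)) + ν n x)) →
        -- conclusion
        ∀ g : EuclideanSpace ℝ (Fin d) → ℝ, Continuous g → HasCompactSupport g →
          approxErr volume (fun x => ∫ t, G (x - t) * g t) (SX Φ X) p ≤
            ENNReal.ofReal (C' * h ^ κ) * eLpNorm g p volume := by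
  set I : ℝ := ∫ x : EuclideanSpace ℝ (Fin d), (1 + ‖x‖) ^ (-l) with hI
  have hI0 : 0 ≤ I := integral_nonneg fun x => by positivity
  have hfr : Module.finrank ℝ (EuclideanSpace ℝ (Fin d)) = d := by simp
  have hl' : (Module.finrank ℝ (EuclideanSpace ℝ (Fin d)) : ℝ) < l := by rw [hfr]; exact hl
  have hl0 : 0 ≤ l := (Nat.cast_nonneg d).trans hl.le
  refine ⟨C₂ * I * M + 1, by positivity, ?_⟩
  rintro C₁ - Φ G X h h0 h1 hX hΦ - ⟨Xt, A, hXt, hA, hE⟩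
    ⟨μp, μm, ν, hfp, hfm, hsupp, hmass, hνi, hν0, hG⟩ g hg hgc
  have hc : 0 ≤ C₂ * h ^ (κ - d) := by positivity
  obtain ⟨D⟩ := exists_exhaustion (k := fun y => C₂ * h ^ (κ - d) * (1 + ‖y‖ / h) ^ (-l)) hX Xt A
    (fun t => (hXt t).trans inter_subset_left) (fun ξ => by convert hA ξ) hE
  have hhκ : 0 < h ^ κ := Real.rpow_pos_of_pos h0 κ
  have hpow : C₂ * h ^ (κ - d) * h ^ d * I = C₂ * I * h ^ κ := by
    rw [← Real.rpow_natCast, mul_assoc C₂, ← Real.rpow_add h0, sub_add_cancel]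
    ring
  have hmk := kernel_mass hl' hc h0
  rw [hfr, ← hI, hpow] at hmk
  -- stage at which the perturbation is already below `h ^ κ`
  obtain ⟨n, hn⟩ := (hν0.eventually (gt_mem_nhds hhκ)).exists
  have hνn : ∫⁻ x, ‖ν n x‖ₑ ≤ ENNReal.ofReal (h ^ κ) := by
    rw [← ofReal_integral_norm_eq_lintegral_enorm (hνi n)]
    exact ENNReal.ofReal_le_ofReal hn.le
  obtain ⟨ρ, hρp, hρm⟩ := hsupp n
  have := hfp n
  have := hfm n
  have hHp := memLp_one_add_norm hl' hp
  set Hp := eLpNorm (fun x : EuclideanSpace ℝ (Fin d) => (1 + ‖x‖) ^ (-l)) p volume with hHpdef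
  have hHfin : Hp ≠ ∞ := hHp.eLpNorm_ne_top
  refine ENNReal.le_of_forall_pos_le_add fun δ hδ _ => ?_
  have hε : 0 < (δ : ℝ) / (Hp.toReal + 1) := by positivity
  obtain ⟨S, hS, hSb⟩ := approx_of_green hp hΦ (G := G) (X := X)
    (k := fun y => C₂ * h ^ (κ - d) * (1 + ‖y‖ / h) ^ (-l))
    (H := fun x => (1 + ‖x‖) ^ (-l)) (by fun_prop) (by rw [hmk]; exact ENNReal.ofReal_ne_top)
    (kernel_le hl0 hc h0 h1) (fun x => by positivity) (by fun_prop) D (μp n) (μm n) hρp hρm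
    (hνi n) (hG n) hg hgc hε
  refine (iInf₂_le S hS).trans (hSb.trans ?_)
  rw [hmk]
  have hδb : ENNReal.ofReal ((δ : ℝ) / (Hp.toReal + 1)) * Hp ≤ δ := by
    nth_rewrite 2 [← ENNReal.ofReal_toReal hHfin]
    rw [← ENNReal.ofReal_mul hε.le, ← ENNReal.ofReal_coe_nnreal]
    apply ENNReal.ofReal_le_ofReal
    rw [div_mul_eq_mul_div, div_le_iff₀ (by positivity)]
    nlinarith [δ.2, NNReal.coe_pos.2 hδ]
  have hmain : ENNReal.ofReal ((C₂ * I * M + 1) * h ^ κ) =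
      ENNReal.ofReal (C₂ * I * h ^ κ) * ENNReal.ofReal M + ENNReal.ofReal (h ^ κ) := by
    rw [← ENNReal.ofReal_mul (by positivity), ← ENNReal.ofReal_add (by positivity) hhκ.le]
    congr 1
    ring
  calc _ ≤ ENNReal.ofReal (C₂ * I * h ^ κ) * (ENNReal.ofReal M * eLpNorm g p volume) + δ +
        ENNReal.ofReal (h ^ κ) * eLpNorm g p volume := by
        gcongr
        exact hmass n
    _ = _ := by
      rw [hmain]
      ring
end
end

section
/- Let m ≥ 0 be an integer and let α_j, β_j, γ_j (0 ≤ j ≤ m) be the partial fraction coefficients of 1/(s^{m+1}(1+s²)^{m+1}). Define f_m : [0,∞) → ℂ by f_m(r) = Σ_{j=0}^m (r^j/j!)(α_j + β_j e^{−ir} + γ_j e^{ir}); then f_m is real-valued, and for every real s > 0: ∫_0^∞ f_m(t) e^{−st} dt = 1/(s^{m+1}(1+s²)^{m+1}). -/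
/-!
The Laplace transform of `t ^ n * exp (p * t)` at `s` is `n! / (s - p) ^ (n + 1)` whenever
`re p < re s` (`laplace_monomial` with `a = s - p`, by integration by parts). With `p = 0, -i, i` and linearity,
the Laplace transform of `f_m` is the partial fraction expansion, which is the second claim.

For the first claim, the rational function `1 / (s ^ (m + 1) * (1 + s ^ 2) ^ (m + 1))` has real
coefficients, so conjugating its expansion at `conj s` gives another expansion, with coefficients
`conj α`, `conj γ`, `conj β`. Partial fraction coefficients are unique
(`principal_part_eq_zero`: a nonconstant polynomial in `1 / (s - c)` is unbounded near `c`), so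
`α` is real and `γ = conj β`; hence `f_m` equals its own conjugate.
-/

open Complex MeasureTheory

noncomputable section

/-- The function `f_m(r) = Σ_{j=0}^m (r^j/j!)(α_j + β_j e^{-ir} + γ_j e^{ir})` built from
partial fraction coefficients. -/
def fm (m : ℕ) (α β γ : Fin (m + 1) → ℂ) (r : ℝ) : ℂ :=
  ∑ j, ((r : ℂ) ^ j.val / (j.val.factorial : ℂ)) *
    (α j + β j * Complex.exp (-I * r) + γ j * Complex.exp (I * r))

open scoped ComplexConjugate

/-- The polynomial `∑ a_j X ^ (j + 1)` evaluated at `1 / (s - c)` is bounded near `c`, hence it is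
constant, and it has no constant term. -/
lemma principal_part_eq_zero {n : ℕ} (c : ℂ) (a : Fin n → ℂ) (g : ℂ → ℂ)
    (hg : ContinuousAt g c)
    (h : ∀ᶠ s in nhdsWithin c {c}ᶜ, ∑ j, a j / (s - c) ^ (j.val + 1) = g s) (j : Fin n) :
    a j = 0 := by
  set Q : Polynomial ℂ := ∑ j : Fin n, Polynomial.monomial (j.val + 1) (a j) with hQ
  have hcoeff : ∀ k : Fin n, Q.coeff (k.val + 1) = a k := by
    intro k
    simp [hQ, Polynomial.finsetSum_coeff, Polynomial.coeff_monomial, Fin.val_inj]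
  have hz : Filter.Tendsto (fun s : ℂ => ‖(s - c)⁻¹‖) (nhdsWithin c {c}ᶜ) Filter.atTop := by
    have h1 : Filter.Tendsto (fun s : ℂ => s - c) (nhdsWithin c {c}ᶜ) (nhdsWithin 0 {0}ᶜ) := by
      apply tendsto_nhdsWithin_of_tendsto_nhds_of_eventually_within
      · have : ContinuousAt (fun s : ℂ => s - c) c := by fun_prop
        simpa [ContinuousAt] using this.tendsto.mono_left nhdsWithin_le_nhds
      · filter_upwards [self_mem_nhdsWithin] with s hs
        simpa [sub_eq_zero] using hs
    exact tendsto_norm_cobounded_atTop.comp (Filter.tendsto_inv₀_nhdsNE_zero.comp h1)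
  have heval : ∀ s : ℂ, Q.eval (s - c)⁻¹ = ∑ j, a j / (s - c) ^ (j.val + 1) := by
    intro s
    simp [hQ, Polynomial.eval_finsetSum, div_eq_mul_inv]
  by_cases hd : 0 < Q.degree
  · have h1 := Q.tendsto_norm_atTop hd hz
    have h2 : Filter.Tendsto (fun s => ‖Q.eval (s - c)⁻¹‖) (nhdsWithin c {c}ᶜ) (nhds ‖g c‖) := by
      refine (hg.norm.tendsto.mono_left nhdsWithin_le_nhds).congr' ?_
      filter_upwards [h] with s hs
      rw [heval, hs]
    exact (not_tendsto_nhds_of_tendsto_atTop h1 _ h2).elim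
  · rw [← hcoeff j]
    apply Polynomial.coeff_eq_zero_of_degree_lt
    refine lt_of_le_of_lt (not_lt.mp hd) ?_
    exact_mod_cast Nat.succ_pos j.val

lemma continuousAt_principal_part {n : ℕ} (c d : ℂ) (hcd : c ≠ d) (b : Fin n → ℂ) :
    ContinuousAt (fun s : ℂ => ∑ j, b j / (s - d) ^ (j.val + 1)) c := by
  have h : c - d ≠ 0 := sub_ne_zero.mpr hcd
  refine tendsto_finsetSum _ fun j _ => ?_
  exact ContinuousAt.div (by fun_prop) (by fun_prop) (pow_ne_zero _ h)

/-- Principal parts at distinct points are linearly independent: near `c` the parts at `d` and `e`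
are continuous, so the part at `c` vanishes. -/
lemma principal_parts_unique {n : ℕ} (c d e : ℂ) (hcd : c ≠ d) (hce : c ≠ e)
    (a b b' : Fin n → ℂ)
    (h : ∀ s : ℂ, s ≠ c → s ≠ d → s ≠ e →
      (∑ j, a j / (s - c) ^ (j.val + 1)) + (∑ j, b j / (s - d) ^ (j.val + 1)) +
        (∑ j, b' j / (s - e) ^ (j.val + 1)) = 0) (j : Fin n) : a j = 0 := by
  refine principal_part_eq_zero c a
    (fun s => -((∑ j, b j / (s - d) ^ (j.val + 1)) + ∑ j, b' j / (s - e) ^ (j.val + 1)))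
    ((continuousAt_principal_part c d hcd b).add (continuousAt_principal_part c e hce b')).neg
    ?_ j
  filter_upwards [self_mem_nhdsWithin,
    mem_nhdsWithin_of_mem_nhds (isOpen_ne.mem_nhds hcd),
    mem_nhdsWithin_of_mem_nhds (isOpen_ne.mem_nhds hce)] with s h1 h2 h3
  linear_combination h s h1 h2 h3

lemma norm_pow_mul_exp (a : ℂ) (n : ℕ) (t : ℝ) (ht : 0 < t) :
    ‖(t : ℂ) ^ n * Complex.exp (-a * t)‖ = t ^ (n : ℝ) * Real.exp (-a.re * t) := by
  simp [Complex.norm_exp, abs_of_pos ht]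

lemma integrableOn_pow_mul_exp (a : ℂ) (ha : 0 < a.re) (n : ℕ) :
    IntegrableOn (fun t : ℝ => (t : ℂ) ^ n * Complex.exp (-a * t)) (Set.Ioi 0) := by
  have h := integrableOn_rpow_mul_exp_neg_mul_rpow (s := n) (p := 1) (b := a.re)
    (by have : (0 : ℝ) ≤ n := n.cast_nonneg
        linarith) one_pos ha
  refine Integrable.mono' h (Continuous.aestronglyMeasurable (by fun_prop)) ?_
  filter_upwards [ae_restrict_mem measurableSet_Ioi] with t ht
  rw [norm_pow_mul_exp a n t ht, Real.rpow_one]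

lemma tendsto_pow_mul_exp (a : ℂ) (ha : 0 < a.re) (n : ℕ) :
    Filter.Tendsto (fun t : ℝ => (t : ℂ) ^ n * Complex.exp (-a * t)) Filter.atTop (nhds 0) := by
  rw [tendsto_zero_iff_norm_tendsto_zero]
  refine (tendsto_rpow_mul_exp_neg_mul_atTop_nhds_zero n a.re ha).congr' ?_
  filter_upwards [Filter.eventually_gt_atTop 0] with t ht
  rw [norm_pow_mul_exp a n t ht]

/-- Integration by parts: the derivative of `t ^ (n + 1) * exp (-a * t)` has integral zero over
`(0, ∞)`, which relates the integrals for `n + 1` and `n`. -/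
lemma laplace_monomial (a : ℂ) (ha : 0 < a.re) (n : ℕ) :
    ∫ t in Set.Ioi (0 : ℝ), (t : ℂ) ^ n * Complex.exp (-a * t) =
      (n.factorial : ℂ) / a ^ (n + 1) := by
  have ha0 : a ≠ 0 := by
    rintro rfl
    simp at ha
  induction n with
  | zero =>
    have := integral_exp_mul_complex_Ioi (a := -a) (by simpa using ha) 0
    simp only [pow_zero, one_mul, this]
    simp
  | succ n ih =>
    have hderiv : ∀ t ∈ Set.Ici (0 : ℝ),
        HasDerivAt (fun t : ℝ => (t : ℂ) ^ (n + 1) * Complex.exp (-a * t))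
          (((n : ℂ) + 1) * ((t : ℂ) ^ n * Complex.exp (-a * t)) -
            a * ((t : ℂ) ^ (n + 1) * Complex.exp (-a * t))) t := by
      intro t _
      have h1 : HasDerivAt (fun z : ℂ => z ^ (n + 1) * Complex.exp (-a * z))
          ((((n + 1 : ℕ) : ℂ) * (t : ℂ) ^ n) * Complex.exp (-a * t) +
            (t : ℂ) ^ (n + 1) * (Complex.exp (-a * t) * (-a * 1))) (t : ℂ) :=
        (hasDerivAt_pow (n + 1) (t : ℂ)).mul (((hasDerivAt_id (t : ℂ)).const_mul (-a)).cexp)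
      convert h1.comp_ofReal using 1
      push_cast
      ring
    have i1 := (integrableOn_pow_mul_exp a ha n).const_mul ((n : ℂ) + 1)
    have i2 := (integrableOn_pow_mul_exp a ha (n + 1)).const_mul a
    have key := integral_Ioi_of_hasDerivAt_of_tendsto' hderiv (i1.sub i2)
      (tendsto_pow_mul_exp a ha (n + 1))
    rw [integral_sub i1 i2, integral_const_mul, integral_const_mul, ih] at key
    rw [eq_div_iff (pow_ne_zero _ ha0)]
    rw [Nat.factorial_succ]
    push_cast at key ⊢
    have h2 : a * ∫ t in Set.Ioi (0 : ℝ), (t : ℂ) ^ (n + 1) * Complex.exp (-a * t) =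
        ((n : ℂ) + 1) * ((n.factorial : ℂ) / a ^ (n + 1)) := by
      have h0 : ((0 : ℝ) : ℂ) ^ (n + 1) * Complex.exp (-a * (0 : ℝ)) = 0 := by simp
      push_cast at h0
      rw [h0] at key
      linear_combination -key
    rw [pow_succ _ (n + 1), mul_comm (a ^ (n + 1)) a, ← mul_assoc, mul_comm _ a, h2]
    field_simp

/-- inverse Laplace transform of `1/(s^{m+1}(1+s²)^{m+1})`.
If `α_j, β_j, γ_j` are the partial fraction coefficients of `1/(s^{m+1}(1+s²)^{m+1})`,
then `f_m(r) = Σ (r^j/j!)(α_j + β_j e^{-ir} + γ_j e^{ir})` is real-valued on `[0,∞)` and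
`∫_0^∞ f_m(t) e^{-st} dt = 1/(s^{m+1}(1+s²)^{m+1})` for every real `s > 0`. -/
theorem stmt3 (m : ℕ) (α β γ : Fin (m + 1) → ℂ)
    (hid : ∀ s : ℂ, s ≠ 0 → s ≠ I → s ≠ -I →
      1 / (s ^ (m + 1) * (1 + s ^ 2) ^ (m + 1)) =
        (∑ j, α j / s ^ (j.val + 1)) + (∑ j, β j / (s + I) ^ (j.val + 1)) +
          (∑ j, γ j / (s - I) ^ (j.val + 1))) :
    (∀ r : ℝ, 0 ≤ r → (fm m α β γ r).im = 0) ∧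
    (∀ s : ℝ, 0 < s →
      ∫ t in Set.Ioi (0 : ℝ), fm m α β γ t * Complex.exp (-(s : ℂ) * t) =
        1 / ((s : ℂ) ^ (m + 1) * (1 + (s : ℂ) ^ 2) ^ (m + 1))) := by
  constructor
  · intro r _
    -- Conjugating the expansion at `conj s` swaps the poles `i` and `-i`.
    have hconj : ∀ s : ℂ, s ≠ 0 → s ≠ I → s ≠ -I →
        1 / (s ^ (m + 1) * (1 + s ^ 2) ^ (m + 1)) =
        (∑ j, conj (α j) / s ^ (j.val + 1)) + (∑ j, conj (γ j) / (s + I) ^ (j.val + 1)) +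
          (∑ j, conj (β j) / (s - I) ^ (j.val + 1)) := by
      intro s h0 h1 h2
      have h := hid (conj s) (by simpa using h0)
        (fun h => h2 (by simpa using congrArg conj h))
        (fun h => h1 (by simpa using congrArg conj h))
      have h' := congrArg conj h
      simp only [map_add, map_sum, map_div₀, map_pow, map_mul, map_one, map_sub, conj_conj,
        conj_I, sub_neg_eq_add] at h'
      simp only [← sub_eq_add_neg] at h'
      rw [h']
      ring
    have hdiff : ∀ s : ℂ, s ≠ 0 → s ≠ -I → s ≠ I →
        (∑ j, (α j - conj (α j)) / (s - 0) ^ (j.val + 1)) +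
        (∑ j, (β j - conj (γ j)) / (s - -I) ^ (j.val + 1)) +
        (∑ j, (γ j - conj (β j)) / (s - I) ^ (j.val + 1)) = 0 := by
      intro s h0 h1 h2
      simp only [sub_div, Finset.sum_sub_distrib, sub_zero, sub_neg_eq_add]
      linear_combination hconj s h0 h2 h1 - hid s h0 h2 h1
    have hI : (I : ℂ) ≠ -I := fun h => by
      have := congrArg Complex.im h
      norm_num at this
    have hα : ∀ j, conj (α j) = α j := fun j =>
      (sub_eq_zero.mp (principal_parts_unique 0 (-I) I (by simp) (by simp [eq_comm])
        _ _ _ hdiff j)).symm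
    have hβ : ∀ j, conj (γ j) = β j := fun j =>
      (sub_eq_zero.mp (principal_parts_unique (-I) 0 I (by simp) hI.symm _ _ _
        (fun s h1 h2 h3 => (congrArg (· + _) (add_comm _ _)).trans (hdiff s h2 h1 h3)) j)).symm
    have hγ : ∀ j, conj (β j) = γ j := fun j => by rw [← hβ j, conj_conj]
    rw [← conj_eq_iff_im]
    simp only [fm, map_sum, map_mul, map_add, map_div₀, map_pow, conj_ofReal, map_natCast,
      ← Complex.exp_conj, map_neg, conj_I, neg_neg, hα, hβ, hγ]
    refine Finset.sum_congr rfl fun j _ => ?_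
    ring
  · intro s hs
    have r0 : 0 < (s : ℂ).re := by simpa using hs
    have r1 : 0 < ((s : ℂ) + I).re := by simpa using hs
    have r2 : 0 < ((s : ℂ) - I).re := by simpa using hs
    have i0 := fun j : Fin (m + 1) =>
      (integrableOn_pow_mul_exp _ r0 j.val).const_mul (α j / (j.val.factorial : ℂ))
    have i1 := fun j : Fin (m + 1) =>
      (integrableOn_pow_mul_exp _ r1 j.val).const_mul (β j / (j.val.factorial : ℂ))
    have i2 := fun j : Fin (m + 1) =>
      (integrableOn_pow_mul_exp _ r2 j.val).const_mul (γ j / (j.val.factorial : ℂ))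
    have hne : ∀ z : ℂ, z.re = 0 → (s : ℂ) ≠ z := by
      rintro z hz rfl
      simp at hz
      exact hs.ne' hz
    have hexpand : ∀ t : ℝ, fm m α β γ t * Complex.exp (-(s : ℂ) * t) =
        ∑ j : Fin (m + 1),
          ((α j / (j.val.factorial : ℂ)) * ((t : ℂ) ^ j.val * Complex.exp (-(s : ℂ) * t)) +
          (β j / (j.val.factorial : ℂ)) * ((t : ℂ) ^ j.val * Complex.exp (-((s : ℂ) + I) * t)) +
          (γ j / (j.val.factorial : ℂ)) *
            ((t : ℂ) ^ j.val * Complex.exp (-((s : ℂ) - I) * t))) := by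
      intro t
      have e1 : Complex.exp (-((s : ℂ) + I) * t) =
          Complex.exp (-I * t) * Complex.exp (-(s : ℂ) * t) := by
        rw [← Complex.exp_add]
        ring_nf
      have e2 : Complex.exp (-((s : ℂ) - I) * t) =
          Complex.exp (I * t) * Complex.exp (-(s : ℂ) * t) := by
        rw [← Complex.exp_add]
        ring_nf
      rw [fm, Finset.sum_mul]
      refine Finset.sum_congr rfl fun j _ => ?_
      rw [e1, e2]
      ring
    simp_rw [hexpand]
    rw [integral_finsetSum _ fun j _ => (i0 j).fun_add (i1 j) |>.fun_add (i2 j),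
      hid s (hne 0 (by simp)) (hne I (by simp)) (hne (-I) (by simp)),
      ← Finset.sum_add_distrib, ← Finset.sum_add_distrib]
    refine Finset.sum_congr rfl fun j _ => ?_
    have hf : (j.val.factorial : ℂ) ≠ 0 := by exact_mod_cast j.val.factorial_ne_zero
    rw [integral_add ((i0 j).fun_add (i1 j)) (i2 j), integral_add (i0 j) (i1 j),
      integral_const_mul, integral_const_mul, integral_const_mul,
      laplace_monomial _ r0, laplace_monomial _ r1, laplace_monomial _ r2]
    simp only [div_mul_div_comm, mul_div_mul_right _ _ hf,
      mul_comm (j.val.factorial : ℂ)]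
end
end

section
/- Let m ≥ 0 be an integer, let α_j, β_j, γ_j be the partial fraction coefficients of 1/(s^{m+1}(1+s²)^{m+1}), and let F_m be the entire function F_m(z) = Σ_{j=0}^m (z^j/j!)(α_j + β_j e^{−iz} + γ_j e^{iz}). Then: (i) F_m has a zero of order at least 3m+2 at z = 0, i.e. F_m^{(j)}(0) = 0 for all 0 ≤ j ≤ 3m+1 (so r ↦ r^{−3m−2} F_m(r) extends to a real-analytic function on ℝ); and (ii) there is a constant C_m > 0 such that |F_m(r)| ≤ C_m (1+r)^m for all real r ≥ 0, so that r^{−3m−2} F_m(r) = O(r^{−2m−2}) as r → ∞. -/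
/-!
The derivatives of `F_m` at `0` are the coefficients of the expansion at infinity of the rational
function `R(s) = 1/(s^(m+1) (1+s²)^(m+1))`: for `a ∈ {0, -i, i}`, the `k`-th derivative of
`z^j/j! · e^(az)` at `0` is `C(k,j) a^(k-j)`, which is also the coefficient of `s^(-k-1)` in
`1/(s-a)^(j+1)`. Since `R(s) = O(s^(-3m-3))`, the derivatives of order `k ≤ 3m+1` vanish.

This is carried out algebraically in the variable `X = 1/s`. After clearing denominators the
partial fraction identity becomes an identity of polynomials (`polynomial_identity`); dividing by
the unit `(1+X²)^(m+1)` of the ring of power series shows that the generating series of the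
derivatives is divisible by `X^(3m+2)` (`X_pow_dvd_series`).

The growth bound is the triangle inequality together with `|e^(±ir)| = 1` for real `r`.
-/

open Complex Filter Asymptotics

noncomputable section

/-- The entire function `F_m(z) = Σ_{j=0}^m (z^j/j!)(α_j + β_j e^{-iz} + γ_j e^{iz})` built
from partial fraction coefficients. -/
def Fm (m : ℕ) (α β γ : Fin (m + 1) → ℂ) (z : ℂ) : ℂ :=
  ∑ j, (z ^ j.val / (j.val.factorial : ℂ)) *
    (α j + β j * Complex.exp (-I * z) + γ j * Complex.exp (I * z))

/-- The power series `X^j / (1 - aX)^(j+1) = ∑ₙ C(n,j) a^(n-j) Xⁿ`, that is, the expansion of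
`s / (s - a)^(j+1)` at infinity in the variable `X = 1/s`. -/
def expSeries (a : ℂ) (j : ℕ) : PowerSeries ℂ :=
  PowerSeries.mk fun n => (n.choose j : ℂ) * a ^ (n - j)

lemma expSeries_zero (a : ℂ) :
    (1 - PowerSeries.C a * PowerSeries.X) * expSeries a 0 = 1 := by
  ext n
  rw [sub_mul, one_mul, mul_assoc, map_sub, PowerSeries.coeff_C_mul]
  cases n with
  | zero => simp [expSeries]
  | succ n => simp [expSeries, PowerSeries.coeff_succ_X_mul, PowerSeries.coeff_one, pow_succ']

/-- Pascal's rule, written for generating functions. -/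
lemma expSeries_succ (a : ℂ) (j : ℕ) :
    (1 - PowerSeries.C a * PowerSeries.X) * expSeries a (j + 1)
      = PowerSeries.X * expSeries a j := by
  ext n
  rw [sub_mul, one_mul, mul_assoc, map_sub, PowerSeries.coeff_C_mul]
  cases n with
  | zero => simp [expSeries]
  | succ n =>
    simp only [expSeries, PowerSeries.coeff_succ_X_mul, PowerSeries.coeff_mk]
    rw [Nat.choose_succ_succ, Nat.add_sub_add_right]
    rcases Nat.lt_or_ge n (j + 1) with h | h
    · rw [Nat.choose_eq_zero_of_lt h]
      simp
    · obtain ⟨d, rfl⟩ := Nat.exists_eq_add_of_le h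
      rw [show j + 1 + d - j = d + 1 by lia, show j + 1 + d - (j + 1) = d by lia]
      push_cast
      ring

lemma expSeries_spec (a : ℂ) (j : ℕ) :
    (1 - PowerSeries.C a * PowerSeries.X) ^ (j + 1) * expSeries a j = PowerSeries.X ^ j := by
  induction j with
  | zero => simpa using expSeries_zero a
  | succ j ih =>
    rw [pow_succ, mul_assoc, expSeries_succ, mul_left_comm, ih, pow_succ']

lemma iteratedDeriv_exp_mul (a : ℂ) (j k : ℕ) :
    iteratedDeriv k (fun z : ℂ => z ^ j / (j.factorial : ℂ) * Complex.exp (a * z)) 0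
      = (k.choose j : ℂ) * a ^ (k - j) := by
  have h1 : ContDiffAt ℂ k (fun z : ℂ => z ^ j / (j.factorial : ℂ)) 0 := by fun_prop
  have h2 : ContDiffAt ℂ k (fun z : ℂ => Complex.exp (a * z)) 0 := by fun_prop
  have h3 : ∀ i, iteratedDeriv i (fun z : ℂ => z ^ j / (j.factorial : ℂ)) 0
      = if i = j then 1 else 0 := by
    intro i
    have hf : (j.factorial : ℂ) ≠ 0 := by exact_mod_cast j.factorial_ne_zero
    simp only [div_eq_mul_inv]
    rw [iteratedDeriv_mul_const_field, iteratedDeriv_pow]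
    rcases lt_trichotomy i j with h | rfl | h
    · simp [h.ne, (Nat.sub_pos_of_lt h).ne']
    · simp [Nat.descFactorial_self, hf]
    · simp [h.ne', Nat.descFactorial_of_lt h]
  have h4 : ∀ i, iteratedDeriv i (fun z : ℂ => Complex.exp (a * z)) 0 = a ^ i := by
    intro i
    rw [iteratedDeriv_cexp_const_mul]
    simp
  rw [iteratedDeriv_fun_mul h1 h2]
  simp only [h3, h4]
  simp only [mul_ite, mul_one, mul_zero, ite_mul, zero_mul, Finset.sum_ite_eq', Finset.mem_range]
  split_ifs with h
  · rfl
  · rw [Nat.choose_eq_zero_of_lt (by lia)]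
    simp

lemma iteratedDeriv_Fm (m : ℕ) (α β γ : Fin (m + 1) → ℂ) (k : ℕ) :
    iteratedDeriv k (Fm m α β γ) 0 = PowerSeries.coeff k
      (∑ j : Fin (m + 1), (PowerSeries.C (α j) * expSeries 0 j
        + PowerSeries.C (β j) * expSeries (-I) j + PowerSeries.C (γ j) * expSeries I j)) := by
  have hF : Fm m α β γ = fun z => ∑ j : Fin (m + 1),
      (α j * (z ^ j.val / (j.val.factorial : ℂ) * Complex.exp (0 * z))
      + β j * (z ^ j.val / (j.val.factorial : ℂ) * Complex.exp (-I * z))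
      + γ j * (z ^ j.val / (j.val.factorial : ℂ) * Complex.exp (I * z))) := by
    funext z
    refine Finset.sum_congr rfl fun j _ => ?_
    rw [zero_mul, Complex.exp_zero]
    ring
  rw [hF, iteratedDeriv_fun_sum (fun j _ => by fun_prop), map_sum]
  refine Finset.sum_congr rfl fun j _ => ?_
  rw [iteratedDeriv_fun_add (by fun_prop) (by fun_prop),
    iteratedDeriv_fun_add (by fun_prop) (by fun_prop)]
  simp only [iteratedDeriv_const_mul_field, iteratedDeriv_exp_mul, map_add,
    PowerSeries.coeff_C_mul, expSeries, PowerSeries.coeff_mk]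

open Polynomial in
/-- The partial fraction identity in the variable `X = 1/s`, with denominators cleared. -/
lemma polynomial_identity (m : ℕ) (α β γ : Fin (m + 1) → ℂ)
    (hid : ∀ s : ℂ, s ≠ 0 → s ≠ I → s ≠ -I →
      1 / (s ^ (m + 1) * (1 + s ^ 2) ^ (m + 1)) =
        (∑ j, α j / s ^ (j.val + 1)) + (∑ j, β j / (s + I) ^ (j.val + 1)) +
          (∑ j, γ j / (s - I) ^ (j.val + 1))) :
    (∑ j : Fin (m + 1),
      (C (α j) * (X ^ j.val * ((1 - C (-I) * X) ^ (m + 1) * (1 - C I * X) ^ (m + 1)))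
      + C (β j) * (X ^ j.val * ((1 - C (-I) * X) ^ (m - j.val) * (1 - C I * X) ^ (m + 1)))
      + C (γ j) * (X ^ j.val * ((1 - C (-I) * X) ^ (m + 1) * (1 - C I * X) ^ (m - j.val)))))
      = (X ^ (3 * m + 2) : ℂ[X]) := by
  -- Two polynomials that agree off the finite set `{0, I, -I}` are equal.
  refine Polynomial.eq_of_infinite_eval_eq _ _
    (Set.Infinite.mono ?_ (Set.Finite.infinite_compl (Set.toFinite {0, I, -I})))
  intro w hw
  simp only [Set.mem_compl_iff, Set.mem_insert_iff, Set.mem_singleton_iff, not_or] at hw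
  obtain ⟨h0, hI, hnI⟩ := hw
  have hp : 1 + I * w ≠ 0 := fun h => hI (by linear_combination (-I) * h + w * I_sq)
  have hm : 1 - I * w ≠ 0 := fun h => hnI (by linear_combination I * h + w * I_sq)
  have key := hid w⁻¹ (inv_ne_zero h0)
    (fun h => hnI (by rw [← inv_inv w, h, inv_I]))
    (fun h => hI (by rw [← inv_inv w, h, inv_neg, inv_I, neg_neg]))
  have e1 : w⁻¹ + I = (1 + I * w) / w := by field_simp
  have e2 : w⁻¹ - I = (1 - I * w) / w := by field_simp
  have e3 : 1 + w⁻¹ ^ 2 = (1 + I * w) * (1 - I * w) / w ^ 2 := by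
    field_simp
    linear_combination w ^ 2 * I_sq
  rw [e1, e2, e3, ← Finset.sum_add_distrib, ← Finset.sum_add_distrib] at key
  have key2 := congrArg
    (fun t => t * ((1 + I * w) ^ (m + 1) * (1 - I * w) ^ (m + 1)) / w) key
  simp only [Finset.sum_mul, Finset.sum_div] at key2
  simp only [Set.mem_ofPred_eq, eval_finsetSum, eval_add, eval_mul, eval_C, eval_pow, eval_sub,
    eval_one, eval_X, neg_mul, sub_neg_eq_add]
  have e4 : 1 / (w⁻¹ ^ (m + 1) * ((1 + I * w) * (1 - I * w) / w ^ 2) ^ (m + 1)) *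
      ((1 + I * w) ^ (m + 1) * (1 - I * w) ^ (m + 1)) / w = w ^ (3 * m + 2) := by
    rw [div_pow, mul_pow, inv_pow]
    field_simp
    ring
  rw [← e4, key2]
  refine Finset.sum_congr rfl fun j _ => ?_
  obtain ⟨d, hd⟩ := Nat.exists_eq_add_of_le (Nat.lt_succ_iff.mp j.isLt)
  have hpow : ∀ x : ℂ, x ^ (m + 1) = x ^ (j.val + 1) * x ^ d := fun x => by
    rw [← pow_add]
    congr 1
    lia
  simp only [show m - j.val = d by lia, hpow, div_pow, inv_pow]
  field_simp
  ring

/-- The expansion at infinity starts at order `s^(-3m-3)`: the generating series of the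
derivatives of `F_m` at `0` is `X^(3m+2)` divided by the unit `(1 + X²)^(m+1)`. -/
lemma X_pow_dvd_series (m : ℕ) (α β γ : Fin (m + 1) → ℂ)
    (hid : ∀ s : ℂ, s ≠ 0 → s ≠ I → s ≠ -I →
      1 / (s ^ (m + 1) * (1 + s ^ 2) ^ (m + 1)) =
        (∑ j, α j / s ^ (j.val + 1)) + (∑ j, β j / (s + I) ^ (j.val + 1)) +
          (∑ j, γ j / (s - I) ^ (j.val + 1))) :
    (PowerSeries.X : PowerSeries ℂ) ^ (3 * m + 2) ∣
      ∑ j : Fin (m + 1), (PowerSeries.C (α j) * expSeries 0 j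
        + PowerSeries.C (β j) * expSeries (-I) j + PowerSeries.C (γ j) * expSeries I j) := by
  have hP := congrArg (Polynomial.coeToPowerSeries.ringHom (R := ℂ))
    (polynomial_identity m α β γ hid)
  simp only [map_sum, map_add, map_mul, map_pow, map_sub, map_one,
    Polynomial.coeToPowerSeries.ringHom_apply, Polynomial.coe_C, Polynomial.coe_X] at hP
  have hu : ∀ a : ℂ, IsUnit (1 - PowerSeries.C a * PowerSeries.X : PowerSeries ℂ) := fun a =>
    IsUnit.of_mul_eq_one _ (expSeries_zero a)
  have hU := ((hu (-I)).pow (m + 1)).mul ((hu I).pow (m + 1))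
  rw [← hU.dvd_mul_left, ← hP, Finset.mul_sum]
  refine dvd_of_eq (Finset.sum_congr rfl fun j _ => ?_)
  obtain ⟨d, hd⟩ := Nat.exists_eq_add_of_le (Nat.lt_succ_iff.mp j.isLt)
  have s0 : expSeries 0 j = PowerSeries.X ^ j.val := by
    simpa using expSeries_spec 0 j
  have hpow : ∀ x : PowerSeries ℂ, x ^ (m + 1) = x ^ (j.val + 1) * x ^ d := fun x => by
    rw [← pow_add]
    congr 1
    lia
  simp only [show m - j.val = d by lia, hpow, s0]
  linear_combination
    (-PowerSeries.C (β j) * (1 - PowerSeries.C (-I) * PowerSeries.X) ^ d *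
      ((1 - PowerSeries.C I * PowerSeries.X) ^ (j.val + 1) *
        (1 - PowerSeries.C I * PowerSeries.X) ^ d)) * expSeries_spec (-I) j
    + (-PowerSeries.C (γ j) * (1 - PowerSeries.C I * PowerSeries.X) ^ d *
      ((1 - PowerSeries.C (-I) * PowerSeries.X) ^ (j.val + 1) *
        (1 - PowerSeries.C (-I) * PowerSeries.X) ^ d)) * expSeries_spec I j

lemma norm_Fm_le (m : ℕ) (α β γ : Fin (m + 1) → ℂ) (r : ℝ) (hr : 0 ≤ r) :
    ‖Fm m α β γ r‖ ≤ ((∑ j, (‖α j‖ + ‖β j‖ + ‖γ j‖)) + 1) * (1 + r) ^ m := by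
  have h1 : ‖Fm m α β γ r‖ ≤ ∑ j, (1 + r) ^ m * (‖α j‖ + ‖β j‖ + ‖γ j‖) := by
    refine norm_sum_le_of_le _ fun j _ => ?_
    rw [norm_mul]
    refine mul_le_mul ?_ ?_ (norm_nonneg _) (by positivity)
    · rw [norm_div, norm_pow, Complex.norm_real, Real.norm_of_nonneg hr, Complex.norm_natCast]
      have hf : (1 : ℝ) ≤ (j.val.factorial : ℝ) := by
        exact_mod_cast Nat.one_le_iff_ne_zero.mpr j.val.factorial_ne_zero
      calc r ^ j.val / (j.val.factorial : ℝ) ≤ r ^ j.val := div_le_self (by positivity) hf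
        _ ≤ (1 + r) ^ j.val := by gcongr; linarith
        _ ≤ (1 + r) ^ m := pow_le_pow_right₀ (by linarith) (Nat.lt_succ_iff.mp j.isLt)
    · have e1 : ‖Complex.exp (-I * r)‖ = 1 := by simp [Complex.norm_exp]
      have e2 : ‖Complex.exp (I * r)‖ = 1 := by simp [Complex.norm_exp]
      refine (norm_add₃_le).trans ?_
      rw [norm_mul, norm_mul, e1, e2, mul_one, mul_one]
  rw [← Finset.mul_sum] at h1
  have : 0 ≤ (1 + r) ^ m := by positivity
  linarith

/-- If `α_j, β_j, γ_j` are the partial fraction coefficients of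
`1/(s^{m+1}(1+s²)^{m+1})` and `F_m(z) = Σ (z^j/j!)(α_j + β_j e^{-iz} + γ_j e^{iz})`, then
(i) `F_m` has a zero of order at least `3m+2` at `0`, i.e. `F_m^{(j)}(0) = 0` for
`0 ≤ j ≤ 3m+1`; and (ii) there is `C_m > 0` with `|F_m(r)| ≤ C_m (1+r)^m` for all real
`r ≥ 0`, so that `r^{-3m-2} F_m(r) = O(r^{-2m-2})` as `r → ∞`. -/
theorem stmt4 (m : ℕ) (α β γ : Fin (m + 1) → ℂ)
    (hid : ∀ s : ℂ, s ≠ 0 → s ≠ I → s ≠ -I →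
      1 / (s ^ (m + 1) * (1 + s ^ 2) ^ (m + 1)) =
        (∑ j, α j / s ^ (j.val + 1)) + (∑ j, β j / (s + I) ^ (j.val + 1)) +
          (∑ j, γ j / (s - I) ^ (j.val + 1))) :
    (∀ j : ℕ, j ≤ 3 * m + 1 → iteratedDeriv j (Fm m α β γ) 0 = 0) ∧
    (∃ Cm : ℝ, 0 < Cm ∧ ∀ r : ℝ, 0 ≤ r → ‖Fm m α β γ r‖ ≤ Cm * (1 + r) ^ m) ∧
    (fun r : ℝ => Fm m α β γ r / (r : ℂ) ^ (3 * m + 2)) =O[atTop]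
      (fun r : ℝ => (r ^ (2 * m + 2))⁻¹) := by
  refine ⟨fun k hk => ?_, ⟨_, by positivity, norm_Fm_le m α β γ⟩, ?_⟩
  · rw [iteratedDeriv_Fm]
    exact PowerSeries.X_pow_dvd_iff.mp (X_pow_dvd_series m α β γ hid) k (by lia)
  · refine IsBigO.of_bound (((∑ j, (‖α j‖ + ‖β j‖ + ‖γ j‖)) + 1) * 2 ^ m) ?_
    filter_upwards [eventually_ge_atTop 1] with r hr
    have hr0 : 0 < r := by linarith
    have hC : 0 ≤ (∑ j, (‖α j‖ + ‖β j‖ + ‖γ j‖)) + 1 := by positivity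
    rw [norm_div, norm_pow, Complex.norm_real, Real.norm_of_nonneg hr0.le,
      Real.norm_of_nonneg (by positivity), div_le_iff₀ (by positivity)]
    calc ‖Fm m α β γ r‖ ≤ ((∑ j, (‖α j‖ + ‖β j‖ + ‖γ j‖)) + 1) * (1 + r) ^ m :=
          norm_Fm_le m α β γ r hr0.le
      _ ≤ ((∑ j, (‖α j‖ + ‖β j‖ + ‖γ j‖)) + 1) * (2 * r) ^ m := by gcongr; linarith
      _ = _ := by
        rw [show 3 * m + 2 = (2 * m + 2) + m by ring, pow_add r (2 * m + 2) m, mul_pow]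
        field_simp
end
end

section
/- Let k ≥ 1 be an integer and let Φ_{1,k} : ℝ → ℝ be the Wendland function of smoothness parameter k in dimension d = 1. Then there exist constants B_k > 0 and C ∈ ℝ and a function h ∈ L¹(ℝ) such that for all x ∈ ℝ ∖ {0}: x^{2k+2} Φ̂_{1,k}(x) = B_k ( 1/k! + ((−1)^{k+1}/(k!·2^k)) cos(x) + C·sin(x)/x + ĥ(x) ), where Φ̂_{1,k} and ĥ denote Fourier transforms. -/
/-! On `[0, 1]` the function `Φ_{1,k}` is a polynomial `Q`, and its Fourier transform is
`2 (2π)^{-1/2} ∫₀¹ cos (ωx) Q(x) dx`. Since `(Iφ)' = -r φ`, each application of `I` raises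
the order of vanishing at `1` by one, and shifts the derivatives at `0` by two orders up to explicit
factors. Hence
`Q^{(i)}(1) = 0` for `i ≤ 2k`, all odd derivatives of `Q` at `0` below order `2k+1` vanish, and
`Q^{(2k+1)}(1) = -(k+1)!`, `Q^{(2k+1)}(0) = (-1)^{k+1} (k+1) 2^k k!`
(`exists_polynomial_iterate_Iop`).

Integrating by parts `2k+2` times (`sq_mul_cosInt`, `pow_mul_cosInt`) leaves only the two boundary
terms of order `2k+1`, which produce the constant and the `cos x` term, and the cosine integral of
`Q^{(2k+2)}`, which is the Fourier transform of a bounded function supported in `[-1, 1]`. The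
ratio of the boundary terms is the one claimed, with `B = 2 (k+1) 2^k (k!)² / √(2π)`, and no
`sin x / x` term is needed: `C = 0`. -/

open MeasureTheory Complex

noncomputable section

/-- The truncated power `φ_l(r) = (1-r)_+^l`. -/
def phiTrunc (l : ℕ) (r : ℝ) : ℝ := (max (1 - r) 0) ^ l

/-- Wendland's integral operator `(Iφ)(r) = ∫_r^∞ t φ(t) dt`. -/
def Iop (φ : ℝ → ℝ) (r : ℝ) : ℝ := ∫ t in Set.Ioi r, t * φ t

/-- The one-dimensional Wendland function `Φ_{1,k}(x) = (I^k φ_{k+1})(|x|)`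
(here `l = ⌊1/2⌋ + k + 1 = k + 1`). -/
def wendland1 (k : ℕ) (x : ℝ) : ℝ := (Iop^[k] (phiTrunc (k + 1))) |x|

/-- The Fourier transform on `ℝ` with the convention
`f̂(ω) = (2π)^{-1/2} ∫ f(x) e^{-ixω} dx`. -/
def fourier1 (f : ℝ → ℝ) (ω : ℝ) : ℂ :=
  ((Real.sqrt (2 * Real.pi))⁻¹ : ℝ) *
    ∫ x : ℝ, Complex.exp (-(Complex.I * x * ω)) * (f x : ℂ)

open Polynomial

/-! ### The polynomial piece of the Wendland function -/

/-- The function equal to the polynomial `Q` on `(-∞, 1]` and to `0` on `(1, ∞)`. -/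
def cutPoly (Q : ℝ[X]) (r : ℝ) : ℝ := if r ≤ 1 then Q.eval r else 0

lemma exists_derivative_eq (p : ℝ[X]) : ∃ A : ℝ[X], derivative A = p := by
  induction p using Polynomial.induction_on' with
  | add p q hp hq =>
    obtain ⟨A, rfl⟩ := hp
    obtain ⟨B, rfl⟩ := hq
    exact ⟨A + B, by simp⟩
  | monomial n a =>
    refine ⟨monomial (n + 1) (a / (n + 1)), ?_⟩
    rw [derivative_monomial]
    have : (n : ℝ) + 1 ≠ 0 := by positivity
    simp [this]

/-- `I` maps cut-off polynomials to cut-off polynomials. -/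
lemma exists_Iop_cutPoly (Q : ℝ[X]) :
    ∃ A : ℝ[X], derivative A = -(X * Q) ∧ A.eval 1 = 0 ∧ Iop (cutPoly Q) = cutPoly A := by
  obtain ⟨A, hA⟩ := exists_derivative_eq (-(X * Q))
  refine ⟨A - C (A.eval 1), by simp [hA], by simp, ?_⟩
  funext r
  have h1 : (fun t : ℝ => t * cutPoly Q t) =
      (Set.Iic 1).indicator (fun t => t * Q.eval t) := by
    funext t
    by_cases ht : t ≤ 1 <;> simp [cutPoly, Set.indicator, ht]
  rw [Iop, h1, setIntegral_indicator measurableSet_Iic, Set.Ioi_inter_Iic, cutPoly]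
  split_ifs with hr
  · rw [← intervalIntegral.integral_of_le hr]
    have h2 : ∀ t ∈ Set.uIcc r 1, HasDerivAt (fun t => -A.eval t) (t * Q.eval t) t := by
      intro t _
      have := (A.hasDerivAt t).neg
      rw [hA] at this
      refine this.congr_deriv ?_
      simp
    rw [intervalIntegral.integral_eq_sub_of_hasDerivAt h2
      (Continuous.intervalIntegrable (by fun_prop) _ _)]
    simp
    ring
  · rw [Set.Ioc_eq_empty (by linarith)]
    simp

/-- The derivatives at `0` and `1` of the polynomial piece of `I^j φ_l` that enter the repeated
integration by parts. -/
lemma exists_polynomial_iterate_Iop (l : ℕ) (hl : 1 ≤ l) (j : ℕ) :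
    ∃ Q : ℝ[X], Iop^[j] (phiTrunc l) = cutPoly Q ∧
      (∀ i < l + j, (derivative^[i] Q).eval 1 = 0) ∧
      (derivative^[l + j] Q).eval 1 = (-1) ^ (l + j) * l.factorial ∧
      (∀ i < j, (derivative^[2 * i + 1] Q).eval 0 = 0) ∧
      (derivative^[2 * j + 1] Q).eval 0 = (-1) ^ (j + 1) * (l * 2 ^ j * j.factorial) := by
  induction j with
  | zero =>
    have hd : ∀ i, derivative^[i] ((1 - X : ℝ[X]) ^ l) =
        (-1) ^ i * (l.descFactorial i : ℝ[X]) * (1 - X) ^ (l - i) := by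
      intro i
      induction i with
      | zero => simp
      | succ i ih =>
        rw [Function.iterate_succ_apply', ih, Nat.descFactorial_succ]
        have e : ((-1 : ℝ[X]) ^ i * (l.descFactorial i : ℝ[X])) =
            C ((-1) ^ i * (l.descFactorial i : ℝ)) := by simp
        rw [e, derivative_C_mul, derivative_pow, ← e]
        simp only [derivative_sub, derivative_one, derivative_X, Nat.sub_sub, C_eq_natCast]
        push_cast
        ring
    refine ⟨(1 - X) ^ l, ?_, ?_, ?_, ?_, ?_⟩
    · funext r
      simp only [Function.iterate_zero, id, phiTrunc, cutPoly]
      split_ifs with hr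
      · rw [max_eq_left (by linarith)]
        simp
      · rw [max_eq_right (by linarith), zero_pow (by omega)]
    · intro i hi
      rw [hd]
      simp [show l - i ≠ 0 by omega]
    · rw [add_zero, hd]
      simp [Nat.descFactorial_self]
    · intro i hi
      omega
    · simp [derivative_pow]
  | succ j ih =>
    obtain ⟨Q, hQ, h1, h1', h0, h0'⟩ := ih
    obtain ⟨A, hA, hA1, hIA⟩ := exists_Iop_cutPoly Q
    have hd : ∀ i, derivative^[i + 1] A =
        -(X * derivative^[i] Q + i • derivative^[i - 1] Q) := by
      intro i
      rw [Function.iterate_succ_apply, hA, iterate_derivative_neg, mul_comm X Q,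
        iterate_derivative_mul_X, mul_comm X]
    refine ⟨A, ?_, ?_, ?_, ?_, ?_⟩
    · rw [Function.iterate_succ_apply', hQ, hIA]
    · intro i hi
      rcases i with _ | i
      · simpa using hA1
      · rw [hd]
        simp [h1 i (by omega), h1 (i - 1) (by omega)]
    · rw [← add_assoc, hd]
      simp only [eval_neg, eval_add, eval_mul, eval_X, eval_smul, h1', h1 (l + j - 1) (by omega)]
      simp only [smul_zero]
      ring
    · intro i hi
      rcases i with _ | i
      · rw [mul_zero, hd]
        simp
      · rw [hd, show 2 * (i + 1) - 1 = 2 * i + 1 by omega]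
        simp only [eval_neg, eval_add, eval_mul, eval_X, eval_smul, h0 i (by omega)]
        simp
    · rw [hd, show 2 * (j + 1) - 1 = 2 * j + 1 by omega]
      simp only [eval_neg, eval_add, eval_mul, eval_X, eval_smul, h0', Nat.factorial_succ]
      simp only [nsmul_eq_mul]
      push_cast
      ring

/-! ### Integration by parts for cosine integrals -/

/-- The cosine integral `∫₀¹ cos (ωx) Q(x) dx` of a polynomial. -/
def cosInt (Q : ℝ[X]) (ω : ℝ) : ℝ := ∫ x in (0 : ℝ)..1, Real.cos (ω * x) * Q.eval x

lemma sq_mul_cosInt (Q : ℝ[X]) (ω : ℝ) :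
    ω ^ 2 * cosInt Q ω = ω * Real.sin ω * Q.eval 1 + Real.cos ω * (derivative Q).eval 1
      - (derivative Q).eval 0 - cosInt (derivative (derivative Q)) ω := by
  -- An antiderivative of `cos (ωx) (ω² Q + Q'')`.
  have h : ∀ x ∈ Set.uIcc (0 : ℝ) 1, HasDerivAt
      (fun x => ω * Real.sin (ω * x) * Q.eval x + Real.cos (ω * x) * (derivative Q).eval x)
      (ω ^ 2 * (Real.cos (ω * x) * Q.eval x) +
        Real.cos (ω * x) * (derivative (derivative Q)).eval x) x := by
    intro x _
    have hx : HasDerivAt (fun x => ω * x) ω x := by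
      simpa using (hasDerivAt_id x).const_mul ω
    have := ((hx.sin.const_mul ω).mul (Q.hasDerivAt x)).add
      (hx.cos.mul ((derivative Q).hasDerivAt x))
    refine this.congr_deriv ?_
    ring
  have key := intervalIntegral.integral_eq_sub_of_hasDerivAt h
    (Continuous.intervalIntegrable (by fun_prop) _ _)
  rw [intervalIntegral.integral_add (Continuous.intervalIntegrable (by fun_prop) _ _)
    (Continuous.intervalIntegrable (by fun_prop) _ _), intervalIntegral.integral_const_mul] at key
  simp only [mul_one, mul_zero, Real.sin_zero, Real.cos_zero, zero_mul, one_mul, zero_add] at key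
  unfold cosInt
  linarith

lemma pow_mul_cosInt (Q : ℝ[X]) (ω : ℝ) (k : ℕ)
    (h1 : ∀ i < 2 * k, (derivative^[i] Q).eval 1 = 0)
    (h0 : ∀ i < k, (derivative^[2 * i + 1] Q).eval 0 = 0) :
    ω ^ (2 * k) * cosInt Q ω = (-1) ^ k * cosInt (derivative^[2 * k] Q) ω := by
  induction k with
  | zero => simp
  | succ k ih =>
    have e := sq_mul_cosInt (derivative^[2 * k] Q) ω
    simp only [← Function.iterate_succ_apply' (f := derivative)] at e
    rw [h1 (2 * k) (by omega), h1 (2 * k + 1) (by omega), h0 k (by omega)] at e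
    have ih' := ih (fun i hi => h1 i (by omega)) (fun i hi => h0 i (by omega))
    rw [show 2 * (k + 1) = 2 * k + 1 + 1 by ring]
    calc ω ^ (2 * k + 1 + 1) * cosInt Q ω = ω ^ 2 * (ω ^ (2 * k) * cosInt Q ω) := by ring
      _ = (-1) ^ k * (ω ^ 2 * cosInt (derivative^[2 * k] Q) ω) := by rw [ih']; ring
      _ = _ := by rw [e]; ring

/-! ### Fourier transforms of even cut-off polynomials -/

lemma cutPoly_abs_eq (Q : ℝ[X]) :
    (fun x : ℝ => cutPoly Q |x|) = (Set.Icc (-1) 1).indicator (fun x => Q.eval |x|) := by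
  funext x
  simp [cutPoly, Set.indicator, abs_le]

lemma integrable_cutPoly_abs (Q : ℝ[X]) : Integrable (fun x : ℝ => cutPoly Q |x|) := by
  rw [cutPoly_abs_eq, integrable_indicator_iff measurableSet_Icc]
  exact Continuous.integrableOn_Icc (by fun_prop)

lemma fourier1_cutPoly (Q : ℝ[X]) (ω : ℝ) :
    fourier1 (fun x => cutPoly Q |x|) ω =
      (((Real.sqrt (2 * Real.pi))⁻¹ * (2 * cosInt Q ω) : ℝ) : ℂ) := by
  set G : ℝ → ℂ := fun x => Complex.exp (-(Complex.I * x * ω)) * (cutPoly Q |x| : ℂ) with hG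
  have hGi : Integrable G := by
    refine (integrable_cutPoly_abs Q).ofReal.bdd_mul (c := 1)
      (Continuous.aestronglyMeasurable (by fun_prop)) (Filter.Eventually.of_forall fun x => ?_)
    rw [show -(Complex.I * x * ω) = ((-(x * ω) : ℝ) : ℂ) * Complex.I by push_cast; ring,
      Complex.norm_exp_ofReal_mul_I]
  -- Symmetrising in `x` replaces the exponential by the cosine.
  have hsym : (∫ x, G x) + ∫ x, G x = ((2 * (2 * cosInt Q ω) : ℝ) : ℂ) := by
    nth_rw 2 [← integral_neg_eq_self G]
    rw [← integral_add hGi hGi.comp_neg]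
    have e : ∀ x : ℝ, G x + G (-x) = ((2 * (Real.cos (ω * |x|) * cutPoly Q |x|) : ℝ) : ℂ) := by
      intro x
      have hc : Real.cos (ω * |x|) = Real.cos (ω * x) := by
        rcases abs_choice x with h | h <;> simp [h]
      rw [hc]
      simp only [hG, abs_neg]
      push_cast
      rw [Complex.cos]
      ring_nf
    simp_rw [e]
    rw [integral_complex_ofReal, integral_const_mul,
      integral_comp_abs (f := fun x => Real.cos (ω * x) * cutPoly Q x)]
    have e2 : (fun x => Real.cos (ω * x) * cutPoly Q x) =
        (Set.Iic 1).indicator (fun x => Real.cos (ω * x) * Q.eval x) := by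
      funext x
      by_cases hx : x ≤ 1 <;> simp [cutPoly, Set.indicator, hx]
    rw [e2, setIntegral_indicator measurableSet_Iic, Set.Ioi_inter_Iic,
      ← intervalIntegral.integral_of_le zero_le_one, cosInt]
  have hGe : ∫ x, G x = ((2 * cosInt Q ω : ℝ) : ℂ) := by
    push_cast at hsym ⊢
    linear_combination hsym / 2
  rw [fourier1]
  change _ * ∫ x, G x = _
  rw [hGe]
  push_cast
  ring

lemma cosInt_C_mul (c : ℝ) (Q : ℝ[X]) (ω : ℝ) : cosInt (C c * Q) ω = c * cosInt Q ω := by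
  rw [cosInt, cosInt, ← intervalIntegral.integral_const_mul]
  simp only [eval_mul, eval_C]
  congr 1
  funext x
  ring

/-- decomposition of `x^{2k+2} Φ̂_{1,k}(x)`.
For `k ≥ 1` there are `B_k > 0`, `C ∈ ℝ` and `h ∈ L¹(ℝ)` with
`x^{2k+2} Φ̂_{1,k}(x) = B_k (1/k! + ((-1)^{k+1}/(k! 2^k)) cos x + C sin(x)/x + ĥ(x))`
for all `x ≠ 0`. -/
theorem stmt5 (k : ℕ) (hk : 1 ≤ k) :
    ∃ (B C : ℝ) (h : ℝ → ℝ), 0 < B ∧ Integrable h volume ∧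
      ∀ x : ℝ, x ≠ 0 →
        (x : ℂ) ^ (2 * k + 2) * fourier1 (wendland1 k) x =
          (B : ℂ) * (((k.factorial : ℝ)⁻¹ : ℝ) +
            (((-1 : ℝ) ^ (k + 1) / (k.factorial * 2 ^ k) : ℝ) : ℂ) * (Real.cos x : ℂ) +
            (C : ℂ) * ((Real.sin x : ℂ) / (x : ℂ)) + fourier1 h x) := by
  obtain ⟨Q, hQ, h1, h1', h0, h0'⟩ := exists_polynomial_iterate_Iop (k + 1) (by omega) k
  set s : ℝ := (Real.sqrt (2 * Real.pi))⁻¹ with hs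
  have hs0 : 0 < s := by positivity
  set B : ℝ := s * (2 * ((k + 1) * 2 ^ k * k.factorial ^ 2)) with hB
  have hB0 : 0 < B := by positivity
  have hf : (0 : ℝ) < k.factorial := by positivity
  set R : ℝ[X] := derivative^[2 * k + 2] Q with hR
  refine ⟨B, 0, fun x => cutPoly (C ((-1) ^ (k + 1) / B) * R) |x|, hB0,
    integrable_cutPoly_abs _, fun x _ => ?_⟩
  have hW : wendland1 k = fun x => cutPoly Q |x| := by
    funext x
    rw [wendland1, hQ]
  rw [hW, fourier1_cutPoly, fourier1_cutPoly, cosInt_C_mul]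
  have e1 := pow_mul_cosInt Q x k (fun i hi => h1 i (by omega)) h0
  have e2 := sq_mul_cosInt (derivative^[2 * k] Q) x
  simp only [← Function.iterate_succ_apply' (f := derivative)] at e2
  rw [show k + 1 + k = 2 * k + 1 by ring] at h1'
  rw [h1 (2 * k) (by omega), h1', h0'] at e2
  have hsgn : ((-1 : ℝ) ^ k) * (-1) ^ k = 1 := by
    rw [← mul_pow]; simp
  have hfac : ((k + 1).factorial : ℝ) = (k + 1) * k.factorial := by
    push_cast [Nat.factorial_succ]; ring
  -- The claimed identity is the complexification of this real one.
  have key : x ^ (2 * k + 2) * (s * (2 * cosInt Q x)) =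
      B * ((k.factorial : ℝ)⁻¹ + (-1) ^ (k + 1) / (k.factorial * 2 ^ k) * Real.cos x +
        0 * (Real.sin x / x) + s * (2 * ((-1) ^ (k + 1) / B * cosInt R x))) := by
    have hm : (-1 : ℝ) ^ (2 * k + 1) = -1 := by simp [pow_succ, pow_mul]
    have e3 : x ^ (2 * k + 2) * cosInt Q x = (k + 1) * 2 ^ k * k.factorial
        + (-1) ^ (k + 1) * ((k + 1) * k.factorial) * Real.cos x
        + (-1) ^ (k + 1) * cosInt R x := by
      rw [hm, hfac] at e2
      push_cast at e2
      linear_combination x ^ 2 * e1 + (-1) ^ k * e2 +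
        (k + 1) * 2 ^ k * k.factorial * hsgn
    have e4 : B * (s * (2 * ((-1) ^ (k + 1) / B * cosInt R x))) =
        s * 2 * ((-1) ^ (k + 1) * cosInt R x) := by
      field_simp
    have e5 : B * (k.factorial : ℝ)⁻¹ = s * 2 * ((k + 1) * 2 ^ k * k.factorial) := by
      rw [hB]
      field_simp
    have e6 : B * ((-1) ^ (k + 1) / (k.factorial * 2 ^ k)) =
        s * 2 * ((-1) ^ (k + 1) * ((k + 1) * k.factorial)) := by
      rw [hB]
      field_simp
    linear_combination s * 2 * e3 - e4 - e5 - Real.cos x * e6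
  exact_mod_cast key
end
end

section
/- Let d ≥ 1 be odd, let γ be an even integer with γ ≥ d+1, let G_γ be the Sobolev spline on ℝ^d, and let C₁, C₂ > 0. There exists a constant C depending only on d, γ, C₁, C₂ such that for every h ∈ (0,1], every finite set Ξ ⊆ B̄(0, C₁h) ⊆ ℝ^d, and every family of real numbers (a_ξ)_{ξ∈Ξ} satisfying Σ_{ξ∈Ξ} |a_ξ| ≤ C₂ and Σ_{ξ∈Ξ} a_ξ q(ξ) = q(0) for every polynomial q on ℝ^d of degree at most γ, one has |G_γ(x) − Σ_{ξ∈Ξ} a_ξ G_γ(x−ξ)| ≤ C h^{γ−d} (1 + ‖x‖₂/h)^{−d−1} for all x ∈ ℝ^d. -/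
/-!
Subordination to Gaussians: writing `(1+‖ω‖²)^{-γ/2}` as a Gamma integral of
`exp (-t (1+‖ω‖²))` and exchanging the integrals gives, with `ν = (γ - d) / 2`,
`G_γ(x) = A ∫_0^∞ t^{ν-1} e^{-t} exp (-‖x‖²/4t) dt` (`sobolevSpline_eq_heat_integral`).
It is then enough to bound the error functional on each Gaussian, `gaussianDefect Ξ a x t`.

For a single Gaussian, `exp (-‖x-ξ‖²/4t)` equals `exp (-‖x‖²/4t)` times the average of
`exp ⟪ξ, x/2t + iω⟫` over `ω` with density proportional to `exp (-t‖ω‖²)`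
(`gaussian_translate`). The coefficients annihilate the Taylor polynomial of degree `γ` of this
exponential up to its constant term, and the remainder is at most `|z|^{γ+1} e^{|z|}`. Hence the
defect is `O((h/√t)^{γ+1} exp (-‖x‖²/8t + 2C₁²h²/t))` (`abs_gaussianDefect_le`). Combined with the
trivial bound `1 + C₂` this yields, for every `t > 0`, a defect of size
`O((h / max (√t) R)^{γ+1})` with `R = h + ‖x‖` (`abs_gaussianDefect_le_uniform`).

Finally `∫_0^∞ t^{ν-1} max(√t, R)^{-γ-1} dt` is a multiple of `R^{-d-1}`
(`integral_rpow_mul_max_pow`), and `h^{γ+1} R^{-d-1} = h^{γ-d} (1 + ‖x‖/h)^{-d-1}`.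
-/

open MeasureTheory Metric Set Complex
open scoped RealInnerProductSpace

noncomputable section

/-- The Sobolev spline `G_γ` on `ℝ^d`: the inverse Fourier transform of
`ω ↦ (1+‖ω‖²)^{-γ/2}` (normalization `f̂(ω) = (2π)^{-d/2} ∫ f(x) e^{-ix·ω} dx`). -/
def sobolevSpline (d : ℕ) (γ : ℝ) (x : EuclideanSpace ℝ (Fin d)) : ℝ :=
  (((((Real.sqrt (2 * Real.pi)) ^ d)⁻¹ : ℝ) : ℂ) *
    ∫ ω : EuclideanSpace ℝ (Fin d),
      (((1 + ‖ω‖ ^ 2) ^ (-(γ / 2)) : ℝ) : ℂ) * Complex.exp (Complex.I * (⟪x, ω⟫ : ℝ))).re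

/-! ### Gaussian representation of the Sobolev spline -/

lemma integral_gaussian_character {d : ℕ} {t : ℝ} (ht : 0 < t) (y : EuclideanSpace ℝ (Fin d)) :
    ∫ ω : EuclideanSpace ℝ (Fin d), cexp (-(t : ℂ) * ‖ω‖ ^ 2 + I * (⟪y, ω⟫ : ℝ)) =
      (((Real.pi / t) ^ ((d : ℝ) / 2) * Real.exp (-‖y‖ ^ 2 / (4 * t)) : ℝ) : ℂ) := by
  rw [GaussianFourier.integral_cexp_neg_mul_sq_norm_add (by simpa using ht)]
  rw [ofReal_mul, ofReal_cpow (by positivity)]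
  simp

lemma integrable_gaussian_character {d : ℕ} {t : ℝ} (ht : 0 < t)
    (y : EuclideanSpace ℝ (Fin d)) :
    Integrable fun ω : EuclideanSpace ℝ (Fin d) ↦
      cexp (-(t : ℂ) * ‖ω‖ ^ 2 + I * (⟪y, ω⟫ : ℝ)) :=
  GaussianFourier.integrable_cexp_neg_mul_sq_norm_add (by simpa using ht) _ _

lemma integrableOn_heat_weight {ν : ℝ} (hν : 0 < ν) (r : ℝ) :
    IntegrableOn (fun t : ℝ ↦ t ^ (ν - 1) * Real.exp (-t) * Real.exp (-r ^ 2 / (4 * t)))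
      (Ioi 0) := by
  refine (Real.GammaIntegral_convergent hν).mono' ?_ ?_
  · exact Measurable.aestronglyMeasurable (by fun_prop)
  · refine (ae_restrict_iff' measurableSet_Ioi).2 (ae_of_all _ fun t ht ↦ ?_)
    have ht' : (0 : ℝ) < t := ht
    have h1 : Real.exp (-r ^ 2 / (4 * t)) ≤ 1 := by
      rw [Real.exp_le_one_iff, neg_div]
      have : 0 ≤ r ^ 2 / (4 * t) := by positivity
      linarith
    rw [Real.norm_of_nonneg (by positivity), mul_comm (Real.exp (-t))]
    exact mul_le_of_le_one_right (by positivity) h1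

/-- Joint integrability in frequency and time, which justifies exchanging the Fourier integral
with the Gamma integral; the condition `d < γ` makes `(1+‖ω‖²)^{-γ/2}` integrable. -/
lemma integrable_fourier_heat {d : ℕ} {γ : ℝ} (hγ : (d : ℝ) < γ)
    (x : EuclideanSpace ℝ (Fin d)) :
    Integrable (Function.uncurry fun (ω : EuclideanSpace ℝ (Fin d)) (t : ℝ) ↦
      ((t ^ (γ / 2 - 1) * Real.exp (-((1 + ‖ω‖ ^ 2) * t)) : ℝ) : ℂ) *
        cexp (I * (⟪x, ω⟫ : ℝ))) (volume.prod (volume.restrict (Ioi 0))) := by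
  have hγ0 : 0 < γ / 2 := by
    have : (0 : ℝ) ≤ d := Nat.cast_nonneg d
    linarith
  have hn : ∀ (ω : EuclideanSpace ℝ (Fin d)), ‖cexp (I * (⟪x, ω⟫ : ℝ))‖ = 1 := fun ω ↦ by
    rw [mul_comm, norm_exp_ofReal_mul_I]
  rw [integrable_prod_iff]
  · constructor
    · refine ae_of_all _ fun ω ↦ ?_
      simp only [Function.uncurry_apply_pair]
      have := integrableOn_rpow_mul_exp_neg_mul_rpow (p := 1) (s := γ / 2 - 1)
        (b := 1 + ‖ω‖ ^ 2) (by linarith) one_pos (by positivity)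
      have h2 : IntegrableOn (fun t : ℝ ↦ t ^ (γ / 2 - 1) *
          Real.exp (-((1 + ‖ω‖ ^ 2) * t))) (Ioi 0) :=
        this.congr_fun (fun t _ ↦ by simp only [Real.rpow_one, neg_mul]) measurableSet_Ioi
      exact (Integrable.ofReal (𝕜 := ℂ) h2).mul_const _
    · have : ∀ ω : EuclideanSpace ℝ (Fin d), ∫ t in Ioi (0 : ℝ),
          ‖((t ^ (γ / 2 - 1) * Real.exp (-((1 + ‖ω‖ ^ 2) * t)) : ℝ) : ℂ) *
            cexp (I * (⟪x, ω⟫ : ℝ))‖ = (1 + ‖ω‖ ^ 2) ^ (-γ / 2) * Real.Gamma (γ / 2) := by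
        intro ω
        have hp : (0 : ℝ) < 1 + ‖ω‖ ^ 2 := by positivity
        rw [neg_div, Real.rpow_neg hp.le, ← Real.inv_rpow hp.le, ← one_div,
          ← Real.integral_rpow_mul_exp_neg_mul_Ioi hγ0 hp]
        refine setIntegral_congr_fun measurableSet_Ioi fun t ht ↦ ?_
        have ht' : (0 : ℝ) < t := ht
        rw [norm_mul, hn, mul_one, norm_real, Real.norm_of_nonneg (by positivity)]
      simp only [Function.uncurry_apply_pair, this]
      exact (integrable_rpow_neg_one_add_norm_sq (by simpa using hγ)).mul_const _
  · refine Measurable.aestronglyMeasurable ?_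
    unfold Function.uncurry
    fun_prop

/-- The Sobolev spline as a superposition of Gaussians. -/
lemma sobolevSpline_eq_heat_integral {d : ℕ} {γ : ℝ} (hγ : (d : ℝ) < γ)
    (x : EuclideanSpace ℝ (Fin d)) :
    sobolevSpline d γ x =
      ((√(2 * Real.pi) ^ d)⁻¹ * (Real.Gamma (γ / 2))⁻¹ * Real.pi ^ ((d : ℝ) / 2)) *
      ∫ t in Ioi (0 : ℝ), t ^ ((γ - d) / 2 - 1) * Real.exp (-t) *
        Real.exp (-‖x‖ ^ 2 / (4 * t)) := by
  have hγ0 : 0 < γ / 2 := by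
    have : (0 : ℝ) ≤ d := Nat.cast_nonneg d
    linarith
  have hΓ : Real.Gamma (γ / 2) ≠ 0 := (Real.Gamma_pos_of_pos hγ0).ne'
  have h1 : ∫ ω : EuclideanSpace ℝ (Fin d),
      (((1 + ‖ω‖ ^ 2) ^ (-(γ / 2)) : ℝ) : ℂ) * cexp (I * (⟪x, ω⟫ : ℝ)) =
      ((Real.Gamma (γ / 2))⁻¹ : ℝ) * ∫ ω : EuclideanSpace ℝ (Fin d), ∫ t in Ioi (0 : ℝ),
        ((t ^ (γ / 2 - 1) * Real.exp (-((1 + ‖ω‖ ^ 2) * t)) : ℝ) : ℂ) *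
        cexp (I * (⟪x, ω⟫ : ℝ)) := by
    rw [← integral_const_mul]
    refine integral_congr_ae (ae_of_all _ fun ω ↦ ?_)
    have hp : (0 : ℝ) < 1 + ‖ω‖ ^ 2 := by positivity
    simp only
    rw [integral_mul_const, integral_complex_ofReal,
      Real.integral_rpow_mul_exp_neg_mul_Ioi hγ0 hp, ← mul_assoc, ← ofReal_mul,
      Real.rpow_neg hp.le, one_div, Real.inv_rpow hp.le]
    congr 2
    field_simp
  have h2 : ∀ t ∈ Ioi (0 : ℝ), (∫ ω : EuclideanSpace ℝ (Fin d),
        ((t ^ (γ / 2 - 1) * Real.exp (-((1 + ‖ω‖ ^ 2) * t)) : ℝ) : ℂ) *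
        cexp (I * (⟪x, ω⟫ : ℝ))) =
      ((Real.pi ^ ((d : ℝ) / 2) * (t ^ ((γ - d) / 2 - 1) * Real.exp (-t) *
        Real.exp (-‖x‖ ^ 2 / (4 * t))) : ℝ) : ℂ) := by
    intro t ht
    have ht' : (0 : ℝ) < t := ht
    have : ∀ ω : EuclideanSpace ℝ (Fin d),
        ((t ^ (γ / 2 - 1) * Real.exp (-((1 + ‖ω‖ ^ 2) * t)) : ℝ) : ℂ) *
        cexp (I * (⟪x, ω⟫ : ℝ)) = ((t ^ (γ / 2 - 1) * Real.exp (-t) : ℝ) : ℂ) *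
          cexp (-(t : ℂ) * ‖ω‖ ^ 2 + I * (⟪x, ω⟫ : ℝ)) := by
      intro ω
      rw [Complex.exp_add, show -((1 + ‖ω‖ ^ 2) * t) = -t + -t * ‖ω‖ ^ 2 by ring, Real.exp_add]
      push_cast
      ring
    simp only [this]
    rw [integral_const_mul, integral_gaussian_character ht', ← ofReal_mul,
      Real.div_rpow Real.pi_pos.le ht'.le,
      show (γ - d) / 2 - 1 = (γ / 2 - 1) - (d : ℝ) / 2 by ring,
      Real.rpow_sub ht' (γ / 2 - 1) ((d : ℝ) / 2)]
    congr 1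
    ring
  unfold sobolevSpline
  rw [h1, integral_integral_swap (integrable_fourier_heat hγ x),
    setIntegral_congr_fun measurableSet_Ioi h2, integral_complex_ofReal, integral_const_mul,
    ← ofReal_mul, ← ofReal_mul, ofReal_re]
  ring

/-! ### Polynomial reproduction and exponentials -/

/-- Polynomial reproduction, extended to powers of the complex linear form
`ξ ↦ ⟪ξ, u⟫ + i ⟪ξ, v⟫` by expanding binomially into real polynomials. -/
lemma moment_complex {d n : ℕ} {Ξ : Finset (EuclideanSpace ℝ (Fin d))}
    {a : EuclideanSpace ℝ (Fin d) → ℝ}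
    (hq : ∀ q : MvPolynomial (Fin d) ℝ, q.totalDegree ≤ n →
      ∑ ξ ∈ Ξ, a ξ * MvPolynomial.eval (fun i => ξ i) q =
        MvPolynomial.eval (fun _ => (0 : ℝ)) q)
    (u v : EuclideanSpace ℝ (Fin d)) {k : ℕ} (hk : k ≤ n) :
    ∑ ξ ∈ Ξ, (a ξ : ℂ) * ((⟪ξ, u⟫ : ℝ) + I * (⟪ξ, v⟫ : ℝ)) ^ k = 0 ^ k := by
  let ℓ : EuclideanSpace ℝ (Fin d) → MvPolynomial (Fin d) ℝ := fun w ↦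
    ∑ i, MvPolynomial.C (w i) * MvPolynomial.X i
  have hℓ : ∀ w, (ℓ w).totalDegree ≤ 1 := fun w ↦ by
    refine MvPolynomial.totalDegree_finsetSum_le fun i _ ↦ ?_
    refine (MvPolynomial.totalDegree_mul _ _).trans ?_
    simp
  have hev : ∀ w ξ : EuclideanSpace ℝ (Fin d),
      MvPolynomial.eval (fun i => ξ i) (ℓ w) = ⟪ξ, w⟫ := fun w ξ ↦ by
    simp [ℓ, PiLp.inner_apply]
  have hev0 : ∀ w : EuclideanSpace ℝ (Fin d),
      MvPolynomial.eval (fun _ => (0 : ℝ)) (ℓ w) = 0 := fun w ↦ by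
    simp [ℓ]
  have key : ∀ j ∈ Finset.range (k + 1),
      ∑ ξ ∈ Ξ, a ξ * (⟪ξ, u⟫ ^ j * ⟪ξ, v⟫ ^ (k - j)) = (0 : ℝ) ^ j * 0 ^ (k - j) := by
    intro j hj
    have hj' : j ≤ k := Nat.lt_succ_iff.mp (Finset.mem_range.mp hj)
    have := hq (ℓ u ^ j * ℓ v ^ (k - j)) (by
      refine (MvPolynomial.totalDegree_mul _ _).trans ?_
      have h1 := (MvPolynomial.totalDegree_pow (ℓ u) j).trans (Nat.mul_le_mul_left j (hℓ u))
      have h2 := (MvPolynomial.totalDegree_pow (ℓ v) (k - j)).trans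
        (Nat.mul_le_mul_left (k - j) (hℓ v))
      omega)
    simpa only [map_mul, map_pow, hev, hev0] using this
  simp only [add_pow, mul_pow, Finset.mul_sum]
  rw [Finset.sum_comm, ← zero_add (0 : ℂ), add_pow]
  refine Finset.sum_congr rfl fun j hj ↦ ?_
  have h := congrArg (fun r : ℝ ↦ (r : ℂ) * (I ^ (k - j) * (k.choose j : ℂ))) (key j hj)
  simp only [ofReal_sum, Finset.sum_mul] at h
  have e : (0 : ℂ) ^ (k - j) = 0 ^ (k - j) * I ^ (k - j) := by
    rw [← mul_pow, zero_mul]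
  rw [e]
  push_cast at h
  convert h using 1
  · refine Finset.sum_congr rfl fun ξ _ ↦ ?_
    ring
  · ring

/-- The error functional on a complex exponential: the Taylor polynomial of degree `n` is
reproduced exactly, so only the Taylor remainder is left. -/
lemma norm_one_sub_sum_exp_le {d n : ℕ} {Ξ : Finset (EuclideanSpace ℝ (Fin d))}
    {a : EuclideanSpace ℝ (Fin d) → ℝ}
    (hq : ∀ q : MvPolynomial (Fin d) ℝ, q.totalDegree ≤ n →
      ∑ ξ ∈ Ξ, a ξ * MvPolynomial.eval (fun i => ξ i) q =
        MvPolynomial.eval (fun _ => (0 : ℝ)) q)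
    {ρ C₂ : ℝ} (hρ : ∀ ξ ∈ Ξ, ‖ξ‖ ≤ ρ) (hρ0 : 0 ≤ ρ) (ha : ∑ ξ ∈ Ξ, |a ξ| ≤ C₂)
    (u v : EuclideanSpace ℝ (Fin d)) :
    ‖1 - ∑ ξ ∈ Ξ, (a ξ : ℂ) * cexp ((⟪ξ, u⟫ : ℝ) + I * (⟪ξ, v⟫ : ℝ))‖ ≤
      C₂ * ((ρ * (‖u‖ + ‖v‖)) ^ (n + 1) * Real.exp (ρ * (‖u‖ + ‖v‖))) := by
  have h1 : (1 : ℂ) = ∑ ξ ∈ Ξ, (a ξ : ℂ) *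
      ∑ k ∈ Finset.range (n + 1),
        ((⟪ξ, u⟫ : ℝ) + I * (⟪ξ, v⟫ : ℝ) : ℂ) ^ k / (k.factorial : ℂ) := by
    simp only [Finset.mul_sum]
    rw [Finset.sum_comm]
    have : ∀ k ∈ Finset.range (n + 1), ∑ ξ ∈ Ξ, (a ξ : ℂ) *
        (((⟪ξ, u⟫ : ℝ) + I * (⟪ξ, v⟫ : ℝ) : ℂ) ^ k / (k.factorial : ℂ)) =
        (0 : ℂ) ^ k / (k.factorial : ℂ) := by
      intro k hk
      rw [← moment_complex hq u v (Nat.lt_succ_iff.mp (Finset.mem_range.mp hk)),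
        Finset.sum_div]
      exact Finset.sum_congr rfl fun ξ _ ↦ by ring
    rw [Finset.sum_congr rfl this, Finset.sum_range_succ']
    simp
  rw [h1, ← Finset.sum_sub_distrib]
  refine (norm_sum_le _ _).trans ?_
  refine le_trans ?_ (mul_le_mul_of_nonneg_right ha (by positivity))
  rw [Finset.sum_mul]
  refine Finset.sum_le_sum fun ξ hξ ↦ ?_
  rw [← mul_sub, norm_mul, norm_real, Real.norm_eq_abs, norm_sub_rev]
  refine mul_le_mul_of_nonneg_left ?_ (abs_nonneg _)
  have hz : ‖((⟪ξ, u⟫ : ℝ) + I * (⟪ξ, v⟫ : ℝ) : ℂ)‖ ≤ ρ * (‖u‖ + ‖v‖) := by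
    refine (norm_add_le _ _).trans ?_
    rw [norm_mul, norm_I, one_mul, norm_real, norm_real, mul_add]
    have h2 := norm_inner_le_norm (𝕜 := ℝ) ξ u
    have h3 := norm_inner_le_norm (𝕜 := ℝ) ξ v
    have h4 := mul_le_mul_of_nonneg_right (hρ ξ hξ) (norm_nonneg u)
    have h5 := mul_le_mul_of_nonneg_right (hρ ξ hξ) (norm_nonneg v)
    linarith
  refine (Complex.norm_exp_sub_sum_le_norm_mul_exp _ _).trans ?_
  gcongr

/-! ### The error functional on a Gaussian -/

lemma pow_le_const_mul_exp (n : ℕ) (u : ℝ) :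
    u ^ n ≤ (1 + 16 ^ n * n.factorial) * Real.exp (u ^ 2 / 16) := by
  have h1 := Real.pow_div_factorial_le_exp (x := u ^ 2 / 16) (by positivity) n
  have h2 : 1 ≤ Real.exp (u ^ 2 / 16) := Real.one_le_exp (by positivity)
  have h3 : u ^ n ≤ 1 + (u ^ 2) ^ n := by
    have : (u ^ 2) ^ n = (u ^ n) ^ 2 := by ring
    rw [this]
    nlinarith [sq_nonneg (u ^ n - 1)]
  have h4 : (u ^ 2) ^ n ≤ 16 ^ n * n.factorial * Real.exp (u ^ 2 / 16) := by
    rw [div_pow, div_div, div_le_iff₀ (by positivity)] at h1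
    linarith
  linarith

/-- Completing the square: a translated Gaussian is `exp (-‖x‖²/4t)` times a Gaussian average
of exponentials of complex linear forms in the translation `ξ`. -/
lemma gaussian_translate {d : ℕ} {t : ℝ} (ht : 0 < t) (x ξ : EuclideanSpace ℝ (Fin d)) :
    (((Real.pi / t) ^ ((d : ℝ) / 2) * Real.exp (-‖x - ξ‖ ^ 2 / (4 * t)) : ℝ) : ℂ) =
      ∫ ω : EuclideanSpace ℝ (Fin d), ((Real.exp (-‖x‖ ^ 2 / (4 * t)) : ℝ) : ℂ) *
        (cexp (-(t : ℂ) * ‖ω‖ ^ 2) *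
          cexp ((⟪ξ, (2 * t)⁻¹ • x⟫ : ℝ) + I * (⟪ξ, ω⟫ : ℝ))) := by
  have h : ∀ ω : EuclideanSpace ℝ (Fin d), ((Real.exp (-‖x‖ ^ 2 / (4 * t)) : ℝ) : ℂ) *
        (cexp (-(t : ℂ) * ‖ω‖ ^ 2) *
          cexp ((⟪ξ, (2 * t)⁻¹ • x⟫ : ℝ) + I * (⟪ξ, ω⟫ : ℝ))) =
      ((Real.exp (-‖x‖ ^ 2 / (4 * t) + ⟪ξ, (2 * t)⁻¹ • x⟫) : ℝ) : ℂ) *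
        cexp (-(t : ℂ) * ‖ω‖ ^ 2 + I * (⟪ξ, ω⟫ : ℝ)) := by
    intro ω
    rw [Complex.exp_add, Complex.exp_add, Real.exp_add]
    push_cast
    ring
  simp only [h]
  rw [integral_const_mul, integral_gaussian_character ht, ← ofReal_mul, mul_left_comm,
    ← Real.exp_add]
  congr 3
  rw [norm_sub_sq_real, inner_smul_right, real_inner_comm]
  field_simp
  ring

lemma integrable_gaussian_translate {d : ℕ} {t : ℝ} (ht : 0 < t)
    (x ξ : EuclideanSpace ℝ (Fin d)) :
    Integrable fun ω : EuclideanSpace ℝ (Fin d) ↦ ((Real.exp (-‖x‖ ^ 2 / (4 * t)) : ℝ) : ℂ) *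
        (cexp (-(t : ℂ) * ‖ω‖ ^ 2) *
          cexp ((⟪ξ, (2 * t)⁻¹ • x⟫ : ℝ) + I * (⟪ξ, ω⟫ : ℝ))) := by
  refine (((integrable_gaussian_character ht ξ).const_mul
    (cexp ((⟪ξ, (2 * t)⁻¹ • x⟫ : ℝ) : ℂ))).const_mul
      ((Real.exp (-‖x‖ ^ 2 / (4 * t)) : ℝ) : ℂ)).congr (ae_of_all _ fun ω ↦ ?_)
  simp only
  rw [Complex.exp_add, Complex.exp_add]
  ring

/-- The error functional at `x`, applied to the Gaussian `y ↦ exp (-‖y‖² / 4t)`. -/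
def gaussianDefect {d : ℕ} (Ξ : Finset (EuclideanSpace ℝ (Fin d)))
    (a : EuclideanSpace ℝ (Fin d) → ℝ) (x : EuclideanSpace ℝ (Fin d)) (t : ℝ) : ℝ :=
  Real.exp (-‖x‖ ^ 2 / (4 * t)) - ∑ ξ ∈ Ξ, a ξ * Real.exp (-‖x - ξ‖ ^ 2 / (4 * t))

lemma gaussianDefect_eq_integral {d : ℕ} (Ξ : Finset (EuclideanSpace ℝ (Fin d)))
    (a : EuclideanSpace ℝ (Fin d) → ℝ) (x : EuclideanSpace ℝ (Fin d)) {t : ℝ} (ht : 0 < t) :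
    (((Real.pi / t) ^ ((d : ℝ) / 2) * gaussianDefect Ξ a x t : ℝ) : ℂ) =
      ∫ ω : EuclideanSpace ℝ (Fin d), ((Real.exp (-‖x‖ ^ 2 / (4 * t)) : ℝ) : ℂ) *
        (cexp (-(t : ℂ) * ‖ω‖ ^ 2) *
          (1 - ∑ ξ ∈ Ξ, (a ξ : ℂ) *
            cexp ((⟪ξ, (2 * t)⁻¹ • x⟫ : ℝ) + I * (⟪ξ, ω⟫ : ℝ)))) := by
  have h0 := gaussian_translate ht x 0
  have i0 := integrable_gaussian_translate ht x 0
  simp only [sub_zero, inner_zero_left, ofReal_zero, mul_zero, add_zero, Complex.exp_zero,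
    mul_one] at h0 i0
  simp only [mul_sub, Finset.mul_sum, mul_one]
  rw [integral_sub i0, integral_finsetSum, ← h0]
  · unfold gaussianDefect
    rw [mul_sub, ofReal_sub, Finset.mul_sum, ofReal_sum]
    congr 1
    refine Finset.sum_congr rfl fun ξ _ ↦ ?_
    rw [mul_left_comm, ofReal_mul, gaussian_translate ht x ξ, ← integral_const_mul]
    refine integral_congr_ae (ae_of_all _ fun ω ↦ ?_)
    simp only
    ring
  · intro ξ _
    refine ((integrable_gaussian_translate ht x ξ).const_mul (a ξ : ℂ)).congr
      (ae_of_all _ fun ω ↦ ?_)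
    simp only
    ring
  · refine integrable_finsetSum _ fun ξ _ ↦ ?_
    refine ((integrable_gaussian_translate ht x ξ).const_mul (a ξ : ℂ)).congr
      (ae_of_all _ fun ω ↦ ?_)
    simp only
    ring

/-- With `u = X/(2√t) + √t W`, the linear exponent is `C₁ (h/√t) u ≤ u²/8 + 2 (C₁ h/√t)²`, the
power `u ^ n` costs a factor `exp (u²/16)`, and `u² ≤ 2 (X²/4t + t W²)`; so half of the Gaussian
decay in both `X` and `W` survives. -/
lemma exponent_bound {t h C₁ X W : ℝ} (n : ℕ) (ht : 0 < t) (hh : 0 < h) (hC₁ : 0 < C₁)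
    (hX : 0 ≤ X) (hW : 0 ≤ W) :
    Real.exp (-X ^ 2 / (4 * t)) * (Real.exp (-t * W ^ 2) *
      ((C₁ * h * ((2 * t)⁻¹ * X + W)) ^ n * Real.exp (C₁ * h * ((2 * t)⁻¹ * X + W)))) ≤
    (C₁ ^ n * (1 + 16 ^ n * n.factorial) * (h / √t) ^ n *
      Real.exp (-X ^ 2 / (8 * t) + 2 * C₁ ^ 2 * h ^ 2 / t)) * Real.exp (-(t / 2) * W ^ 2) := by
  obtain ⟨s, hs, rfl⟩ : ∃ s : ℝ, 0 < s ∧ t = s ^ 2 :=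
    ⟨√t, Real.sqrt_pos.2 ht, (Real.sq_sqrt ht.le).symm⟩
  rw [Real.sqrt_sq hs.le]
  set u : ℝ := X / (2 * s) + s * W with hu
  have hu0 : 0 ≤ u := by positivity
  have hM : C₁ * h * ((2 * s ^ 2)⁻¹ * X + W) = C₁ * (h / s) * u := by
    rw [hu]; field_simp
  rw [hM, mul_pow, mul_pow]
  have hp := pow_le_const_mul_exp n u
  have he : -X ^ 2 / (4 * s ^ 2) + (-s ^ 2 * W ^ 2 + (u ^ 2 / 16 + C₁ * (h / s) * u)) ≤
      (-X ^ 2 / (8 * s ^ 2) + 2 * C₁ ^ 2 * h ^ 2 / s ^ 2) + -(s ^ 2 / 2) * W ^ 2 := by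
    have e1 : -X ^ 2 / (4 * s ^ 2) = -(X / (2 * s)) ^ 2 := by field_simp; ring
    have e2 : -X ^ 2 / (8 * s ^ 2) = -(X / (2 * s)) ^ 2 / 2 := by field_simp; ring
    have e3 : 2 * C₁ ^ 2 * h ^ 2 / s ^ 2 = 2 * (C₁ * (h / s)) ^ 2 := by field_simp
    rw [e1, e2, e3, hu]
    set p := X / (2 * s)
    set α := C₁ * (h / s)
    nlinarith [sq_nonneg (p - s * W), sq_nonneg (p + s * W - 4 * α), sq_nonneg (p + s * W)]
  calc _ ≤ Real.exp (-X ^ 2 / (4 * s ^ 2)) * (Real.exp (-s ^ 2 * W ^ 2) *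
      (C₁ ^ n * (h / s) ^ n * ((1 + 16 ^ n * n.factorial) * Real.exp (u ^ 2 / 16)) *
        Real.exp (C₁ * (h / s) * u))) := by gcongr
    _ = (C₁ ^ n * (1 + 16 ^ n * n.factorial) * (h / s) ^ n) *
        Real.exp (-X ^ 2 / (4 * s ^ 2) +
          (-s ^ 2 * W ^ 2 + (u ^ 2 / 16 + C₁ * (h / s) * u))) := by
      simp only [Real.exp_add]; ring
    _ ≤ (C₁ ^ n * (1 + 16 ^ n * n.factorial) * (h / s) ^ n) *
        Real.exp ((-X ^ 2 / (8 * s ^ 2) + 2 * C₁ ^ 2 * h ^ 2 / s ^ 2) +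
          -(s ^ 2 / 2) * W ^ 2) := by gcongr
    _ = _ := by rw [Real.exp_add _ (-(s ^ 2 / 2) * W ^ 2)]; ring

/-- Taylor bound for the defect; sharp for `h² ≲ t`, and, when `‖x‖` is a large multiple of `h`,
for all `t`. -/
lemma abs_gaussianDefect_le {d n : ℕ} {Ξ : Finset (EuclideanSpace ℝ (Fin d))}
    {a : EuclideanSpace ℝ (Fin d) → ℝ}
    (hq : ∀ q : MvPolynomial (Fin d) ℝ, q.totalDegree ≤ n →
      ∑ ξ ∈ Ξ, a ξ * MvPolynomial.eval (fun i => ξ i) q =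
        MvPolynomial.eval (fun _ => (0 : ℝ)) q)
    {h C₁ C₂ : ℝ} (hh : 0 < h) (hC₁ : 0 < C₁) (hC₂ : 0 < C₂)
    (hΞ : ∀ ξ ∈ Ξ, ‖ξ‖ ≤ C₁ * h) (ha : ∑ ξ ∈ Ξ, |a ξ| ≤ C₂)
    (x : EuclideanSpace ℝ (Fin d)) {t : ℝ} (ht : 0 < t) :
    |gaussianDefect Ξ a x t| ≤
      (2 ^ ((d : ℝ) / 2) * C₂ * C₁ ^ (n + 1) * (1 + 16 ^ (n + 1) * (n + 1).factorial)) *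
        ((h / √t) ^ (n + 1) *
          Real.exp (-‖x‖ ^ 2 / (8 * t) + 2 * C₁ ^ 2 * h ^ 2 / t)) := by
  set K : ℝ := C₁ ^ (n + 1) * (1 + 16 ^ (n + 1) * (n + 1).factorial) * (h / √t) ^ (n + 1) *
    Real.exp (-‖x‖ ^ 2 / (8 * t) + 2 * C₁ ^ 2 * h ^ 2 / t) with hK
  have hgint : Integrable fun ω : EuclideanSpace ℝ (Fin d) ↦
      Real.exp (-(t / 2) * ‖ω‖ ^ 2) := by
    have := (integrable_gaussian_character (half_pos ht) (0 : EuclideanSpace ℝ (Fin d))).norm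
    refine this.congr (ae_of_all _ fun ω ↦ ?_)
    simp only [inner_zero_left, ofReal_zero, mul_zero, add_zero, norm_exp]
    norm_cast
  have h1 := norm_integral_le_of_norm_le (hgint.const_mul (C₂ * K)) (ae_of_all _ fun ω ↦ ?_ :
    ∀ᵐ ω : EuclideanSpace ℝ (Fin d), ‖((Real.exp (-‖x‖ ^ 2 / (4 * t)) : ℝ) : ℂ) *
        (cexp (-(t : ℂ) * ‖ω‖ ^ 2) *
          (1 - ∑ ξ ∈ Ξ, (a ξ : ℂ) *
            cexp ((⟪ξ, (2 * t)⁻¹ • x⟫ : ℝ) + I * (⟪ξ, ω⟫ : ℝ))))‖ ≤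
      C₂ * K * Real.exp (-(t / 2) * ‖ω‖ ^ 2))
  · rw [← gaussianDefect_eq_integral Ξ a x ht, norm_real, norm_mul, Real.norm_eq_abs,
      Real.norm_eq_abs, abs_of_pos (by positivity), integral_const_mul,
      GaussianFourier.integral_rexp_neg_mul_sq_norm (half_pos ht), finrank_euclideanSpace_fin,
      show Real.pi / (t / 2) = 2 * (Real.pi / t) by field_simp,
      Real.mul_rpow (by positivity) (by positivity)] at h1
    have hpos : (0 : ℝ) < (Real.pi / t) ^ ((d : ℝ) / 2) := by positivity
    refine le_of_mul_le_mul_left (h1.trans (le_of_eq ?_)) hpos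
    rw [hK]
    ring
  · have h2 := norm_one_sub_sum_exp_le hq hΞ (by positivity) ha ((2 * t)⁻¹ • x) ω
    rw [norm_smul, Real.norm_of_nonneg (show 0 ≤ (2 * t)⁻¹ by positivity)] at h2
    have h3 := exponent_bound (n + 1) ht hh hC₁ (norm_nonneg x) (norm_nonneg ω)
    rw [norm_mul, norm_mul, norm_real, Real.norm_of_nonneg (by positivity)]
    have h4 : ‖cexp (-(t : ℂ) * ‖ω‖ ^ 2)‖ = Real.exp (-t * ‖ω‖ ^ 2) := by
      rw [norm_exp]; norm_cast
    rw [h4]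
    calc _ ≤ Real.exp (-‖x‖ ^ 2 / (4 * t)) * (Real.exp (-t * ‖ω‖ ^ 2) *
          (C₂ * ((C₁ * h * ((2 * t)⁻¹ * ‖x‖ + ‖ω‖)) ^ (n + 1) *
            Real.exp (C₁ * h * ((2 * t)⁻¹ * ‖x‖ + ‖ω‖))))) := by gcongr
      _ = C₂ * (Real.exp (-‖x‖ ^ 2 / (4 * t)) * (Real.exp (-t * ‖ω‖ ^ 2) *
          ((C₁ * h * ((2 * t)⁻¹ * ‖x‖ + ‖ω‖)) ^ (n + 1) *
            Real.exp (C₁ * h * ((2 * t)⁻¹ * ‖x‖ + ‖ω‖))))) := by ring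
      _ ≤ C₂ * (K * Real.exp (-(t / 2) * ‖ω‖ ^ 2)) := by gcongr
      _ = _ := by ring

lemma abs_gaussianDefect_le_trivial {d : ℕ} {Ξ : Finset (EuclideanSpace ℝ (Fin d))}
    {a : EuclideanSpace ℝ (Fin d) → ℝ} {C₂ : ℝ} (ha : ∑ ξ ∈ Ξ, |a ξ| ≤ C₂)
    (x : EuclideanSpace ℝ (Fin d)) {t : ℝ} (ht : 0 < t) :
    |gaussianDefect Ξ a x t| ≤ 1 + C₂ := by
  have hg : ∀ y : EuclideanSpace ℝ (Fin d), |Real.exp (-‖y‖ ^ 2 / (4 * t))| ≤ 1 := fun y ↦ by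
    rw [Real.abs_exp, Real.exp_le_one_iff, neg_div]
    have : 0 ≤ ‖y‖ ^ 2 / (4 * t) := by positivity
    linarith
  refine (abs_sub _ _).trans (add_le_add (hg x) (le_trans ?_ ha))
  refine (Finset.abs_sum_le_sum_abs _ _).trans (Finset.sum_le_sum fun ξ _ ↦ ?_)
  rw [abs_mul]
  exact mul_le_of_le_one_right (abs_nonneg _) (hg _)

/-- A bound for the defect that is uniform in `t > 0`, with a constant depending only on `d`, `n`,
`C₁` and `C₂`. -/
lemma abs_gaussianDefect_le_uniform (d n : ℕ) {C₁ C₂ : ℝ} (hC₁ : 0 < C₁) (hC₂ : 0 < C₂) :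
    ∃ D : ℝ, 0 < D ∧ ∀ h : ℝ, 0 < h → ∀ (Ξ : Finset (EuclideanSpace ℝ (Fin d)))
      (a : EuclideanSpace ℝ (Fin d) → ℝ), (∀ ξ ∈ Ξ, ‖ξ‖ ≤ C₁ * h) →
      (∑ ξ ∈ Ξ, |a ξ| ≤ C₂) →
      (∀ q : MvPolynomial (Fin d) ℝ, q.totalDegree ≤ n →
        ∑ ξ ∈ Ξ, a ξ * MvPolynomial.eval (fun i => ξ i) q =
          MvPolynomial.eval (fun _ => (0 : ℝ)) q) →
      ∀ (x : EuclideanSpace ℝ (Fin d)) (t : ℝ), 0 < t →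
        |gaussianDefect Ξ a x t| ≤ D * (h / max (√t) (h + ‖x‖)) ^ (n + 1) := by
  set A : ℝ := 2 ^ ((d : ℝ) / 2) * C₂ * C₁ ^ (n + 1) *
    (1 + 16 ^ (n + 1) * (n + 1).factorial) with hA
  have hA0 : 0 < A := by positivity
  set κ : ℝ := 1 + (8 * C₁)⁻¹ with hκ
  set D₁ : ℝ := A * Real.exp (2 * C₁ ^ 2)
  set D₂ : ℝ := (1 + C₂) * (1 + 8 * C₁) ^ (n + 1)
  set D₃ : ℝ := A * (κ ^ (n + 1) * (1 + 16 ^ (n + 1) * (n + 1).factorial))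
  have hD₁ : 0 < D₁ := by positivity
  have hD₂ : 0 < D₂ := by positivity
  have hD₃ : 0 < D₃ := by positivity
  refine ⟨D₁ + D₂ + D₃, by positivity, fun h hh Ξ a hΞ ha hq x t ht ↦ ?_⟩
  have hB := abs_gaussianDefect_le hq hh hC₁ hC₂ hΞ ha x ht
  rw [← hA] at hB
  have hx := norm_nonneg x
  have hs : 0 < √t := Real.sqrt_pos.2 ht
  have hst : √t ^ 2 = t := Real.sq_sqrt ht.le
  rcases le_total (h + ‖x‖) (√t) with hR | hR
  -- here `h² ≤ t`, so the exponential factor is at most `exp (2 * C₁ ^ 2)`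
  · rw [max_eq_left hR]
    have he : -‖x‖ ^ 2 / (8 * t) + 2 * C₁ ^ 2 * h ^ 2 / t ≤ 2 * C₁ ^ 2 := by
      have h1 : -‖x‖ ^ 2 / (8 * t) ≤ 0 :=
        div_nonpos_of_nonpos_of_nonneg (by nlinarith) (by positivity)
      have h2 : h ^ 2 ≤ t := by rw [← hst]; gcongr; linarith
      have h3 : 2 * C₁ ^ 2 * h ^ 2 / t ≤ 2 * C₁ ^ 2 := by
        rw [div_le_iff₀ ht]; gcongr
      linarith
    calc _ ≤ A * ((h / √t) ^ (n + 1) * Real.exp (2 * C₁ ^ 2)) := hB.trans (by gcongr)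
      _ = D₁ * (h / √t) ^ (n + 1) := by ring
      _ ≤ _ := by gcongr; linarith
  · rw [max_eq_right hR]
    rcases le_total ‖x‖ (8 * C₁ * h) with hsm | hlg
    -- here `h + ‖x‖` is comparable to `h`, and the trivial bound is enough
    · have h1 : 1 ≤ (1 + 8 * C₁) * (h / (h + ‖x‖)) := by
        rw [← mul_div_assoc, le_div_iff₀ (by positivity)]
        linarith
      have h2 : 1 ≤ ((1 + 8 * C₁) * (h / (h + ‖x‖))) ^ (n + 1) := one_le_pow₀ h1
      calc _ ≤ 1 + C₂ := abs_gaussianDefect_le_trivial ha x ht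
        _ ≤ (1 + C₂) * ((1 + 8 * C₁) * (h / (h + ‖x‖))) ^ (n + 1) :=
          le_mul_of_one_le_right (by positivity) h2
        _ = D₂ * (h / (h + ‖x‖)) ^ (n + 1) := by rw [mul_pow]; ring
        _ ≤ _ := by gcongr; linarith
    -- here the Gaussian factor absorbs `exp (2 * C₁ ^ 2 * h ^ 2 / t)` and the power of `√t`
    · have h1 : h + ‖x‖ ≤ κ * ‖x‖ := by
        have : h ≤ (8 * C₁)⁻¹ * ‖x‖ := by
          rw [inv_mul_eq_div, le_div_iff₀ (by positivity)]; linarith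
        rw [hκ]; linarith
      have he : -‖x‖ ^ 2 / (8 * t) + 2 * C₁ ^ 2 * h ^ 2 / t ≤ -((‖x‖ / √t) ^ 2 / 16) := by
        have h2 : (8 * C₁ * h) ^ 2 ≤ ‖x‖ ^ 2 := by gcongr
        rw [div_pow, hst]
        have : -(‖x‖ ^ 2 / t / 16) - (-‖x‖ ^ 2 / (8 * t) + 2 * C₁ ^ 2 * h ^ 2 / t) =
            (2 * ‖x‖ ^ 2 - (8 * C₁ * h) ^ 2) / (32 * t) := by field_simp; ring
        have h3 : 0 ≤ (2 * ‖x‖ ^ 2 - (8 * C₁ * h) ^ 2) / (32 * t) :=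
          div_nonneg (by nlinarith [sq_nonneg ‖x‖]) (by positivity)
        linarith
      have hp := pow_le_const_mul_exp (n + 1) (‖x‖ / √t)
      have h4 : h / √t ≤ h / (h + ‖x‖) * (κ * (‖x‖ / √t)) := by
        have : h / √t = h / (h + ‖x‖) * ((h + ‖x‖) / √t) := by field_simp
        rw [this, ← mul_div_assoc κ]
        gcongr
      calc _ ≤ A * ((h / (h + ‖x‖) * (κ * (‖x‖ / √t))) ^ (n + 1) *
            Real.exp (-((‖x‖ / √t) ^ 2 / 16))) := hB.trans (by gcongr)
        _ = A * ((h / (h + ‖x‖)) ^ (n + 1) * κ ^ (n + 1) * (‖x‖ / √t) ^ (n + 1) *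
            Real.exp (-((‖x‖ / √t) ^ 2 / 16))) := by rw [mul_pow, mul_pow κ]; ring
        _ ≤ A * ((h / (h + ‖x‖)) ^ (n + 1) * κ ^ (n + 1) *
            ((1 + 16 ^ (n + 1) * (n + 1).factorial) * Real.exp ((‖x‖ / √t) ^ 2 / 16)) *
            Real.exp (-((‖x‖ / √t) ^ 2 / 16))) := by gcongr
        _ = D₃ * (h / (h + ‖x‖)) ^ (n + 1) * (Real.exp ((‖x‖ / √t) ^ 2 / 16) *
            Real.exp (-((‖x‖ / √t) ^ 2 / 16))) := by ring
        _ = D₃ * (h / (h + ‖x‖)) ^ (n + 1) := by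
          rw [← Real.exp_add, add_neg_cancel, Real.exp_zero, mul_one]
        _ ≤ _ := by gcongr; linarith

/-! ### Integration in time and conclusion -/

lemma integral_rpow_mul_max_pow {ν : ℝ} {n : ℕ} (hν : 0 < ν) (hn : 2 * ν < n) {R : ℝ}
    (hR : 0 < R) :
    IntegrableOn (fun t : ℝ ↦ t ^ (ν - 1) * (1 / max (√t) R) ^ n) (Ioi 0) ∧
      ∫ t in Ioi (0 : ℝ), t ^ (ν - 1) * (1 / max (√t) R) ^ n =
        (1 / ν + 1 / (n / 2 - ν)) * R ^ (2 * ν - n) := by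
  have hR2 : (0 : ℝ) < R ^ 2 := by positivity
  have e1 : EqOn (fun t : ℝ ↦ (1 / R) ^ n * t ^ (ν - 1))
      (fun t : ℝ ↦ t ^ (ν - 1) * (1 / max (√t) R) ^ n) (Ioc 0 (R ^ 2)) := by
    intro t ht
    have : √t ≤ R := by
      rw [Real.sqrt_le_left hR.le]; exact ht.2
    simp only [max_eq_right this]
    ring
  have e2 : EqOn (fun t : ℝ ↦ t ^ (ν - 1 - n / 2))
      (fun t : ℝ ↦ t ^ (ν - 1) * (1 / max (√t) R) ^ n) (Ioi (R ^ 2)) := by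
    intro t ht
    have ht0 : 0 < t := hR2.trans ht
    have : R ≤ √t := Real.le_sqrt_of_sq_le (le_of_lt ht)
    simp only [max_eq_left this]
    rw [Real.rpow_sub ht0 (ν - 1), one_div, inv_pow, div_eq_mul_inv, Real.sqrt_eq_rpow,
      ← Real.rpow_mul_natCast ht0.le]
    congr 3
    ring
  have i1 : IntegrableOn (fun t : ℝ ↦ (1 / R) ^ n * t ^ (ν - 1)) (Ioc 0 (R ^ 2)) := by
    refine Integrable.const_mul ?_ _
    exact (intervalIntegrable_iff_integrableOn_Ioc_of_le hR2.le).1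
      (intervalIntegral.intervalIntegrable_rpow' (by linarith))
  have i2 : IntegrableOn (fun t : ℝ ↦ t ^ (ν - 1 - n / 2)) (Ioi (R ^ 2)) :=
    integrableOn_Ioi_rpow_of_lt (by linarith) hR2
  have j1 := i1.congr_fun e1 measurableSet_Ioc
  have j2 := i2.congr_fun e2 measurableSet_Ioi
  rw [← Ioc_union_Ioi_eq_Ioi hR2.le]
  refine ⟨j1.union j2, ?_⟩
  rw [setIntegral_union (Ioc_disjoint_Ioi le_rfl) measurableSet_Ioi j1 j2,
    ← setIntegral_congr_fun measurableSet_Ioc e1, ← setIntegral_congr_fun measurableSet_Ioi e2,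
    integral_const_mul, ← intervalIntegral.integral_of_le hR2.le,
    integral_rpow (Or.inl (by linarith)), integral_Ioi_rpow_of_lt (by linarith) hR2,
    sub_add_cancel, Real.zero_rpow hν.ne', sub_zero]
  have r1 : (R ^ 2) ^ ν = R ^ (2 * ν) := by
    rw [Real.rpow_mul hR.le, Real.rpow_two]
  have r2 : (R ^ 2) ^ (ν - 1 - n / 2 + 1) = R ^ (2 * ν - n) := by
    rw [← Real.rpow_two, ← Real.rpow_mul hR.le]
    congr 1
    ring
  have r3 : (1 / R) ^ n * R ^ (2 * ν) = R ^ (2 * ν - n) := by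
    rw [Real.rpow_sub hR, Real.rpow_natCast, one_div, inv_pow]
    ring
  rw [r1, r2, mul_div_assoc', r3, neg_div, show ν - 1 - (n : ℝ) / 2 + 1 = -(n / 2 - ν) by ring,
    div_neg, neg_neg]
  ring

/-- kernel estimate for Sobolev splines, `d` odd.
If `d` is odd, `γ ≥ d+1` is even, and `(a_ξ)_{ξ∈Ξ}` are coefficients supported in
`B̄(0, C₁h)` with `Σ|a_ξ| ≤ C₂` reproducing the value at `0` of every polynomial of
degree `≤ γ`, then
`|G_γ(x) - Σ a_ξ G_γ(x-ξ)| ≤ C h^{γ-d} (1 + ‖x‖/h)^{-d-1}` for all `x`. -/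
theorem stmt6 (d : ℕ) (hd : Odd d) (γ : ℕ) (hγe : Even γ) (hγ : d + 1 ≤ γ)
    (C₁ C₂ : ℝ) (hC₁ : 0 < C₁) (hC₂ : 0 < C₂) :
    ∃ C : ℝ, 0 < C ∧
      ∀ h : ℝ, 0 < h → h ≤ 1 →
      ∀ (Ξ : Finset (EuclideanSpace ℝ (Fin d))) (a : EuclideanSpace ℝ (Fin d) → ℝ),
        (∀ ξ ∈ Ξ, ‖ξ‖ ≤ C₁ * h) →
        (∑ ξ ∈ Ξ, |a ξ| ≤ C₂) →
        (∀ q : MvPolynomial (Fin d) ℝ, q.totalDegree ≤ γ →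
          ∑ ξ ∈ Ξ, a ξ * MvPolynomial.eval (fun i => ξ i) q =
            MvPolynomial.eval (fun _ => (0 : ℝ)) q) →
        ∀ x : EuclideanSpace ℝ (Fin d),
          |sobolevSpline d γ x - ∑ ξ ∈ Ξ, a ξ * sobolevSpline d γ (x - ξ)| ≤
            C * h ^ ((γ : ℝ) - d) * (1 + ‖x‖ / h) ^ (-(d : ℝ) - 1) := by
  have hγd : (d : ℝ) + 1 ≤ γ := by exact_mod_cast hγ
  have hd0 : (0 : ℝ) ≤ d := Nat.cast_nonneg d
  have hdγ : (d : ℝ) < γ := by linarith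
  obtain ⟨D, hD, hdef⟩ := abs_gaussianDefect_le_uniform d γ hC₁ hC₂
  set ν : ℝ := ((γ : ℝ) - d) / 2 with hν
  have hν0 : 0 < ν := by rw [hν]; linarith
  set A : ℝ := (√(2 * Real.pi) ^ d)⁻¹ * (Real.Gamma ((γ : ℝ) / 2))⁻¹ *
    Real.pi ^ ((d : ℝ) / 2) with hA
  have hA0 : 0 < A := by
    have := Real.Gamma_pos_of_pos (s := (γ : ℝ) / 2) (by linarith)
    positivity
  set K : ℝ := 1 / ν + 1 / (((γ + 1 : ℕ) : ℝ) / 2 - ν) with hK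
  have hden : 0 < ((γ + 1 : ℕ) : ℝ) / 2 - ν := by rw [hν]; push_cast; linarith
  have hK0 : 0 < K := by positivity
  refine ⟨A * D * K, by positivity, fun h hh _ Ξ a hΞ ha hq x ↦ ?_⟩
  have hR : 0 < h + ‖x‖ := by positivity
  obtain ⟨hint, hval⟩ := integral_rpow_mul_max_pow (n := γ + 1) hν0 (by linarith) hR
  have hL : sobolevSpline d γ x - ∑ ξ ∈ Ξ, a ξ * sobolevSpline d γ (x - ξ) =
      A * ∫ t in Ioi (0 : ℝ), t ^ (ν - 1) * Real.exp (-t) * gaussianDefect Ξ a x t := by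
    simp only [sobolevSpline_eq_heat_integral hdγ, ← hA, ← hν]
    simp only [gaussianDefect, mul_sub, Finset.mul_sum]
    rw [integral_sub (integrableOn_heat_weight hν0 _), integral_finsetSum, mul_sub,
      Finset.mul_sum]
    · congr 1
      refine Finset.sum_congr rfl fun ξ _ ↦ ?_
      rw [mul_left_comm, ← integral_const_mul (a ξ)]
      congr 2
      ext t
      ring
    · intro ξ _
      refine ((integrableOn_heat_weight hν0 ‖x - ξ‖).const_mul (a ξ)).congr
        (ae_of_all _ fun t ↦ ?_)
      simp only
      ring
    · refine integrable_finsetSum _ fun ξ _ ↦ ?_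
      refine ((integrableOn_heat_weight hν0 ‖x - ξ‖).const_mul (a ξ)).congr
        (ae_of_all _ fun t ↦ ?_)
      simp only
      ring
  have hbd := norm_integral_le_of_norm_le (hint.const_mul (D * h ^ (γ + 1)))
    ((ae_restrict_iff' measurableSet_Ioi).2 (ae_of_all _ fun t (ht : 0 < t) ↦ ?_) :
      ∀ᵐ t ∂(volume.restrict (Ioi (0 : ℝ))),
        ‖t ^ (ν - 1) * Real.exp (-t) * gaussianDefect Ξ a x t‖ ≤
        D * h ^ (γ + 1) * (t ^ (ν - 1) * (1 / max (√t) (h + ‖x‖)) ^ (γ + 1)))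
  · rw [integral_const_mul, hval, ← hK, Real.norm_eq_abs] at hbd
    rw [hL, abs_mul, abs_of_pos hA0]
    refine (mul_le_mul_of_nonneg_left hbd hA0.le).trans (le_of_eq ?_)
    have e1 : (2 * ν - ((γ + 1 : ℕ) : ℝ)) = -(d : ℝ) - 1 := by
      rw [hν]; push_cast; ring
    have e2 : h ^ (γ + 1) = h ^ ((γ : ℝ) - d) * h ^ ((d : ℝ) + 1) := by
      rw [← Real.rpow_add hh, ← Real.rpow_natCast]
      congr 1
      push_cast
      ring
    have e3 : (1 + ‖x‖ / h) ^ (-(d : ℝ) - 1) =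
        h ^ ((d : ℝ) + 1) * (h + ‖x‖) ^ (-(d : ℝ) - 1) := by
      rw [show 1 + ‖x‖ / h = (h + ‖x‖) / h by field_simp, Real.div_rpow hR.le hh.le,
        show (d : ℝ) + 1 = -(-(d : ℝ) - 1) by ring, Real.rpow_neg hh.le]
      field_simp
    rw [e1, e2, e3]
    ring
  · have h1 : Real.exp (-t) ≤ 1 := by rw [Real.exp_le_one_iff]; linarith
    have h2 := hdef h hh Ξ a hΞ ha hq x t ht
    rw [norm_mul, norm_mul, Real.norm_of_nonneg (by positivity : 0 ≤ t ^ (ν - 1)),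
      Real.norm_of_nonneg (Real.exp_pos _).le, Real.norm_eq_abs]
    calc _ ≤ t ^ (ν - 1) * 1 * (D * (h / max (√t) (h + ‖x‖)) ^ (γ + 1)) := by gcongr
      _ = _ := by rw [div_eq_mul_one_div, mul_pow]; ring
end
end

section
/- Let d ≥ 2 be even, let γ be an even integer with γ ≥ d+2, let G_γ be the Sobolev spline on ℝ^d, and let C₁, C₂ > 0. There exists a constant C depending only on d, γ, C₁, C₂ such that for every h ∈ (0,1], every finite set Ξ ⊆ B̄(0, C₁h) ⊆ ℝ^d, and every family of real numbers (a_ξ)_{ξ∈Ξ} satisfying Σ_{ξ∈Ξ} |a_ξ| ≤ C₂ and Σ_{ξ∈Ξ} a_ξ q(ξ) = q(0) for every polynomial q on ℝ^d of degree at most γ, one has |G_γ(x) − Σ_{ξ∈Ξ} a_ξ G_γ(x−ξ)| ≤ C h^{γ−d−1} (1 + ‖x‖₂/h)^{−d−1} for all x ∈ ℝ^d. -/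
/-!
The spline `G_γ` is a superposition of Gaussians: writing `(1 + ‖ω‖²)^{-γ/2}` as a Gamma integral
and computing the Fourier transform of a Gaussian gives, with `p = (γ - d)/2 - 1`,
`G_γ(x) = c ∫_0^∞ t^p e^{-t} exp(-‖x‖²/(4t)) dt` (`sobolevSpline_eq`). It therefore suffices to bound
the error functional `λ f = f(x) - ∑ a_ξ f(x - ξ)` on Gaussians of width `w = √(2t)` and to integrate
in `t`.

Along the segment from `x` to `x - ξ`, the `n`-th derivative of such a Gaussian is a homogenized
Hermite polynomial times the Gaussian, hence is at most a constant times
`(‖ξ‖/w)^n (1 + ‖x - sξ‖/w)^{-k}` for any `k` (`exists_gaussian_taylor_le`). The Taylor polynomial of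
degree `n - 1` at `x` is a polynomial in `ξ`, so it is annihilated by `λ` as soon as `n ≤ γ + 1`, and
only the remainder counts (`exists_functional_gaussian_le`).

* For `‖x‖ ≤ 2 C₁ h`, take `n = γ - d - 1 = 2p + 1` and `k = 0`: the bound is a multiple of
  `h^{2p+1} / w^{2p+1}`.
* For `‖x‖ > 2 C₁ h`, all of `x - sξ` has norm at least `‖x‖/2`. Take `n = γ` and `k = d + 1`: the
  bound is a multiple of `h^γ ‖x‖^{-d-1} / w^{2p+1}`.

Both cases are instances of the bound `K h^{γ-d-1} (1 + ‖x‖/h)^{-d-1} w^{-(2p+1)}`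
(`exists_functional_gaussian_decay`), and `t^p w^{-(2p+1)} ≤ t^{-1/2}`, so the remaining integral
`∫_0^∞ t^{-1/2} e^{-t} dt` is finite.
-/

open MeasureTheory Metric Set Complex
open scoped RealInnerProductSpace

noncomputable section

/-! ### Homogenized Hermite polynomials -/

/-- The homogenized Hermite polynomials `κ^{j/2} He_j(u / √κ)`, defined by their three-term
recursion so that they are visibly polynomial in `u` and `κ`. -/
def hermiteHom : ℕ → ℝ → ℝ → ℝ
  | 0, _, _ => 1
  | 1, u, _ => u
  | j + 2, u, κ => u * hermiteHom (j + 1) u κ - (j + 1) * κ * hermiteHom j u κ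

/-- The three-term recursion in a form that includes `j = 0`, where the truncated index `j - 1` is
harmless because it is multiplied by `j`. -/
lemma hermiteHom_succ (j : ℕ) (u κ : ℝ) :
    hermiteHom (j + 1) u κ = u * hermiteHom j u κ - j * κ * hermiteHom (j - 1) u κ := by
  cases j with
  | zero => simp [hermiteHom]
  | succ j => simp [hermiteHom]

lemma hasDerivAt_hermiteHom (j : ℕ) (u κ : ℝ) :
    HasDerivAt (fun v => hermiteHom j v κ) (j * hermiteHom (j - 1) u κ) u := by
  induction j using Nat.strong_induction_on with
  | _ j ih =>
    match j with
    | 0 => simpa [hermiteHom] using hasDerivAt_const u (1 : ℝ)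
    | 1 => simpa [hermiteHom] using hasDerivAt_id' u
    | j + 2 =>
      have h1 := ih (j + 1) (by omega)
      have h0 := ih j (by omega)
      have := ((hasDerivAt_id u).mul h1).sub (h0.const_mul ((j + 1) * κ))
      simp only [hermiteHom]
      refine this.congr_deriv ?_
      simp only [Nat.add_sub_cancel, show j + 2 - 1 = j + 1 by omega, id]
      rw [hermiteHom_succ j u κ]
      push_cast
      ring

lemma exists_abs_hermiteHom_le (j : ℕ) : ∃ C : ℝ, 0 ≤ C ∧ ∀ u r ρ : ℝ, 0 ≤ r → 0 ≤ ρ →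
    |u| ≤ r * ρ → |hermiteHom j u (r ^ 2)| ≤ C * r ^ j * (1 + ρ) ^ j := by
  induction j using Nat.strong_induction_on with
  | _ j ih =>
    match j with
    | 0 => exact ⟨1, by norm_num, fun u r ρ _ _ _ => by simp [hermiteHom]⟩
    | 1 =>
      refine ⟨1, by norm_num, fun u r ρ hr hρ hu => ?_⟩
      simp only [hermiteHom]
      nlinarith
    | j + 2 =>
      obtain ⟨C1, hC1, h1⟩ := ih (j + 1) (by omega)
      obtain ⟨C0, hC0, h0⟩ := ih j (by omega)
      refine ⟨C1 + (j + 1) * C0, by positivity, fun u r ρ hr hρ hu => ?_⟩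
      have h1 := h1 u r ρ hr hρ hu
      have h0 := h0 u r ρ hr hρ hu
      have hu' : |u| ≤ r * (1 + ρ) := hu.trans (by gcongr; linarith)
      have e1 : |u * hermiteHom (j + 1) u (r ^ 2)|
          ≤ r * (1 + ρ) * (C1 * r ^ (j + 1) * (1 + ρ) ^ (j + 1)) := by
        rw [abs_mul]; gcongr
      have e0 : |(j + 1) * r ^ 2 * hermiteHom j u (r ^ 2)|
          ≤ (j + 1) * r ^ 2 * (C0 * r ^ j * (1 + ρ) ^ (j + 2)) := by
        rw [abs_mul, abs_of_nonneg (by positivity : (0:ℝ) ≤ (j + 1) * r ^ 2)]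
        gcongr
        refine h0.trans ?_
        gcongr
        · linarith
        · omega
      simp only [hermiteHom]
      refine (abs_sub _ _).trans ((add_le_add e1 e0).trans (le_of_eq ?_))
      ring

/-- The `j`-th Taylor coefficient of a Gaussian of width `w` at `x`, in the direction `ξ`, is up to a
factor independent of `ξ` a polynomial of degree at most `j` in the coordinates of `ξ`. -/
lemma exists_poly_hermiteHom {d : ℕ} (x : EuclideanSpace ℝ (Fin d)) (w : ℝ) (j : ℕ) :
    ∃ q : MvPolynomial (Fin d) ℝ, q.totalDegree ≤ j ∧ ∀ ξ : EuclideanSpace ℝ (Fin d),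
      MvPolynomial.eval (fun i => ξ i) q
        = hermiteHom j (⟪x, ξ⟫ / w ^ 2) (‖ξ‖ ^ 2 / w ^ 2) := by
  obtain ⟨b, hb, hbe⟩ : ∃ q : MvPolynomial (Fin d) ℝ, q.totalDegree ≤ 1 ∧
      ∀ ξ : EuclideanSpace ℝ (Fin d), MvPolynomial.eval (fun i => ξ i) q = ⟪x, ξ⟫ / w ^ 2 := by
    refine ⟨∑ i, MvPolynomial.C (x i / w ^ 2) * MvPolynomial.X i, ?_, fun ξ => ?_⟩
    · refine MvPolynomial.totalDegree_finsetSum_le fun i _ => ?_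
      refine (MvPolynomial.totalDegree_mul _ _).trans ?_
      simp
    · simp only [map_sum, map_mul, MvPolynomial.eval_C, MvPolynomial.eval_X, PiLp.inner_apply,
        Finset.sum_div]
      refine Finset.sum_congr rfl fun i _ => ?_
      simp
      ring
  obtain ⟨k, hk, hke⟩ : ∃ q : MvPolynomial (Fin d) ℝ, q.totalDegree ≤ 2 ∧
      ∀ ξ : EuclideanSpace ℝ (Fin d),
        MvPolynomial.eval (fun i => ξ i) q = ‖ξ‖ ^ 2 / w ^ 2 := by
    refine ⟨∑ i, MvPolynomial.C (1 / w ^ 2) * MvPolynomial.X i ^ 2, ?_, fun ξ => ?_⟩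
    · refine MvPolynomial.totalDegree_finsetSum_le fun i _ => ?_
      refine (MvPolynomial.totalDegree_mul _ _).trans ?_
      simp
    · simp only [map_sum, map_mul, map_pow, MvPolynomial.eval_C, MvPolynomial.eval_X,
        EuclideanSpace.real_norm_sq_eq, Finset.sum_div]
      refine Finset.sum_congr rfl fun i _ => ?_
      ring
  induction j using Nat.strong_induction_on with
  | _ j ih =>
    match j with
    | 0 => exact ⟨1, by simp, fun ξ => by simp [hermiteHom]⟩
    | 1 => exact ⟨b, hb, fun ξ => by simp [hermiteHom, hbe]⟩
    | j + 2 =>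
      obtain ⟨q1, hq1, h1⟩ := ih (j + 1) (by omega)
      obtain ⟨q0, hq0, h0⟩ := ih j (by omega)
      refine ⟨b * q1 - MvPolynomial.C ((j : ℝ) + 1) * k * q0, ?_, fun ξ => ?_⟩
      · refine (MvPolynomial.totalDegree_sub _ _).trans (max_le ?_ ?_)
        · have := MvPolynomial.totalDegree_mul b q1
          omega
        · have e1 := MvPolynomial.totalDegree_mul (MvPolynomial.C ((j : ℝ) + 1) * k) q0
          have e2 := MvPolynomial.totalDegree_mul (MvPolynomial.C ((j : ℝ) + 1)) k
          have e3 := MvPolynomial.totalDegree_C (σ := Fin d) ((j : ℝ) + 1)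
          omega
      · simp only [hermiteHom, map_sub, map_mul, MvPolynomial.eval_C, hbe, hke, h1, h0]

/-! ### Taylor estimates for Gaussians -/

/-- A crude Taylor estimate on `[0, 1]`, for a function given together with all its successive
derivatives `f j`. -/
lemma taylor_chain (n : ℕ) (f : ℕ → ℝ → ℝ) (M : ℝ)
    (hf : ∀ j s, HasDerivAt (f j) (f (j + 1) s) s)
    (hM : ∀ s ∈ Icc (0 : ℝ) 1, |f n s| ≤ M) :
    ∀ s ∈ Icc (0 : ℝ) 1,
      |f 0 s - ∑ j ∈ Finset.range n, f j 0 * (s ^ j / (j.factorial : ℝ))| ≤ M := by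
  induction n generalizing f with
  | zero => simpa using hM
  | succ n ih =>
    have ih' := ih (fun j => f (j + 1)) (fun j s => hf (j + 1) s) hM
    have hM0 : 0 ≤ M := (abs_nonneg _).trans (hM 0 (by simp))
    set φ : ℝ → ℝ := fun s => f 0 s
      - ∑ j ∈ Finset.range (n + 1), f j 0 * (s ^ j / (j.factorial : ℝ)) with hφ
    have hφ' : ∀ s, HasDerivAt φ (f 1 s
        - ∑ j ∈ Finset.range n, f (j + 1) 0 * (s ^ j / (j.factorial : ℝ))) s := by
      intro s
      have hs : HasDerivAt (fun s : ℝ =>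
          ∑ j ∈ Finset.range (n + 1), f j 0 * (s ^ j / (j.factorial : ℝ)))
          (∑ j ∈ Finset.range (n + 1), f j 0 * ((j * s ^ (j - 1)) / (j.factorial : ℝ))) s := by
        refine HasDerivAt.fun_sum fun j _ => ?_
        exact ((hasDerivAt_pow j s).div_const _).const_mul _
      refine ((hf 0 s).sub hs).congr_deriv ?_
      rw [Finset.sum_range_succ']
      simp only [Nat.cast_zero, zero_mul, zero_div, mul_zero, add_zero, zero_add,
        Nat.add_sub_cancel]
      congr 1
      refine Finset.sum_congr rfl fun j _ => ?_
      rw [Nat.factorial_succ]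
      have : (j.factorial : ℝ) ≠ 0 := by positivity
      push_cast
      field_simp
    have h0 : φ 0 = 0 := by
      simp only [hφ]
      rw [Finset.sum_range_succ']
      simp
    intro s hs
    have := norm_image_sub_le_of_norm_deriv_le_segment' (f := φ) (C := M) (a := 0) (b := 1)
      (fun y _ => (hφ' y).hasDerivWithinAt)
      (fun y hy => ih' y ⟨hy.1, hy.2.le⟩) s hs
    rw [h0, sub_zero, sub_zero] at this
    exact this.trans (by nlinarith [hs.2])

lemma exists_one_add_pow_mul_exp_le (N : ℕ) : ∃ C : ℝ, 0 ≤ C ∧ ∀ ρ : ℝ, 0 ≤ ρ →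
    (1 + ρ) ^ N * Real.exp (-(ρ ^ 2 / 2)) ≤ C := by
  refine ⟨N.factorial * Real.exp (3 / 2), by positivity, fun ρ hρ => ?_⟩
  have h := Real.pow_div_factorial_le_exp (1 + ρ) (by linarith) N
  rw [div_le_iff₀ (by positivity)] at h
  calc (1 + ρ) ^ N * Real.exp (-(ρ ^ 2 / 2))
      ≤ Real.exp (1 + ρ) * N.factorial * Real.exp (-(ρ ^ 2 / 2)) := by gcongr
    _ = N.factorial * Real.exp (1 + ρ + -(ρ ^ 2 / 2)) := by rw [Real.exp_add (1 + ρ)]; ring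
    _ ≤ N.factorial * Real.exp (3 / 2) := by
      gcongr
      nlinarith [sq_nonneg (ρ - 1)]

/-- Taylor estimate for the Gaussian of width `w` along the segment from `x` to `x - ξ`. The number
`D` is a lower bound for `1 + ‖y‖ / w` on that segment, so `D⁻ᵏ` records the decay of the Gaussian. -/
lemma exists_gaussian_taylor_le (d n k : ℕ) : ∃ C : ℝ, 0 ≤ C ∧
    ∀ (x ξ : EuclideanSpace ℝ (Fin d)) (w D : ℝ), 0 < w → 0 < D →
      (∀ s ∈ Icc (0 : ℝ) 1, D ≤ 1 + ‖x - s • ξ‖ / w) →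
      |Real.exp (-(‖x - ξ‖ ^ 2 / (2 * w ^ 2)))
        - ∑ j ∈ Finset.range n, hermiteHom j (⟪x, ξ⟫ / w ^ 2) (‖ξ‖ ^ 2 / w ^ 2)
            / (j.factorial : ℝ) * Real.exp (-(‖x‖ ^ 2 / (2 * w ^ 2)))|
      ≤ C * (‖ξ‖ / w) ^ n / D ^ k := by
  obtain ⟨A, hA, hAb⟩ := exists_abs_hermiteHom_le n
  obtain ⟨B, hB, hBb⟩ := exists_one_add_pow_mul_exp_le (n + k)
  refine ⟨A * B, by positivity, fun x ξ w D hw hD hDs => ?_⟩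
  set f : ℕ → ℝ → ℝ := fun j s => hermiteHom j (⟪x - s • ξ, ξ⟫ / w ^ 2) (‖ξ‖ ^ 2 / w ^ 2)
    * Real.exp (-(‖x - s • ξ‖ ^ 2 / (2 * w ^ 2))) with hf
  -- `f j` is the `j`-th derivative of `s ↦ exp(-‖x - sξ‖² / (2w²))`.
  have hu : ∀ s : ℝ, HasDerivAt (fun s : ℝ => ⟪x - s • ξ, ξ⟫ / w ^ 2) (-(‖ξ‖ ^ 2 / w ^ 2)) s := by
    intro s
    have e : (fun s : ℝ => ⟪x - s • ξ, ξ⟫ / w ^ 2)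
        = fun s : ℝ => (⟪x, ξ⟫ - s * ‖ξ‖ ^ 2) / w ^ 2 := by
      funext s
      rw [inner_sub_left, real_inner_smul_left, real_inner_self_eq_norm_sq]
    rw [e]
    refine ((((hasDerivAt_id s).mul_const (‖ξ‖ ^ 2)).const_sub ⟪x, ξ⟫).div_const _).congr_deriv ?_
    ring
  have hE : ∀ s : ℝ, HasDerivAt (fun s : ℝ => Real.exp (-(‖x - s • ξ‖ ^ 2 / (2 * w ^ 2))))
      (Real.exp (-(‖x - s • ξ‖ ^ 2 / (2 * w ^ 2))) * (⟪x - s • ξ, ξ⟫ / w ^ 2)) s := by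
    intro s
    have h1 : HasDerivAt (fun s : ℝ => x - s • ξ) (-ξ) s := by
      simpa using ((hasDerivAt_id s).smul_const ξ).const_sub x
    refine ((h1.norm_sq.div_const (2 * w ^ 2)).neg.exp).congr_deriv ?_
    rw [inner_neg_right, Pi.neg_apply]
    field_simp
  have hder : ∀ j s, HasDerivAt (f j) (f (j + 1) s) s := by
    intro j s
    have h1 := (hasDerivAt_hermiteHom j (⟪x - s • ξ, ξ⟫ / w ^ 2) (‖ξ‖ ^ 2 / w ^ 2)).comp s (hu s)
    refine (h1.mul (hE s)).congr_deriv ?_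
    simp only [hf, hermiteHom_succ, Function.comp]
    ring
  have hbound : ∀ s ∈ Icc (0 : ℝ) 1, |f n s| ≤ A * B * (‖ξ‖ / w) ^ n / D ^ k := by
    intro s hs
    set ρ := ‖x - s • ξ‖ / w with hρ
    have hρ0 : 0 ≤ ρ := by positivity
    have hr0 : 0 ≤ ‖ξ‖ / w := by positivity
    have h1 : |⟪x - s • ξ, ξ⟫ / w ^ 2| ≤ ‖ξ‖ / w * ρ := by
      rw [abs_div, abs_of_pos (by positivity : 0 < w ^ 2), div_le_iff₀ (by positivity)]
      refine (abs_real_inner_le_norm _ _).trans (le_of_eq ?_)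
      rw [hρ]; field_simp
    have h2 := hAb _ _ _ hr0 hρ0 h1
    have h3 : ‖x - s • ξ‖ ^ 2 / (2 * w ^ 2) = ρ ^ 2 / 2 := by rw [hρ]; field_simp
    have h4 := hBb ρ hρ0
    have hD1 : D ^ k ≤ (1 + ρ) ^ k := by
      gcongr
      exact hDs s hs
    rw [le_div_iff₀ (by positivity)]
    simp only [hf]
    rw [abs_mul, Real.abs_exp, h3]
    calc _ ≤ A * (‖ξ‖ / w) ^ n * (1 + ρ) ^ n * Real.exp (-(ρ ^ 2 / 2)) * (1 + ρ) ^ k := by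
          rw [div_pow ‖ξ‖ w 2] at h2
          gcongr
      _ = A * (‖ξ‖ / w) ^ n * ((1 + ρ) ^ (n + k) * Real.exp (-(ρ ^ 2 / 2))) := by
          rw [pow_add]; ring
      _ ≤ A * (‖ξ‖ / w) ^ n * B := by gcongr
      _ = _ := by ring
  have := taylor_chain n f _ hder hbound 1 (by simp)
  simp only [hf, hermiteHom, one_smul, zero_smul, sub_zero, one_mul, one_pow] at this
  refine le_trans (le_of_eq ?_) this
  congr 2
  refine Finset.sum_congr rfl fun j _ => ?_
  ring

/-! ### The spline as a superposition of Gaussians -/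

lemma integrableOn_pow_mul_exp_s7 (n : ℕ) {r : ℝ} (hr : 0 < r) :
    IntegrableOn (fun t : ℝ => t ^ n * Real.exp (-(r * t))) (Ioi 0) := by
  have := integrableOn_rpow_mul_exp_neg_mul_rpow (p := 1) (s := n) (b := r)
    (by have : (0 : ℝ) ≤ n := by positivity
        linarith) one_pos hr
  refine this.congr_fun (fun t _ => ?_) measurableSet_Ioi
  simp

lemma integral_pow_mul_exp (n : ℕ) {r : ℝ} (hr : 0 < r) :
    ∫ t in Ioi (0 : ℝ), t ^ n * Real.exp (-(r * t)) =
      Real.Gamma (n + 1) * r ^ (-((n : ℝ) + 1)) := by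
  have := Real.integral_rpow_mul_exp_neg_mul_Ioi (a := n + 1) (r := r) (by positivity) hr
  simp only [add_sub_cancel_right, Real.rpow_natCast] at this
  rw [this, one_div, Real.inv_rpow hr.le, Real.rpow_neg hr.le, mul_comm]

/-- Integrability on `ℝ^d × (0, ∞)` that justifies exchanging the Fourier integral with the Gamma
integral for `(1 + ‖ω‖²)^{-(n+1)}`; the hypothesis `hn` makes that function integrable. -/
lemma integrable_subordination (d n : ℕ) (hn : (d : ℝ) < 2 * (n + 1))
    (x : EuclideanSpace ℝ (Fin d)) :
    Integrable (Function.uncurry fun (ω : EuclideanSpace ℝ (Fin d)) (t : ℝ) =>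
      ((t ^ n * Real.exp (-((1 + ‖ω‖ ^ 2) * t)) : ℝ) : ℂ)
        * Complex.exp (Complex.I * (⟪x, ω⟫ : ℝ)))
      ((volume : Measure (EuclideanSpace ℝ (Fin d))).prod
        ((volume : Measure ℝ).restrict (Ioi 0))) := by
  have hnorm : ∀ (ω : EuclideanSpace ℝ (Fin d)) (t : ℝ), t ∈ Ioi (0 : ℝ) →
      t ^ n * Real.exp (-((1 + ‖ω‖ ^ 2) * t)) =
      ‖((t ^ n * Real.exp (-((1 + ‖ω‖ ^ 2) * t)) : ℝ) : ℂ)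
        * Complex.exp (Complex.I * (⟪x, ω⟫ : ℝ))‖ := by
    intro ω t ht
    have ht' : (0 : ℝ) < t := ht
    rw [norm_mul, mul_comm Complex.I, Complex.norm_exp_ofReal_mul_I, mul_one, Complex.norm_real,
      Real.norm_of_nonneg (by positivity)]
  have hcont : Continuous (Function.uncurry fun (ω : EuclideanSpace ℝ (Fin d)) (t : ℝ) =>
      ((t ^ n * Real.exp (-((1 + ‖ω‖ ^ 2) * t)) : ℝ) : ℂ)
        * Complex.exp (Complex.I * (⟪x, ω⟫ : ℝ))) := by
    unfold Function.uncurry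
    fun_prop
  rw [integrable_prod_iff hcont.aestronglyMeasurable]
  constructor
  · refine Filter.Eventually.of_forall fun ω => ?_
    have h1 := integrableOn_pow_mul_exp_s7 n (r := 1 + ‖ω‖ ^ 2) (by positivity)
    refine Integrable.mono' h1 ?_ ?_
    · exact (hcont.comp (by fun_prop : Continuous fun t : ℝ => (ω, t))).aestronglyMeasurable
    · filter_upwards [ae_restrict_mem measurableSet_Ioi] with t ht
      exact (hnorm ω t ht).ge
  · have h2 : Integrable (fun ω : EuclideanSpace ℝ (Fin d) =>
        Real.Gamma (n + 1) * (1 + ‖ω‖ ^ 2) ^ (-(2 * ((n : ℝ) + 1)) / 2)) :=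
      (integrable_rpow_neg_one_add_norm_sq (by simpa using hn)).const_mul _
    refine h2.congr (Filter.Eventually.of_forall fun ω => ?_)
    simp only [Function.uncurry]
    rw [← setIntegral_congr_fun measurableSet_Ioi (hnorm ω),
      integral_pow_mul_exp n (by positivity)]
    congr 2
    ring

lemma integral_gaussian_exp_inner (d e : ℕ) (hde : d = e + e) (x : EuclideanSpace ℝ (Fin d))
    {t : ℝ} (ht : 0 < t) :
    ∫ ω : EuclideanSpace ℝ (Fin d), ((Real.exp (-(‖ω‖ ^ 2 * t)) : ℝ) : ℂ)
        * Complex.exp (Complex.I * (⟪x, ω⟫ : ℝ))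
      = (((Real.pi / t) ^ e * Real.exp (-(‖x‖ ^ 2 / (4 * t))) : ℝ) : ℂ) := by
  have := GaussianFourier.integral_cexp_neg_mul_sq_norm_add (b := (t : ℂ)) (by simpa using ht)
    Complex.I x
  have hfin : ((Module.finrank ℝ (EuclideanSpace ℝ (Fin d)) : ℂ) / 2) = (e : ℂ) := by
    simp [hde]
  rw [hfin, Complex.cpow_natCast] at this
  push_cast
  convert this using 3
  · rw [← Complex.exp_add]
    congr 1
    ring
  · rw [Complex.I_sq]
    ring

/-- For `d = 2e` and `γ = 2(e + p + 1)`, the spline is a mixture of heat kernels: the weight `t^{e+p}`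
of the Gamma integral and the factor `(π/t)^e` of the Gaussian Fourier transform leave `t^p`. -/
lemma sobolevSpline_eq (d γ e p : ℕ) (hde : d = e + e) (hγ : γ = 2 * (e + p + 1)) :
    ∃ c : ℝ, 0 ≤ c ∧ ∀ x : EuclideanSpace ℝ (Fin d), sobolevSpline d γ x =
      c * ∫ t in Ioi (0 : ℝ), t ^ p * Real.exp (-t) * Real.exp (-(‖x‖ ^ 2 / (4 * t))) := by
  have hG : 0 < Real.Gamma ((e + p : ℕ) + 1) := Real.Gamma_pos_of_pos (by positivity)
  refine ⟨((Real.sqrt (2 * Real.pi)) ^ d)⁻¹ * ((Real.Gamma ((e + p : ℕ) + 1))⁻¹ * Real.pi ^ e),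
    by positivity, fun x => ?_⟩
  have key : (Real.Gamma ((e + p : ℕ) + 1) : ℂ) * ∫ ω : EuclideanSpace ℝ (Fin d),
      (((1 + ‖ω‖ ^ 2) ^ (-((γ : ℝ) / 2)) : ℝ) : ℂ) * Complex.exp (Complex.I * (⟪x, ω⟫ : ℝ))
      = ((Real.pi ^ e * ∫ t in Ioi (0 : ℝ),
          t ^ p * Real.exp (-t) * Real.exp (-(‖x‖ ^ 2 / (4 * t))) : ℝ) : ℂ) := by
    calc _ = ∫ ω : EuclideanSpace ℝ (Fin d), ∫ t in Ioi (0 : ℝ),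
          ((t ^ (e + p) * Real.exp (-((1 + ‖ω‖ ^ 2) * t)) : ℝ) : ℂ)
            * Complex.exp (Complex.I * (⟪x, ω⟫ : ℝ)) := by
          rw [← integral_const_mul]
          refine integral_congr_ae (Filter.Eventually.of_forall fun ω => ?_)
          simp only
          rw [integral_mul_const, integral_complex_ofReal,
            integral_pow_mul_exp (e + p) (by positivity), ← mul_assoc, ← Complex.ofReal_mul]
          congr 4
          rw [hγ]
          push_cast
          ring
      _ = ∫ t in Ioi (0 : ℝ), ∫ ω : EuclideanSpace ℝ (Fin d),
          ((t ^ (e + p) * Real.exp (-((1 + ‖ω‖ ^ 2) * t)) : ℝ) : ℂ)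
            * Complex.exp (Complex.I * (⟪x, ω⟫ : ℝ)) := by
          refine integral_integral_swap (integrable_subordination d (e + p) ?_ x)
          rw [hde]
          push_cast
          have : (0 : ℝ) ≤ p := by positivity
          linarith
      _ = ∫ t in Ioi (0 : ℝ), ((Real.pi ^ e * (t ^ p * Real.exp (-t)
            * Real.exp (-(‖x‖ ^ 2 / (4 * t)))) : ℝ) : ℂ) := by
          refine setIntegral_congr_fun measurableSet_Ioi fun t ht => ?_
          have ht' : (0 : ℝ) < t := ht
          have hsplit : ∀ ω : EuclideanSpace ℝ (Fin d),
              ((t ^ (e + p) * Real.exp (-((1 + ‖ω‖ ^ 2) * t)) : ℝ) : ℂ)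
                * Complex.exp (Complex.I * (⟪x, ω⟫ : ℝ))
              = ((t ^ (e + p) * Real.exp (-t) : ℝ) : ℂ) *
                (((Real.exp (-(‖ω‖ ^ 2 * t)) : ℝ) : ℂ)
                  * Complex.exp (Complex.I * (⟪x, ω⟫ : ℝ))) := by
            intro ω
            rw [show -((1 + ‖ω‖ ^ 2) * t) = -t + -(‖ω‖ ^ 2 * t) by ring, Real.exp_add]
            push_cast
            ring
          simp only [hsplit]
          rw [integral_const_mul, integral_gaussian_exp_inner d e hde x ht', ← Complex.ofReal_mul]
          congr 1
          rw [pow_add, div_pow]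
          field_simp
      _ = _ := by rw [integral_complex_ofReal, integral_const_mul]
  have hG' : (Real.Gamma ((e + p : ℕ) + 1) : ℂ) ≠ 0 := by exact_mod_cast hG.ne'
  have key2 := (eq_inv_mul_iff_mul_eq₀ hG').mpr key
  unfold sobolevSpline
  rw [key2, ← Complex.ofReal_inv, ← Complex.ofReal_mul, ← Complex.ofReal_mul, Complex.ofReal_re]
  ring

/-! ### The error functional on Gaussians -/

/-- The error functional kills the Taylor polynomial of degree `n - 1 ≤ γ` of the Gaussian, so it is
controlled by the Taylor remainder. -/
lemma exists_functional_gaussian_le (d γ n k : ℕ) (hn1 : 1 ≤ n) (hn : n ≤ γ + 1) :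
    ∃ C : ℝ, 0 ≤ C ∧ ∀ (Ξ : Finset (EuclideanSpace ℝ (Fin d)))
      (a : EuclideanSpace ℝ (Fin d) → ℝ) (C₂ : ℝ), (∑ ξ ∈ Ξ, |a ξ| ≤ C₂) →
      (∀ q : MvPolynomial (Fin d) ℝ, q.totalDegree ≤ γ →
        ∑ ξ ∈ Ξ, a ξ * MvPolynomial.eval (fun i => ξ i) q =
          MvPolynomial.eval (fun _ => (0 : ℝ)) q) →
      ∀ (x : EuclideanSpace ℝ (Fin d)) (w D R : ℝ), 0 < w → 0 < D → 0 ≤ R →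
      (∀ ξ ∈ Ξ, ‖ξ‖ ≤ R) →
      (∀ ξ ∈ Ξ, ∀ s ∈ Icc (0 : ℝ) 1, D ≤ 1 + ‖x - s • ξ‖ / w) →
      |Real.exp (-(‖x‖ ^ 2 / (2 * w ^ 2)))
        - ∑ ξ ∈ Ξ, a ξ * Real.exp (-(‖x - ξ‖ ^ 2 / (2 * w ^ 2)))|
        ≤ C₂ * (C * (R / w) ^ n / D ^ k) := by
  obtain ⟨C, hC, hCb⟩ := exists_gaussian_taylor_le d n k
  refine ⟨C, hC, fun Ξ a C₂ ha hq x w D R hw hD hR hΞ hDs => ?_⟩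
  set g : ℝ := Real.exp (-(‖x‖ ^ 2 / (2 * w ^ 2))) with hg
  set T : EuclideanSpace ℝ (Fin d) → ℝ := fun ξ => ∑ j ∈ Finset.range n,
    hermiteHom j (⟪x, ξ⟫ / w ^ 2) (‖ξ‖ ^ 2 / w ^ 2) / (j.factorial : ℝ) * g with hT
  choose q hqd hqe using exists_poly_hermiteHom x w
  set Q : MvPolynomial (Fin d) ℝ :=
    ∑ j ∈ Finset.range n, MvPolynomial.C (g / (j.factorial : ℝ)) * q j with hQ
  have hQe : ∀ ξ : EuclideanSpace ℝ (Fin d), MvPolynomial.eval (fun i => ξ i) Q = T ξ := by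
    intro ξ
    simp only [hQ, hT, map_sum, map_mul, MvPolynomial.eval_C, hqe]
    refine Finset.sum_congr rfl fun j _ => ?_
    ring
  have hQd : Q.totalDegree ≤ γ := by
    refine MvPolynomial.totalDegree_finsetSum_le fun j hj => ?_
    have e1 := MvPolynomial.totalDegree_mul (MvPolynomial.C (g / (j.factorial : ℝ))) (q j)
    have e2 := MvPolynomial.totalDegree_C (σ := Fin d) (g / (j.factorial : ℝ))
    have e3 := hqd j
    have e4 := Finset.mem_range.mp hj
    omega
  have hT0 : T 0 = g := by
    simp only [hT]
    rw [Finset.sum_eq_single_of_mem 0 (Finset.mem_range.mpr hn1)]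
    · simp [hermiteHom]
    · intro j _ hj
      obtain ⟨i, rfl⟩ := Nat.exists_eq_succ_of_ne_zero hj
      simp [hermiteHom_succ]
  have hsum : ∑ ξ ∈ Ξ, a ξ * T ξ = g := by
    have h1 := hq Q hQd
    have h0 : MvPolynomial.eval (fun _ => (0 : ℝ)) Q = g := by
      rw [← hT0, ← hQe 0]; rfl
    rw [h0] at h1
    simpa only [hQe] using h1
  have hdiff : g - ∑ ξ ∈ Ξ, a ξ * Real.exp (-(‖x - ξ‖ ^ 2 / (2 * w ^ 2)))
      = -∑ ξ ∈ Ξ, a ξ * (Real.exp (-(‖x - ξ‖ ^ 2 / (2 * w ^ 2))) - T ξ) := by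
    simp only [mul_sub, Finset.sum_sub_distrib, hsum]
    ring
  rw [hdiff, abs_neg]
  calc _ ≤ ∑ ξ ∈ Ξ, |a ξ| * (C * (R / w) ^ n / D ^ k) := by
        refine (Finset.abs_sum_le_sum_abs _ _).trans (Finset.sum_le_sum fun ξ hξ => ?_)
        rw [abs_mul]
        gcongr
        refine (hCb x ξ w D hw hD (hDs ξ hξ)).trans ?_
        gcongr
        exact hΞ ξ hξ
    _ ≤ _ := by
        rw [← Finset.sum_mul]
        gcongr

/-- The estimate for Gaussians, with the power of `w` that makes the integral over all widths
converge. It combines the case `‖x‖ ≤ 2 C₁ h` (fewer derivatives, no decay) with the case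
`‖x‖ > 2 C₁ h` (`γ` derivatives, decay of order `d + 1`). -/
lemma exists_functional_gaussian_decay (d γ p : ℕ) (hγ : γ = d + 1 + (2 * p + 1))
    (C₁ C₂ : ℝ) (hC₁ : 0 < C₁) (hC₂ : 0 < C₂) :
    ∃ K : ℝ, 0 ≤ K ∧ ∀ h : ℝ, 0 < h →
      ∀ (Ξ : Finset (EuclideanSpace ℝ (Fin d))) (a : EuclideanSpace ℝ (Fin d) → ℝ),
      (∀ ξ ∈ Ξ, ‖ξ‖ ≤ C₁ * h) → (∑ ξ ∈ Ξ, |a ξ| ≤ C₂) →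
      (∀ q : MvPolynomial (Fin d) ℝ, q.totalDegree ≤ γ →
        ∑ ξ ∈ Ξ, a ξ * MvPolynomial.eval (fun i => ξ i) q =
          MvPolynomial.eval (fun _ => (0 : ℝ)) q) →
      ∀ (x : EuclideanSpace ℝ (Fin d)) (w : ℝ), 0 < w →
      |Real.exp (-(‖x‖ ^ 2 / (2 * w ^ 2)))
        - ∑ ξ ∈ Ξ, a ξ * Real.exp (-(‖x - ξ‖ ^ 2 / (2 * w ^ 2)))|
        ≤ K * (h ^ (2 * p + 1) / (1 + ‖x‖ / h) ^ (d + 1)) / w ^ (2 * p + 1) := by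
  obtain ⟨A, hA, hAb⟩ := exists_functional_gaussian_le d γ (2 * p + 1) 0 (by omega) (by omega)
  obtain ⟨B, hB, hBb⟩ := exists_functional_gaussian_le d γ γ (d + 1) (by omega) (by omega)
  refine ⟨C₂ * A * C₁ ^ (2 * p + 1) * (1 + 2 * C₁) ^ (d + 1)
    + C₂ * B * C₁ ^ γ * 2 ^ (d + 1) * (1 + 1 / (2 * C₁)) ^ (d + 1), by positivity,
    fun h hh Ξ a hΞ ha hq x w hw => ?_⟩
  have hZ : 0 < 1 + ‖x‖ / h := by positivity
  rcases le_or_gt ‖x‖ (2 * C₁ * h) with hx | hx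
  · have h1 := hAb Ξ a C₂ ha hq x w 1 (C₁ * h) hw one_pos (by positivity) hΞ
      (fun ξ _ s _ => by
        have : 0 ≤ ‖x - s • ξ‖ / w := by positivity
        linarith)
    refine h1.trans ?_
    have hZ1 : 1 + ‖x‖ / h ≤ 1 + 2 * C₁ := by
      gcongr
      rwa [div_le_iff₀ hh]
    have h2 : 1 ≤ (1 + 2 * C₁) ^ (d + 1) / (1 + ‖x‖ / h) ^ (d + 1) := by
      rw [one_le_div (by positivity)]
      gcongr
    calc C₂ * (A * (C₁ * h / w) ^ (2 * p + 1) / 1 ^ 0)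
        = C₂ * A * C₁ ^ (2 * p + 1) * h ^ (2 * p + 1) / w ^ (2 * p + 1) * 1 := by
          rw [div_pow, mul_pow, pow_zero]; ring
      _ ≤ C₂ * A * C₁ ^ (2 * p + 1) * h ^ (2 * p + 1) / w ^ (2 * p + 1)
          * ((1 + 2 * C₁) ^ (d + 1) / (1 + ‖x‖ / h) ^ (d + 1)) := by gcongr
      _ = C₂ * A * C₁ ^ (2 * p + 1) * (1 + 2 * C₁) ^ (d + 1)
          * (h ^ (2 * p + 1) / (1 + ‖x‖ / h) ^ (d + 1)) / w ^ (2 * p + 1) := by ring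
      _ ≤ _ := by
          gcongr
          exact le_add_of_nonneg_right (by positivity)
  · have hx0 : 0 < ‖x‖ := lt_trans (by positivity) hx
    have h1 := hBb Ξ a C₂ ha hq x w (‖x‖ / (2 * w)) (C₁ * h) hw (by positivity) (by positivity) hΞ
      (fun ξ hξ s hs => by
        have e1 : ‖s • ξ‖ ≤ C₁ * h := by
          rw [norm_smul, Real.norm_of_nonneg hs.1]
          have := hΞ ξ hξ
          nlinarith [hs.2, norm_nonneg ξ]
        have e2 : ‖x‖ / 2 ≤ ‖x - s • ξ‖ := by
          have := norm_sub_norm_le x (s • ξ)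
          linarith
        have e3 : ‖x‖ / (2 * w) ≤ ‖x - s • ξ‖ / w := by
          rw [← div_div]; gcongr
        linarith)
    refine h1.trans ?_
    have h2 : h / ‖x‖ ≤ (1 + 1 / (2 * C₁)) / (1 + ‖x‖ / h) := by
      rw [le_div_iff₀ hZ]
      have e1 : h / ‖x‖ * (1 + ‖x‖ / h) = 1 + h / ‖x‖ := by field_simp; ring
      rw [e1]
      refine add_le_add_right ?_ 1
      rw [div_le_div_iff₀ hx0 (by positivity)]
      linarith
    calc C₂ * (B * (C₁ * h / w) ^ γ / (‖x‖ / (2 * w)) ^ (d + 1))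
        = C₂ * B * C₁ ^ γ * 2 ^ (d + 1) * h ^ (2 * p + 1) / w ^ (2 * p + 1)
          * (h / ‖x‖) ^ (d + 1) := by
          rw [hγ, div_pow, mul_pow, div_pow, mul_pow, div_pow, pow_add w, pow_add h]
          field_simp
      _ ≤ C₂ * B * C₁ ^ γ * 2 ^ (d + 1) * h ^ (2 * p + 1) / w ^ (2 * p + 1)
          * ((1 + 1 / (2 * C₁)) / (1 + ‖x‖ / h)) ^ (d + 1) := by gcongr
      _ = C₂ * B * C₁ ^ γ * 2 ^ (d + 1) * (1 + 1 / (2 * C₁)) ^ (d + 1)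
          * (h ^ (2 * p + 1) / (1 + ‖x‖ / h) ^ (d + 1)) / w ^ (2 * p + 1) := by
          rw [div_pow]; ring
      _ ≤ _ := by
          gcongr
          exact le_add_of_nonneg_left (by positivity)

lemma integrableOn_spline_integrand (d p : ℕ) (x : EuclideanSpace ℝ (Fin d)) :
    IntegrableOn (fun t : ℝ => t ^ p * Real.exp (-t) * Real.exp (-(‖x‖ ^ 2 / (4 * t))))
      (Ioi 0) := by
  refine Integrable.mono' (integrableOn_pow_mul_exp_s7 p one_pos) ?_ ?_
  · exact (by fun_prop : Measurable _).aestronglyMeasurable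
  · filter_upwards [ae_restrict_mem measurableSet_Ioi] with t ht
    have ht' : (0 : ℝ) < t := ht
    rw [Real.norm_of_nonneg (by positivity), one_mul]
    refine mul_le_of_le_one_right (by positivity) (Real.exp_le_one_iff.mpr ?_)
    have : 0 ≤ ‖x‖ ^ 2 / (4 * t) := by positivity
    linarith

lemma pow_div_sqrt_pow_le (p : ℕ) {t : ℝ} (ht : 0 < t) :
    t ^ p / Real.sqrt (2 * t) ^ (2 * p + 1) ≤ t ^ ((1 / 2 : ℝ) - 1) := by
  have e : t ^ ((1 / 2 : ℝ) - 1) = 1 / Real.sqrt t := by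
    rw [Real.sqrt_eq_rpow, one_div (t ^ _), ← Real.rpow_neg ht.le]
    norm_num
  have hs : 0 < Real.sqrt t := Real.sqrt_pos.mpr ht
  rw [e, div_le_div_iff₀ (by positivity) hs, one_mul]
  calc t ^ p * Real.sqrt t = Real.sqrt t ^ (2 * p + 1) := by
        rw [pow_succ, pow_mul, Real.sq_sqrt ht.le]
    _ ≤ Real.sqrt (2 * t) ^ (2 * p + 1) := by
        gcongr
        linarith

/-! ### The kernel estimate -/

/-- kernel estimate for Sobolev splines, `d` even.
If `d ≥ 2` is even, `γ ≥ d+2` is even, and `(a_ξ)_{ξ∈Ξ}` are coefficients supported in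
`B̄(0, C₁h)` with `Σ|a_ξ| ≤ C₂` reproducing the value at `0` of every polynomial of
degree `≤ γ`, then
`|G_γ(x) - Σ a_ξ G_γ(x-ξ)| ≤ C h^{γ-d-1} (1 + ‖x‖/h)^{-d-1}` for all `x`. -/
theorem stmt7 (d : ℕ) (hd2 : 2 ≤ d) (hd : Even d) (γ : ℕ) (hγe : Even γ) (hγ : d + 2 ≤ γ)
    (C₁ C₂ : ℝ) (hC₁ : 0 < C₁) (hC₂ : 0 < C₂) :
    ∃ C : ℝ, 0 < C ∧
      ∀ h : ℝ, 0 < h → h ≤ 1 →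
      ∀ (Ξ : Finset (EuclideanSpace ℝ (Fin d))) (a : EuclideanSpace ℝ (Fin d) → ℝ),
        (∀ ξ ∈ Ξ, ‖ξ‖ ≤ C₁ * h) →
        (∑ ξ ∈ Ξ, |a ξ| ≤ C₂) →
        (∀ q : MvPolynomial (Fin d) ℝ, q.totalDegree ≤ γ →
          ∑ ξ ∈ Ξ, a ξ * MvPolynomial.eval (fun i => ξ i) q =
            MvPolynomial.eval (fun _ => (0 : ℝ)) q) →
        ∀ x : EuclideanSpace ℝ (Fin d),
          |sobolevSpline d γ x - ∑ ξ ∈ Ξ, a ξ * sobolevSpline d γ (x - ξ)| ≤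
            C * h ^ ((γ : ℝ) - d - 1) * (1 + ‖x‖ / h) ^ (-(d : ℝ) - 1) := by
  obtain ⟨e, hde⟩ := hd
  obtain ⟨m, hm⟩ := hγe
  obtain ⟨p, hp⟩ : ∃ p, m = e + p + 1 := ⟨m - e - 1, by omega⟩
  have hγp : γ = d + 1 + (2 * p + 1) := by omega
  obtain ⟨c, hc, hcG⟩ := sobolevSpline_eq d γ e p hde (by omega)
  obtain ⟨K, hK, hKb⟩ := exists_functional_gaussian_decay d γ p hγp C₁ C₂ hC₁ hC₂
  set J : ℝ := ∫ t in Ioi (0 : ℝ), Real.exp (-t) * t ^ ((1 / 2 : ℝ) - 1) with hJ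
  have hJ0 : 0 ≤ J := setIntegral_nonneg measurableSet_Ioi fun t ht => by
    have ht' : (0 : ℝ) < t := ht
    positivity
  refine ⟨c * K * J + 1, by positivity, fun h hh hh1 Ξ a hΞ ha hq x => ?_⟩
  set Z : ℝ := 1 + ‖x‖ / h with hZdef
  have hZ : 0 < Z := by positivity
  have e1 : h ^ ((γ : ℝ) - d - 1) = h ^ (2 * p + 1) := by
    rw [← Real.rpow_natCast, hγp]
    congr 1
    push_cast
    ring
  have e2 : Z ^ (-(d : ℝ) - 1) = (Z ^ (d + 1))⁻¹ := by
    rw [← Real.rpow_natCast, ← Real.rpow_neg hZ.le]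
    congr 1
    push_cast
    ring
  set E : ℝ := h ^ (2 * p + 1) / Z ^ (d + 1) with hE
  have hE0 : 0 ≤ E := by positivity
  have hlin : sobolevSpline d γ x - ∑ ξ ∈ Ξ, a ξ * sobolevSpline d γ (x - ξ)
      = c * ∫ t in Ioi (0 : ℝ), t ^ p * Real.exp (-t) * (Real.exp (-(‖x‖ ^ 2 / (4 * t)))
          - ∑ ξ ∈ Ξ, a ξ * Real.exp (-(‖x - ξ‖ ^ 2 / (4 * t)))) := by
    have hintegral : ∫ t in Ioi (0 : ℝ), t ^ p * Real.exp (-t) * (Real.exp (-(‖x‖ ^ 2 / (4 * t)))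
          - ∑ ξ ∈ Ξ, a ξ * Real.exp (-(‖x - ξ‖ ^ 2 / (4 * t))))
        = (∫ t in Ioi (0 : ℝ), t ^ p * Real.exp (-t) * Real.exp (-(‖x‖ ^ 2 / (4 * t))))
          - ∑ ξ ∈ Ξ, a ξ * ∫ t in Ioi (0 : ℝ),
              t ^ p * Real.exp (-t) * Real.exp (-(‖x - ξ‖ ^ 2 / (4 * t))) := by
      simp only [← integral_const_mul]
      rw [← integral_finsetSum _ fun ξ _ =>
          (integrableOn_spline_integrand d p (x - ξ)).const_mul (a ξ),
        ← integral_sub (integrableOn_spline_integrand d p x) (integrable_finsetSum _ fun ξ _ =>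
          (integrableOn_spline_integrand d p (x - ξ)).const_mul (a ξ))]
      refine integral_congr_ae (Filter.Eventually.of_forall fun t => ?_)
      simp only [mul_sub, Finset.mul_sum]
      congr 1
      refine Finset.sum_congr rfl fun ξ _ => ?_
      ring
    rw [hintegral, mul_sub, Finset.mul_sum, hcG x]
    congr 1
    refine Finset.sum_congr rfl fun ξ _ => ?_
    rw [hcG (x - ξ)]
    ring
  have hbound : |∫ t in Ioi (0 : ℝ), t ^ p * Real.exp (-t) * (Real.exp (-(‖x‖ ^ 2 / (4 * t)))
          - ∑ ξ ∈ Ξ, a ξ * Real.exp (-(‖x - ξ‖ ^ 2 / (4 * t))))| ≤ K * E * J := by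
    rw [hJ, ← integral_const_mul, ← Real.norm_eq_abs]
    refine norm_integral_le_of_norm_le
      ((Real.GammaIntegral_convergent (s := 1 / 2) (by norm_num)).const_mul _) ?_
    filter_upwards [ae_restrict_mem measurableSet_Ioi] with t ht
    have ht' : (0 : ℝ) < t := ht
    have hw : 0 < Real.sqrt (2 * t) := Real.sqrt_pos.mpr (by positivity)
    -- The heat kernel at time `t` is a Gaussian of width `w = √(2t)`.
    have h1 := hKb h hh Ξ a hΞ ha hq x _ hw
    rw [Real.sq_sqrt (by positivity), show 2 * (2 * t) = 4 * t by ring] at h1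
    rw [norm_mul, Real.norm_of_nonneg (by positivity : 0 ≤ t ^ p * Real.exp (-t)),
      Real.norm_eq_abs]
    calc _ ≤ t ^ p * Real.exp (-t) * (K * E / Real.sqrt (2 * t) ^ (2 * p + 1)) := by gcongr
      _ = K * E * (Real.exp (-t) * (t ^ p / Real.sqrt (2 * t) ^ (2 * p + 1))) := by ring
      _ ≤ _ := by
          gcongr
          exact pow_div_sqrt_pow_le p ht'
  rw [hlin, abs_mul, abs_of_nonneg hc, e1, e2]
  calc _ ≤ c * (K * E * J) := by gcongr
    _ = c * K * J * E := by ring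
    _ ≤ (c * K * J + 1) * E := by
        gcongr
        linarith
    _ = _ := by rw [hE]; ring
end
end
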